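/- There exists a function γ : ℕ × ℕ → ℕ with the following property: for every positive integer d, every degree-d algebraic extension K of ℚ, and every k×n m-sparse polynomial system G over K, the number of isolated roots of G in K^n is at most 2^{dn}·(1 − 1/2^{d})^n·γ(n,m). In particular, this bound is independent of the degrees of the polynomials g_i. -/

import Mathlib

/-!
The proof is `2`-adic. A number field `K` of degree `d` embeds into `Ω = ℂ_[2]`, with valuation
ring `O`. Its elements lie in at most `2 ^ d` sets `e τ(ℚ) (1 + 2 O)`, where `τ` is a compatible
system of rational powers of a uniformizer and one `e` is zero, because `|O_K / 2 O_K| ≤ 2 ^ d`.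
It suffices to bound the isolated zeros in each product of such sets in terms of `n` and `m` only.

At the point `x_j = τ(w_j) (1 + 2 z_j)` a monomial `x ^ α` is `τ(α · w)` times
`∏ (1 + 2 z_j) ^ α_j`. Since `2 ^ i / i!` is a `2`-adic integer, the latter product is the value
at `u = 2` of a power series in `u` whose coefficients are polynomials in `z` and in half the
exponents. After division of each equation by its dominant term, all exponents and coefficients
become parameters in the closed unit disc, varying monomially with `w`, in finitely many fixed
power series. So it is enough to bound the number of zeros `(w, z)`, if finite, of an ideal of
such series uniformly in the parameters. This is done by double induction on the dimension of the
`w`-space and on the number of variables `z`. A power series over the polynomial ring is a finite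
sum of terms `P_γ (z ^ β + u Q_γ)` with `P_γ` homogeneous for the weights of the parameters. Where
two dominant `P_γ` have different weights, `w` is confined to a hyperplane. Otherwise, dividing by
a dominant `P_γ`, taking the quotients as new parameters and substituting suitably in `z` gives a
series that is monic in one variable modulo `u`; Weierstrass division eliminates this variable.

This bound requires finitely many zeros, whereas the systems at hand may have positive-dimensional
components besides the isolated roots. A metrically isolated root is isolated in an algebraic
sense that descends to `K` and passes to `Ω`. Over `Ω`, suitable `n` linear combinations `f_i` of
the equations retain the isolated zeros, and the systems `f_i + s x_i ^ N` with `s ≠ 0` and `N`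
large have finitely many zeros, some of which are close to the given isolated ones. Vanishing
coordinates are set to zero in the equations and replaced by `1`.
-/

open MvPolynomial Filter Topology

/-- The zero set in `F^n` of a `k`-tuple of `n`-variate polynomials. -/
def zeroSet {F : Type*} [CommSemiring F] {k n : ℕ}
    (G : Fin k → MvPolynomial (Fin n) F) : Set (Fin n → F) :=
  {x | ∀ i, MvPolynomial.eval x (G i) = 0}

/-- `ζ` is an isolated root of the system `G`: it is a root, and an isolated point of the
zero set of `G` in the metric topology. -/
def IsIsolatedRoot {F : Type*} [NormedField F] {k n : ℕ}
    (G : Fin k → MvPolynomial (Fin n) F) (ζ : Fin n → F) : Prop :=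
  ζ ∈ zeroSet G ∧ 𝓝[zeroSet G \ {ζ}] ζ = ⊥

/-- A `k × n` `m`-sparse polynomial system: all the `gᵢ` are nonzero and the union of their
supports has exactly `m` elements. -/
def IsSparseSystem {F : Type*} [CommSemiring F] {k n : ℕ}
    (G : Fin k → MvPolynomial (Fin n) F) (m : ℕ) : Prop :=
  (∀ i, G i ≠ 0) ∧ (Finset.univ.biUnion fun i => (G i).support).card = m

/-! ### Evaluation of power series -/

theorem norm_sub_le_max {E : Type*} [SeminormedAddCommGroup E] [IsUltrametricDist E] (x y : E) :
    ‖x - y‖ ≤ max ‖x‖ ‖y‖ := by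
  simpa only [sub_eq_add_neg, norm_neg] using IsUltrametricDist.norm_add_le_max x (-y)

section Evaluation

variable {Ω A B : Type*} [NormedField Ω] [CommRing A] [CommRing B]

/-- The value at `u` of the power series `f`, its coefficients being evaluated by `ψ`. It is
meaningful when `ψ` maps to the closed unit disc and `u` lies in the open one. -/
noncomputable def evalSeries (ψ : A →+* Ω) (u : Ω) (f : PowerSeries A) : Ω :=
  ∑' i, ψ (PowerSeries.coeff i f) * u ^ i

@[simp] theorem evalSeries_C (ψ : A →+* Ω) (u : Ω) (a : A) :
    evalSeries ψ u (PowerSeries.C a) = ψ a := by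
  rw [evalSeries, tsum_eq_single 0 fun i hi => by simp [PowerSeries.coeff_C, hi]]
  simp

@[simp] theorem evalSeries_X (ψ : A →+* Ω) (u : Ω) : evalSeries ψ u PowerSeries.X = u := by
  rw [evalSeries, tsum_eq_single 1 fun i hi => by simp [PowerSeries.coeff_X, hi]]
  simp

theorem evalSeries_map (ψ : A →+* Ω) (u : Ω) (θ : B →+* A) (f : PowerSeries B) :
    evalSeries ψ u (PowerSeries.map θ f) = evalSeries (ψ.comp θ) u f := by
  simp [evalSeries]

theorem evalSeries_rescale (ψ : A →+* Ω) (u : Ω) (x : A) (f : PowerSeries A) :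
    evalSeries ψ u (PowerSeries.rescale x f) = evalSeries ψ (ψ x * u) f := by
  refine tsum_congr fun i => ?_
  rw [PowerSeries.coeff_rescale, map_mul, map_pow, mul_pow]
  ring

variable {ψ : A →+* Ω} {u : Ω}

theorem norm_evalSeries_le_one [IsUltrametricDist Ω] (hψ : ∀ x, ‖ψ x‖ ≤ 1) (hu : ‖u‖ < 1)
    (f : PowerSeries A) : ‖evalSeries ψ u f‖ ≤ 1 := by
  refine IsUltrametricDist.norm_tsum_le_of_forall_le_of_nonneg zero_le_one fun i => ?_
  rw [norm_mul, norm_pow]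
  exact mul_le_one₀ (hψ _) (by positivity) (pow_le_one₀ (norm_nonneg _) hu.le)

theorem summable_norm_evalSeries (hψ : ∀ x, ‖ψ x‖ ≤ 1) (hu : ‖u‖ < 1) (f : PowerSeries A) :
    Summable fun i => ‖ψ (PowerSeries.coeff i f) * u ^ i‖ := by
  refine Summable.of_nonneg_of_le (fun i => norm_nonneg _) (fun i => ?_)
    (summable_geometric_of_lt_one (norm_nonneg u) hu)
  rw [norm_mul, norm_pow]
  exact mul_le_of_le_one_left (by positivity) (hψ _)

variable [CompleteSpace Ω]

/-- `evalSeries` as a ring homomorphism, available on the open unit disc. -/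
noncomputable def evalSeriesHom (hψ : ∀ x, ‖ψ x‖ ≤ 1) (hu : ‖u‖ < 1) : PowerSeries A →+* Ω where
  toFun := evalSeries ψ u
  map_one' := by rw [← map_one PowerSeries.C, evalSeries_C, map_one]
  map_zero' := by simp [evalSeries]
  map_add' f g := by
    rw [evalSeries, evalSeries, evalSeries, ← Summable.tsum_add
      (summable_norm_evalSeries hψ hu f).of_norm (summable_norm_evalSeries hψ hu g).of_norm]
    simp [add_mul]
  map_mul' f g := by
    rw [evalSeries, evalSeries, evalSeries, tsum_mul_tsum_eq_tsum_sum_antidiagonal_of_summable_norm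
      (summable_norm_evalSeries hψ hu f) (summable_norm_evalSeries hψ hu g)]
    refine tsum_congr fun i => ?_
    rw [PowerSeries.coeff_mul, map_sum, Finset.sum_mul]
    refine Finset.sum_congr rfl fun p hp => ?_
    rw [← Finset.HasAntidiagonal.mem_antidiagonal.1 hp, map_mul, pow_add]
    ring

theorem evalSeriesHom_apply (hψ : ∀ x, ‖ψ x‖ ≤ 1) (hu : ‖u‖ < 1) (f : PowerSeries A) :
    evalSeriesHom hψ hu f = evalSeries ψ u f := rfl

theorem eq_evalSeriesHom [IsUltrametricDist Ω] (hψ : ∀ x, ‖ψ x‖ ≤ 1) (hu : ‖u‖ < 1)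
    (Φ : PowerSeries A →+* Ω) (hΦ : ∀ f, ‖Φ f‖ ≤ 1) (hC : Φ.comp PowerSeries.C = ψ)
    (hX : Φ PowerSeries.X = u) : Φ = evalSeriesHom hψ hu := by
  have eq_on_polynomials (p : Polynomial A) : Φ p = evalSeriesHom hψ hu p := by
    induction p using Polynomial.induction_on' with
    | add p q hp hq => simp [hp, hq]
    | monomial n a =>
      have hC_apply : Φ (PowerSeries.C a) = ψ a := RingHom.congr_fun hC a
      simp only [← Polynomial.C_mul_X_pow_eq_monomial, Polynomial.coe_mul, Polynomial.coe_C,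
        Polynomial.coe_pow, Polynomial.coe_X, map_mul, map_pow, hX, hC_apply,
        evalSeriesHom_apply, evalSeries_C, evalSeries_X]
  ext f
  have norm_sub_le (N : ℕ) : ‖Φ f - evalSeriesHom hψ hu f‖ ≤ ‖u‖ ^ N := by
    obtain ⟨g, hg⟩ : PowerSeries.X ^ N ∣ f - (PowerSeries.trunc N f : PowerSeries A) :=
      PowerSeries.X_pow_dvd_iff.2 fun m hm => by simp [PowerSeries.coeff_trunc, hm]
    rw [eq_add_of_sub_eq' hg, map_add, map_add, eq_on_polynomials, map_mul, map_mul, map_pow,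
      map_pow, hX, evalSeriesHom_apply _ _ PowerSeries.X, evalSeries_X,
      add_sub_add_left_eq_sub, ← mul_sub, norm_mul, norm_pow]
    exact mul_le_of_le_one_right (by positivity) ((norm_sub_le_max _ _).trans
      (max_le (hΦ _) (norm_evalSeries_le_one hψ hu _)))
  exact sub_eq_zero.1 <| norm_le_zero_iff.1 <|
    ge_of_tendsto' (tendsto_pow_atTop_nhds_zero_of_lt_one (norm_nonneg _) hu) norm_sub_le

end Evaluation

/-! ### Weierstrass division and projection -/

section Weierstrass

open Polynomial in
/-- Since `H` is monic modulo `X`, the quotient can be found coefficient by coefficient. -/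
theorem exists_eq_mul_add_degree_lt {A : Type*} [CommRing A] [Nontrivial A]
    (H : PowerSeries A[X]) (hH : (PowerSeries.constantCoeff H).Monic) (f : PowerSeries A[X]) :
    ∃ q r : PowerSeries A[X], f = q * H + r ∧
      ∀ n, (PowerSeries.coeff n r).degree < (PowerSeries.constantCoeff H).degree := by
  set h := PowerSeries.constantCoeff H with h_def
  let q : ℕ → A[X] := Nat.strongRec fun n ih =>
    (PowerSeries.coeff n f - ∑ j : Fin n, ih j j.2 * PowerSeries.coeff (n - j) H) /ₘ h
  have q_eq (n : ℕ) : q n =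
      (PowerSeries.coeff n f - ∑ j : Fin n, q j * PowerSeries.coeff (n - j) H) /ₘ h := by
    simp only [q]
    rw [Nat.strongRec_eq]
  refine ⟨PowerSeries.mk q, f - PowerSeries.mk q * H, by ring, fun n => ?_⟩
  have coeff_eq : PowerSeries.coeff n (f - PowerSeries.mk q * H) =
      (PowerSeries.coeff n f - ∑ j : Fin n, q j * PowerSeries.coeff (n - j) H) %ₘ h := by
    rw [map_sub, PowerSeries.coeff_mul, Finset.Nat.sum_antidiagonal_eq_sum_range_succ_mk,
      Finset.sum_range_succ, modByMonic_eq_sub_mul_div, ← q_eq n, Finset.sum_range]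
    simp only [PowerSeries.coeff_mk, Nat.sub_self, PowerSeries.coeff_zero_eq_constantCoeff,
      ← h_def]
    ring
  rw [coeff_eq]
  exact degree_modByMonic_lt _ hH

open Polynomial in
theorem isIntegral_quotient_of_monic {A : Type*} [CommRing A] {J : Ideal (PowerSeries A[X])}
    {H : PowerSeries A[X]} (hHJ : H ∈ J) (hH : (PowerSeries.constantCoeff H).Monic) :
    ((Ideal.Quotient.mk J).comp (PowerSeries.map (Polynomial.C : A →+* A[X]))).IsIntegral := by
  classical
  rcases subsingleton_or_nontrivial A with hA | hA
  · exact fun x => ⟨1, monic_one,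
      by simpa using Subsingleton.elim (α := PowerSeries A[X] ⧸ J) _ _⟩
  set j := (Ideal.Quotient.mk J).comp (PowerSeries.map (Polynomial.C : A →+* A[X]))
  set s := (PowerSeries.constantCoeff H).natDegree
  set b : ℕ → PowerSeries A[X] ⧸ J :=
    fun i => Ideal.Quotient.mk J (PowerSeries.C (Polynomial.X ^ i))
  apply RingHom.IsIntegral.of_finite
  let := j.toAlgebra
  change Module.Finite (PowerSeries A) (PowerSeries A[X] ⧸ J)
  refine ⟨⟨(Finset.range s).image b, eq_top_iff.2 fun x _ => ?_⟩⟩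
  obtain ⟨f, rfl⟩ := Ideal.Quotient.mk_surjective x
  obtain ⟨q, r, rfl, hr⟩ := exists_eq_mul_add_degree_lt H hH f
  have hr_sum : r = ∑ i ∈ Finset.range s, PowerSeries.map Polynomial.C (PowerSeries.mk fun n =>
      (PowerSeries.coeff n r).coeff i) * PowerSeries.C (Polynomial.X ^ i) := by
    ext n : 1
    rw [map_sum]
    simp only [PowerSeries.coeff_mul_C, PowerSeries.coeff_map, PowerSeries.coeff_mk]
    by_cases h0 : PowerSeries.coeff n r = 0
    · simp [h0]
    · exact as_sum_range_C_mul_X_pow' _ (natDegree_lt_natDegree h0 (hr n))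
  rw [map_add, map_mul, Ideal.Quotient.eq_zero_iff_mem.2 hHJ, mul_zero, zero_add, hr_sum,
    map_sum]
  refine Submodule.sum_mem _ fun i hi => ?_
  rw [map_mul]
  change algebraMap _ _ _ * b i ∈ _
  rw [← Algebra.smul_def]
  exact Submodule.smul_mem _ _ (Submodule.subset_span (Finset.mem_image_of_mem b hi))

theorem exists_comp_eq_of_isIntegral {A B Ω : Type*} [CommRing A] [CommRing B] [Field Ω]
    [IsAlgClosed Ω] {j : A →+* B} (hj : j.IsIntegral) {φ : A →+* Ω}
    (hker : RingHom.ker j ≤ RingHom.ker φ) : ∃ Φ : B →+* Ω, Φ.comp j = φ := by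
  let := j.toAlgebra
  have : Algebra.IsIntegral A B := ⟨hj⟩
  have := RingHom.ker_isPrime φ
  obtain ⟨Q, -, hQ, hQφ⟩ :=
    Ideal.exists_ideal_over_prime_of_isIntegral (S := B) (RingHom.ker φ) ⊥ hker
  have : Q.LiesOver (RingHom.ker φ) := ⟨hQφ.symm⟩
  let := (RingHom.kerLift φ).toAlgebra
  have : Module.IsTorsionFree (A ⧸ RingHom.ker φ) Ω :=
    Module.isTorsionFree_iff_algebraMap_injective.2 (RingHom.kerLift_injective φ)
  have : Module.IsTorsionFree (A ⧸ RingHom.ker φ) (B ⧸ Q) :=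
    Module.isTorsionFree_iff_algebraMap_injective.2
      (FaithfulSMul.algebraMap_injective (A ⧸ RingHom.ker φ) (B ⧸ Q))
  let F : (B ⧸ Q) →ₐ[A ⧸ RingHom.ker φ] Ω := IsAlgClosed.lift
  exact ⟨(F : (B ⧸ Q) →+* Ω).comp (Ideal.Quotient.mk Q),
    RingHom.ext fun a => F.commutes (Ideal.Quotient.mk _ a)⟩

variable {Ω : Type*} [NormedField Ω]

theorem norm_le_one_of_monic_of_isRoot [IsUltrametricDist Ω] {p : Polynomial Ω} (hp : p.Monic)
    (hcoeff : ∀ i, ‖p.coeff i‖ ≤ 1) {x : Ω} (hx : p.IsRoot x) : ‖x‖ ≤ 1 := by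
  by_contra! h
  have hdeg : p.natDegree ≠ 0 := fun h0 => by simp [hp.natDegree_eq_zero.1 h0] at hx
  rw [Polynomial.IsRoot.def, Polynomial.eval_eq_sum_range, Finset.sum_range_succ,
    hp.coeff_natDegree, one_mul, add_comm, add_eq_zero_iff_eq_neg] at hx
  have hle : ‖x ^ p.natDegree‖ ≤ ‖x‖ ^ (p.natDegree - 1) := by
    rw [hx, norm_neg]
    refine IsUltrametricDist.norm_sum_le_of_forall_le_of_nonneg (by positivity) fun i hi => ?_
    rw [norm_mul, norm_pow]
    exact (mul_le_of_le_one_left (by positivity) (hcoeff i)).trans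
      (pow_le_pow_right₀ h.le (Nat.le_sub_one_of_lt (Finset.mem_range.1 hi)))
  rw [norm_pow] at hle
  exact hle.not_gt (pow_lt_pow_right₀ h (Nat.sub_one_lt hdeg))

theorem norm_eval₂RingHom_le_one [IsUltrametricDist Ω] {A : Type*} [CommRing A] {ψ : A →+* Ω}
    (hψ : ∀ a, ‖ψ a‖ ≤ 1) {y : Ω} (hy : ‖y‖ ≤ 1) (p : Polynomial A) :
    ‖Polynomial.eval₂RingHom ψ y p‖ ≤ 1 := by
  rw [Polynomial.coe_eval₂RingHom, Polynomial.eval₂_eq_sum_range]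
  refine IsUltrametricDist.norm_sum_le_of_forall_le_of_nonneg zero_le_one fun i _ => ?_
  rw [norm_mul, norm_pow]
  exact mul_le_one₀ (hψ _) (by positivity) (pow_le_one₀ (norm_nonneg _) hy)

/-- The fibre over the point `(ψ, u)` of the zero set of `J`, under the projection that forgets the
polynomial variable `y`. -/
def fibre {A : Type*} [CommRing A] (J : Ideal (PowerSeries (Polynomial A))) (ψ : A →+* Ω) (u : Ω) :
    Set Ω :=
  {y | ‖y‖ ≤ 1 ∧ ∀ f ∈ J, evalSeries (Polynomial.eval₂RingHom ψ y) u f = 0}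

theorem evalSeries_eval₂RingHom_map_C {A : Type*} [CommRing A] (ψ : A →+* Ω) (u y : Ω)
    (f : PowerSeries A) : evalSeries (Polynomial.eval₂RingHom ψ y) u
      (PowerSeries.map (Polynomial.C : A →+* _) f) = evalSeries ψ u f := by
  rw [evalSeries_map]
  congr 1
  ext a
  simp

variable [IsUltrametricDist Ω] [CompleteSpace Ω] {A : Type*} [CommRing A]
  {J : Ideal (PowerSeries (Polynomial A))} {H : PowerSeries (Polynomial A)}

theorem exists_encard_fibre_le (hHJ : H ∈ J) (hH : (PowerSeries.constantCoeff H).Monic) :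
    ∃ s : ℕ, ∀ (ψ : A →+* Ω) (u : Ω), (∀ a, ‖ψ a‖ ≤ 1) → ‖u‖ < 1 → (fibre J ψ u).encard ≤ s := by
  classical
  obtain ⟨p, hp_monic, hp⟩ :=
    isIntegral_quotient_of_monic hHJ hH (Ideal.Quotient.mk J (PowerSeries.C Polynomial.X))
  refine ⟨p.natDegree, fun ψ u hψ hu => ?_⟩
  set P : Polynomial Ω := p.map (evalSeriesHom hψ hu)
  have hP : P.Monic := hp_monic.map _
  have fibre_subset : fibre J ψ u ⊆ (P.roots.toFinset : Set Ω) := by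
    rintro y ⟨hy, hJ⟩
    set ev := evalSeriesHom (norm_eval₂RingHom_le_one hψ hy) hu
    have hJ_ev : ∀ f ∈ J, ev f = 0 := hJ
    set j := (Ideal.Quotient.mk J).comp (PowerSeries.map (Polynomial.C : A →+* Polynomial A))
    have h0 := Polynomial.hom_eval₂ p j (Ideal.Quotient.lift J ev hJ_ev)
      (Ideal.Quotient.mk J (PowerSeries.C Polynomial.X))
    have hcomp : (Ideal.Quotient.lift J ev hJ_ev).comp j = evalSeriesHom hψ hu :=
      RingHom.ext fun f => evalSeries_eval₂RingHom_map_C ψ u y f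
    rw [hp, map_zero, hcomp, Ideal.Quotient.lift_mk, evalSeriesHom_apply, evalSeries_C,
      Polynomial.coe_eval₂RingHom, Polynomial.eval₂_X, ← Polynomial.eval_map] at h0
    exact Multiset.mem_toFinset.2 ((Polynomial.mem_roots hP.ne_zero).2 h0.symm)
  calc (fibre J ψ u).encard
      ≤ P.roots.toFinset.card :=
        (Set.encard_le_encard fibre_subset).trans (Set.encard_coe_eq_coe_finsetCard _).le
    _ ≤ p.natDegree := by
        rw [← hp_monic.natDegree_map (evalSeriesHom hψ hu)]
        exact_mod_cast (Multiset.toFinset_card_le _).trans P.card_roots'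

theorem fibre_nonempty [IsAlgClosed Ω] (hHJ : H ∈ J) (hH : (PowerSeries.constantCoeff H).Monic)
    {ψ : A →+* Ω} (hψ : ∀ a, ‖ψ a‖ ≤ 1) {u : Ω} (hu : ‖u‖ < 1)
    (hJ : ∀ f ∈ J.comap (PowerSeries.map (Polynomial.C : A →+* _)), evalSeries ψ u f = 0) :
    (fibre J ψ u).Nonempty := by
  have hint := isIntegral_quotient_of_monic hHJ hH
  obtain ⟨Φ, hΦ⟩ := exists_comp_eq_of_isIntegral hint (φ := evalSeriesHom hψ hu) fun f hf =>
    hJ f (Ideal.Quotient.eq_zero_iff_mem (I := J).1 hf)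
  have norm_Φ_le (b : PowerSeries (Polynomial A) ⧸ J) : ‖Φ b‖ ≤ 1 := by
    obtain ⟨q, hq_monic, hq⟩ := hint b
    refine norm_le_one_of_monic_of_isRoot (hq_monic.map (evalSeriesHom hψ hu)) (fun i => ?_) ?_
    · rw [Polynomial.coeff_map]
      exact norm_evalSeries_le_one hψ hu _
    · rw [Polynomial.IsRoot.def, Polynomial.eval_map, ← hΦ, ← Polynomial.hom_eval₂, hq, map_zero]
  set y := Φ (Ideal.Quotient.mk J (PowerSeries.C Polynomial.X))
  have hy : ‖y‖ ≤ 1 := norm_Φ_le _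
  have hΦ_apply (f : PowerSeries A) : Φ (Ideal.Quotient.mk J
      (PowerSeries.map (Polynomial.C : A →+* _) f)) = evalSeries ψ u f := RingHom.congr_fun hΦ f
  have hΦ_eval : Φ.comp (Ideal.Quotient.mk J) =
      evalSeriesHom (norm_eval₂RingHom_le_one hψ hy) hu := by
    refine eq_evalSeriesHom _ hu _ (fun f => norm_Φ_le _) (Polynomial.ringHom_ext ?_ ?_) ?_
    · intro a
      simpa using hΦ_apply (PowerSeries.C a)
    · simp [y]
    · simpa using hΦ_apply PowerSeries.X
  refine ⟨y, hy, fun f hf => ?_⟩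
  rw [← evalSeriesHom_apply (norm_eval₂RingHom_le_one hψ hy) hu, ← hΦ_eval,
    RingHom.comp_apply, Ideal.Quotient.eq_zero_iff_mem.2 hf, map_zero]

end Weierstrass

/-! ### Bihomogeneous decomposition of a power series -/

section XAdic

variable {A : Type*} [CommRing A] [IsNoetherianRing A]

theorem mem_of_forall_mem_sup_span_X_pow (I : Ideal (PowerSeries A)) (f : PowerSeries A)
    (h : ∀ N : ℕ, f ∈ I ⊔ Ideal.span {PowerSeries.X ^ N}) : f ∈ I := by
  have span_X_le : Ideal.span {(PowerSeries.X : PowerSeries A)} ≤ Ideal.jacobson ⊥ :=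
    IsAdicComplete.le_jacobson_bot (Ideal.span {PowerSeries.X})
  have krull := Ideal.iInf_pow_smul_eq_bot_of_le_jacobson (M := PowerSeries A ⧸ I) _ span_X_le
  rw [← Ideal.Quotient.eq_zero_iff_mem, ← Submodule.mem_bot (PowerSeries A), ← krull,
    Submodule.mem_iInf]
  intro N
  obtain ⟨g, hg, e, he, rfl⟩ := Submodule.mem_sup.1 (h N)
  obtain ⟨q, rfl⟩ := Ideal.mem_span_singleton'.1 he
  rw [map_add, Ideal.Quotient.eq_zero_iff_mem.2 hg, zero_add, mul_comm, Ideal.span_singleton_pow]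
  exact Submodule.smul_mem_smul (Ideal.mem_span_singleton_self _)
    (Submodule.mem_top (x := Ideal.Quotient.mk I q))

theorem exists_forall_X_pow_dvd_mem_span_X_mul (I : Ideal (PowerSeries A)) :
    ∃ k : ℕ, ∀ f ∈ I, PowerSeries.X ^ k ∣ f → f ∈ Ideal.span {PowerSeries.X} * I := by
  obtain ⟨k, artin_rees⟩ := Ideal.exists_pow_inf_eq_pow_smul
    (Ideal.span {(PowerSeries.X : PowerSeries A)}) I
  refine ⟨k + 1, fun f hf ⟨g, hg⟩ => ?_⟩
  have hmem : f ∈ (Ideal.span {(PowerSeries.X : PowerSeries A)}) ^ (k + 1) •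
      (⊤ : Submodule (PowerSeries A) (PowerSeries A)) ⊓ I := by
    refine ⟨?_, hf⟩
    rw [hg, Ideal.span_singleton_pow]
    exact Submodule.smul_mem_smul (Ideal.mem_span_singleton_self _) Submodule.mem_top
  rw [artin_rees (k + 1) (by omega), Nat.add_sub_cancel_left, pow_one] at hmem
  exact Submodule.smul_mono le_rfl inf_le_right hmem

end XAdic

theorem exists_finset_subset_range_ideal_span_eq {α R : Type*} [CommRing R] [IsNoetherianRing R]
    (P : α → R) : ∃ s : Finset α, Ideal.span (Set.range P) = Ideal.span (P '' s) := by
  classical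
  obtain ⟨t, ht, hspan⟩ := (Submodule.fg_span_iff_fg_span_finset_subset (Set.range P)).1
    (IsNoetherian.noetherian (Ideal.span (Set.range P)))
  obtain ⟨s, -, rfl⟩ := Finset.subset_set_image_iff.1
    (show (t : Set R) ⊆ P '' Set.univ by rwa [Set.image_univ])
  exact ⟨s, by rw [Ideal.span, hspan, Finset.coe_image]⟩

section Decomposition

variable {C₀ ι M : Type*} [CommRing C₀] [AddCommMonoid M] {n : ℕ} (a : ι → M)

/-- The part of bidegree `γ` of a polynomial in `n` main variables over a polynomial ring of
parameters: `γ.1` is the exponent of the main variables and `γ.2` the weight in the parameters. -/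
noncomputable def bicomponent (γ : (Fin n →₀ ℕ) × M)
    (p : MvPolynomial (Fin n) (MvPolynomial ι C₀)) : MvPolynomial ι C₀ :=
  weightedHomogeneousComponent a γ.2 (coeff γ.1 p)

theorem finite_bicomponent_ne_zero (p : MvPolynomial (Fin n) (MvPolynomial ι C₀)) :
    {γ | bicomponent a γ p ≠ 0}.Finite := by
  refine ((p.support.finite_toSet.biUnion (t := fun β => (fun χ => (β, χ)) ''
    (Function.support fun χ => bicomponent a (β, χ) p))
      fun β _ => (weightedHomogeneousComponent_finsupp (coeff β p)).image _)).subset ?_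
  rintro ⟨β, χ⟩ h
  simp only [Set.mem_iUnion]
  refine ⟨β, ?_, χ, h, rfl⟩
  rw [Finset.mem_coe, mem_support_iff]
  intro h0
  simp [bicomponent, h0] at h

theorem eq_sum_bicomponent (p : MvPolynomial (Fin n) (MvPolynomial ι C₀))
    (T : Finset ((Fin n →₀ ℕ) × M)) (hT : ∀ γ, bicomponent a γ p ≠ 0 → γ ∈ T) :
    p = ∑ γ ∈ T, C (bicomponent a γ p) * monomial γ.1 1 := by
  classical
  ext1 β
  have coeff_term (γ : (Fin n →₀ ℕ) × M) :
      coeff β (C (bicomponent a γ p) * monomial γ.1 1) =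
        if γ.1 = β then weightedHomogeneousComponent a γ.2 (coeff β p) else 0 := by
    rw [coeff_C_mul, coeff_monomial]
    split_ifs with h
    · rw [bicomponent, h, mul_one]
    · rw [mul_zero]
  rw [coeff_sum, Finset.sum_congr rfl fun γ _ => coeff_term γ, ← Finset.sum_filter]
  conv_lhs => rw [← sum_weightedHomogeneousComponent a (coeff β p)]
  rw [finsum_eq_sum_of_support_subset (s := (T.filter fun γ => γ.1 = β).image Prod.snd)]
  · rw [Finset.sum_image]
    rintro ⟨b, c⟩ hx ⟨b', c'⟩ hy h
    simp only [Finset.coe_filter, Set.mem_ofPred_eq] at hx hy h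
    rw [hx.2, hy.2, h]
  · intro χ hχ
    rw [Finset.coe_image]
    exact ⟨(β, χ), by simpa using hT (β, χ) hχ, rfl⟩

variable (F : PowerSeries (MvPolynomial (Fin n) (MvPolynomial ι C₀)))

/-- The part of bidegree `γ` of a power series, taken coefficientwise. -/
noncomputable def seriesBicomponent (γ : (Fin n →₀ ℕ) × M) : PowerSeries (MvPolynomial ι C₀) :=
  PowerSeries.mk fun i => bicomponent a γ (PowerSeries.coeff i F)

theorem not_X_pow_dvd_seriesBicomponent_iff (N : ℕ) (γ : (Fin n →₀ ℕ) × M) :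
    ¬ PowerSeries.X ^ N ∣ seriesBicomponent a F γ ↔
      ∃ i < N, bicomponent a γ (PowerSeries.coeff i F) ≠ 0 := by
  simp [PowerSeries.X_pow_dvd_iff, seriesBicomponent]

theorem finite_not_X_pow_dvd_seriesBicomponent (N : ℕ) :
    {γ | ¬ PowerSeries.X ^ N ∣ seriesBicomponent a F γ}.Finite := by
  refine ((Set.finite_lt_nat N).biUnion fun i _ =>
    finite_bicomponent_ne_zero a (PowerSeries.coeff i F)).subset fun γ hγ => ?_
  simpa using (not_X_pow_dvd_seriesBicomponent_iff a F N γ).1 hγ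

/-- The finite part of the bidegree expansion of `F` with bidegrees in `T`. -/
noncomputable def bidegreeSum (T : Finset ((Fin n →₀ ℕ) × M)) :
    PowerSeries (MvPolynomial (Fin n) (MvPolynomial ι C₀)) :=
  ∑ γ ∈ T, PowerSeries.map C (seriesBicomponent a F γ) * PowerSeries.C (monomial γ.1 1)

theorem X_pow_dvd_sub_bidegreeSum {N : ℕ} {T : Finset ((Fin n →₀ ℕ) × M)}
    (hT : ∀ γ, ¬ PowerSeries.X ^ N ∣ seriesBicomponent a F γ → γ ∈ T) :
    PowerSeries.X ^ N ∣ F - bidegreeSum a F T := by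
  rw [PowerSeries.X_pow_dvd_iff]
  intro i hi
  simp only [bidegreeSum, seriesBicomponent, map_sub, sub_eq_zero, map_sum,
    PowerSeries.coeff_mul_C, PowerSeries.coeff_map, PowerSeries.coeff_mk]
  exact eq_sum_bicomponent a _ _ fun γ hγ =>
    hT γ ((not_X_pow_dvd_seriesBicomponent_iff a F N γ).2 ⟨i, hi, hγ⟩)

theorem exists_sub_bidegreeSum_mem [IsNoetherianRing C₀] [Finite ι] :
    ∃ T₀ : Finset ((Fin n →₀ ℕ) × M), ∀ T, T₀ ⊆ T → F - bidegreeSum a F T ∈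
      Ideal.span {PowerSeries.X} *
        (Ideal.span (Set.range (seriesBicomponent a F))).map (PowerSeries.map C) := by
  classical
  set I := Ideal.span (Set.range (seriesBicomponent a F))
  obtain ⟨k, hk⟩ := exists_forall_X_pow_dvd_mem_span_X_mul I
  have hfin (N : ℕ) := finite_not_X_pow_dvd_seriesBicomponent a F N
  refine ⟨(hfin k).toFinset, fun T hT => mem_of_forall_mem_sup_span_X_pow _ _ fun N => ?_⟩
  have split : F - bidegreeSum a F T = (∑ γ ∈ (hfin N).toFinset \ T,
      PowerSeries.map C (seriesBicomponent a F γ) * PowerSeries.C (monomial γ.1 1)) +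
        (F - bidegreeSum a F (T ∪ (hfin N).toFinset)) := by
    rw [bidegreeSum, bidegreeSum, ← Finset.union_sdiff_self_eq_union,
      Finset.sum_union Finset.disjoint_sdiff]
    ring
  rw [split]
  refine Submodule.add_mem_sup (Submodule.sum_mem _ fun γ hγ => Ideal.mul_mem_right _ _ ?_) ?_
  · have hdvd : PowerSeries.X ^ k ∣ seriesBicomponent a F γ := by
      by_contra h
      exact (Finset.mem_sdiff.1 hγ).2 (hT ((hfin k).mem_toFinset.2 h))
    have hmem := Ideal.mem_map_of_mem
      (PowerSeries.map (C : MvPolynomial ι C₀ →+* MvPolynomial (Fin n) (MvPolynomial ι C₀)))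
      (hk _ (Ideal.subset_span ⟨γ, rfl⟩) hdvd)
    rwa [Ideal.map_mul, Ideal.map_span, Set.image_singleton, PowerSeries.map_X] at hmem
  · exact Ideal.mem_span_singleton.2 (X_pow_dvd_sub_bidegreeSum a F fun γ hγ =>
      Finset.mem_union_right _ ((hfin N).mem_toFinset.2 hγ))

/-- A presentation of the power series `F` as a finite sum of terms `P γ * (z ^ γ.1 + X * Q γ)`
whose coefficients `P γ` do not involve the main variables `z` and are homogeneous of weight `γ.2`
in the parameters. -/
structure BihomogeneousDecomposition where
  /-- The bidegrees that occur. -/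
  support : Finset ((Fin n →₀ ℕ) × M)
  /-- The homogeneous coefficients. -/
  P : (Fin n →₀ ℕ) × M → PowerSeries (MvPolynomial ι C₀)
  /-- The perturbations of the monomials. -/
  Q : (Fin n →₀ ℕ) × M → PowerSeries (MvPolynomial (Fin n) (MvPolynomial ι C₀))
  isWeightedHomogeneous (γ i) : IsWeightedHomogeneous a (PowerSeries.coeff i (P γ)) γ.2
  eq_sum : F = ∑ γ ∈ support, PowerSeries.map C (P γ) *
    (PowerSeries.C (monomial γ.1 1) + PowerSeries.X * Q γ)

theorem nonempty_bihomogeneousDecomposition [IsNoetherianRing C₀] [Finite ι] :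
    Nonempty (BihomogeneousDecomposition a F) := by
  classical
  obtain ⟨T₁, hT₁⟩ := exists_finset_subset_range_ideal_span_eq (seriesBicomponent a F)
  obtain ⟨T₀, hT₀⟩ := exists_sub_bidegreeSum_mem a F
  set T := T₁ ∪ T₀
  obtain ⟨y, hy, hXy⟩ := Ideal.mem_span_singleton_mul.1 (hT₀ T Finset.subset_union_right)
  rw [hT₁, Ideal.map_span, ← Set.image_comp] at hy
  obtain ⟨c, rfl⟩ := (Submodule.mem_span_image_finset_iff_exists_fun _).1 hy
  refine ⟨⟨T, seriesBicomponent a F, fun γ => if h : γ ∈ T₁ then c ⟨γ, h⟩ else 0, fun γ i => ?_,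
    ?_⟩⟩
  · rw [seriesBicomponent, PowerSeries.coeff_mk]
    exact weightedHomogeneousComponent_isWeightedHomogeneous _ _
  · refine (eq_add_of_sub_eq' hXy.symm).trans ?_
    rw [bidegreeSum]
    simp only [mul_add, Finset.sum_add_distrib]
    congr 1
    rw [← Finset.sum_subset Finset.subset_union_left, Finset.mul_sum, ← Finset.sum_coe_sort T₁]
    · refine Finset.sum_congr rfl fun γ _ => ?_
      rw [dif_pos γ.2, smul_eq_mul, Function.comp_apply]
      ring
    · intro γ _ h
      simp [h]

end Decomposition

/-! ### Monomial families of parameters -/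

/-- A homomorphism from `(ℚ, +)` to the multiplicative group of `Ω` that maps positive numbers
into the open unit disc: a compatible system of rational powers of a topologically nilpotent
element. -/
structure IsScale {Ω : Type*} [NormedField Ω] (τ : ℚ → Ω) : Prop where
  zero : τ 0 = 1
  add (x y : ℚ) : τ (x + y) = τ x * τ y
  norm_lt_one (x : ℚ) : 0 < x → ‖τ x‖ < 1

namespace IsScale

variable {Ω : Type*} [NormedField Ω] {τ : ℚ → Ω}

theorem ne_zero (hτ : IsScale τ) (x : ℚ) : τ x ≠ 0 := by
  intro h
  have hx := hτ.add x (-x)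
  rw [h, zero_mul, add_neg_cancel, hτ.zero] at hx
  exact one_ne_zero hx

theorem sub (hτ : IsScale τ) (x y : ℚ) : τ (x - y) = τ x / τ y := by
  rw [eq_div_iff (hτ.ne_zero y), ← hτ.add, sub_add_cancel]

theorem strictAnti_norm (hτ : IsScale τ) : StrictAnti fun x => ‖τ x‖ := by
  intro x y h
  have hy : τ y = τ (y - x) * τ x := by rw [← hτ.add, sub_add_cancel]
  simp only [hy, norm_mul]
  exact mul_lt_of_lt_one_left (norm_pos_iff.2 (hτ.ne_zero x)) (hτ.norm_lt_one _ (sub_pos.2 h))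

theorem sum (hτ : IsScale τ) {α : Type*} (s : Finset α) (f : α → ℚ) :
    τ (∑ i ∈ s, f i) = ∏ i ∈ s, τ (f i) := by
  classical
  induction s using Finset.induction_on with
  | empty => simp [hτ.zero]
  | insert i s hi ih => rw [Finset.sum_insert hi, Finset.prod_insert hi, hτ.add, ih]

theorem natCast_mul (hτ : IsScale τ) (k : ℕ) (x : ℚ) : τ (k * x) = τ x ^ k := by
  induction k with
  | zero => simp [hτ.zero]
  | succ k ih =>
    push_cast
    rw [add_mul, hτ.add, ih, pow_succ, one_mul]

variable {W : Type*} [AddCommGroup W] [Module ℚ W]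

theorem norm_mul_le_norm_mul_iff (hτ : IsScale τ) (x y : ℚ) (ρ σ : Ω) :
    ‖τ x * ρ‖ ≤ ‖τ y * σ‖ ↔ ‖τ (x - y)‖ * ‖ρ‖ ≤ ‖σ‖ := by
  have hy := norm_pos_iff.2 (hτ.ne_zero y)
  rw [hτ.sub, norm_div, norm_mul, norm_mul, div_mul_eq_mul_div, div_le_iff₀ hy, mul_comm ‖σ‖]

theorem convex_norm_mul_le (hτ : IsScale τ) (χ χ' : Module.Dual ℚ W) (ρ σ : Ω) :
    Convex ℚ {w | ‖τ (χ w) * ρ‖ ≤ ‖τ (χ' w) * σ‖} := by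
  have ordConnected : {x | ‖τ x‖ * ‖ρ‖ ≤ ‖σ‖}.OrdConnected := ⟨fun x hx y _ v hv =>
    (mul_le_mul_of_nonneg_right (hτ.strictAnti_norm.antitone hv.1) (norm_nonneg _)).trans hx⟩
  convert ordConnected.convex.linear_preimage (χ - χ') using 1
  ext w
  exact hτ.norm_mul_le_norm_mul_iff _ _ _ _

theorem convex_norm_mul_lt (hτ : IsScale τ) (χ χ' : Module.Dual ℚ W) (ρ σ : Ω) :
    Convex ℚ {w | ‖τ (χ w) * ρ‖ < ‖τ (χ' w) * σ‖} := by
  have ordConnected : {x | ‖σ‖ * ‖τ x‖ ≤ ‖ρ‖}ᶜ.OrdConnected := ⟨fun x _ y hy v hv h =>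
    hy ((mul_le_mul_of_nonneg_left (hτ.strictAnti_norm.antitone hv.2) (norm_nonneg _)).trans h)⟩
  convert ordConnected.convex.linear_preimage (χ' - χ) using 1
  ext w
  simp only [Set.mem_ofPred_eq, Set.mem_preimage, Set.mem_compl_iff, ← not_le]
  rw [hτ.norm_mul_le_norm_mul_iff, mul_comm ‖σ‖]
  rfl

theorem eval₂Hom_mul_of_isWeightedHomogeneous (hτ : IsScale τ) {C₀ : Type*} [CommRing C₀]
    (φ₀ : C₀ →+* Ω) {ι : Type*} {a : ι → Module.Dual ℚ W} (c : ι → Ω) {p : MvPolynomial ι C₀}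
    {χ : Module.Dual ℚ W} (hp : IsWeightedHomogeneous a p χ) (w : W) :
    eval₂Hom φ₀ (fun l => c l * τ (a l w)) p = τ (χ w) * eval₂Hom φ₀ c p := by
  rw [coe_eval₂Hom, coe_eval₂Hom, eval₂_eq, eval₂_eq, Finset.mul_sum]
  refine Finset.sum_congr rfl fun d hd => ?_
  have hχ : χ w = ∑ l ∈ d.support, d l * a l w := by
    rw [← hp (mem_support_iff.1 hd), Finsupp.weight_apply, Finsupp.sum, LinearMap.sum_apply]
    simp
  simp only [hχ, hτ.sum, hτ.natCast_mul, mul_pow, Finset.prod_mul_distrib]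
  ring

end IsScale

theorem norm_eval₂Hom_le_one {Ω A σ : Type*} [NormedField Ω] [IsUltrametricDist Ω] [CommRing A]
    {ψ : A →+* Ω} (hψ : ∀ a, ‖ψ a‖ ≤ 1) {z : σ → Ω} (hz : ∀ j, ‖z j‖ ≤ 1) (p : MvPolynomial σ A) :
    ‖eval₂Hom ψ z p‖ ≤ 1 := by
  rw [coe_eval₂Hom, eval₂_eq]
  refine IsUltrametricDist.norm_sum_le_of_forall_le_of_nonneg zero_le_one fun d _ => ?_
  rw [norm_mul, norm_prod]
  refine mul_le_one₀ (hψ _) (Finset.prod_nonneg fun i _ => norm_nonneg _) ?_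
  refine Finset.prod_le_one (fun i _ => norm_nonneg _) fun i _ => ?_
  rw [norm_pow]
  exact pow_le_one₀ (norm_nonneg _) (hz i)

section EvalParam

variable {Ω C₀ ι : Type*} [NormedField Ω] [CommRing C₀] (φ₀ : C₀ →+* Ω) {n : ℕ}

/-- Evaluation at `z` of the polynomials in `n` variables whose coefficients are polynomials in
parameters, which take the values `t`. -/
noncomputable def evalParam (t : ι → Ω) (z : Fin n → Ω) :
    MvPolynomial (Fin n) (MvPolynomial ι C₀) →+* Ω :=
  eval₂Hom (eval₂Hom φ₀ t) z

@[simp] theorem evalParam_C (t : ι → Ω) (z : Fin n → Ω) (p : MvPolynomial ι C₀) :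
    evalParam φ₀ t z (C p) = eval₂Hom φ₀ t p := by
  simp [evalParam]

@[simp] theorem evalParam_X (t : ι → Ω) (z : Fin n → Ω) (j : Fin n) :
    evalParam φ₀ t z (X j) = z j := by
  simp [evalParam]

variable {φ₀}

theorem norm_evalParam_le_one [IsUltrametricDist Ω] (hφ₀ : ∀ x, ‖φ₀ x‖ ≤ 1) {t : ι → Ω}
    (ht : ∀ l, ‖t l‖ ≤ 1) {z : Fin n → Ω} (hz : ∀ j, ‖z j‖ ≤ 1)
    (p : MvPolynomial (Fin n) (MvPolynomial ι C₀)) : ‖evalParam φ₀ t z p‖ ≤ 1 :=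
  norm_eval₂Hom_le_one (norm_eval₂Hom_le_one hφ₀ ht) hz p

end EvalParam

/-- The data of parameters `coeff l * scale (a l w)`, which vary monomially with `w` and stay in
the closed unit disc as long as `w` is in the convex set `domain`, and of a value `base` for the
variable of the power series. -/
structure MonomialFamily (Ω : Type*) [NormedField Ω] {W ι : Type*} [AddCommGroup W] [Module ℚ W]
    (a : ι → Module.Dual ℚ W) where
  /-- The value of the variable of the power series. -/
  base : Ω
  /-- The rational powers in the parameters. -/
  scale : ℚ → Ω
  /-- The constant factors of the parameters. -/
  coeff : ι → Ω
  /-- The set of exponents. -/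
  domain : Set W
  norm_base_lt : ‖base‖ < 1
  isScale : IsScale scale
  convex : Convex ℚ domain
  norm_le_one : ∀ w ∈ domain, ∀ l, ‖coeff l * scale (a l w)‖ ≤ 1

namespace MonomialFamily

variable {Ω C₀ W ι : Type*} [NormedField Ω] [CommRing C₀] [AddCommGroup W] [Module ℚ W]
  {a : ι → Module.Dual ℚ W} {n : ℕ}

/-- The values of the parameters at `w`. -/
def param (S : MonomialFamily Ω a) (w : W) : ι → Ω :=
  fun l => S.coeff l * S.scale (a l w)

theorem norm_param_le_one (S : MonomialFamily Ω a) {w : W} (hw : w ∈ S.domain) (l : ι) :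
    ‖S.param w l‖ ≤ 1 :=
  S.norm_le_one w hw l

/-- The value at `w` of a power series whose coefficients are polynomials in the parameters. -/
noncomputable def coeffValue (S : MonomialFamily Ω a) (φ₀ : C₀ →+* Ω)
    (P : PowerSeries (MvPolynomial ι C₀)) (w : W) : Ω :=
  evalSeries (eval₂Hom φ₀ (S.param w)) S.base P

theorem coeffValue_eq_scale_mul (S : MonomialFamily Ω a) (φ₀ : C₀ →+* Ω)
    {P : PowerSeries (MvPolynomial ι C₀)} {χ : Module.Dual ℚ W}
    (hP : ∀ i, IsWeightedHomogeneous a (PowerSeries.coeff i P) χ) (w : W) :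
    S.coeffValue φ₀ P w = S.scale (χ w) * S.coeffValue φ₀ P 0 := by
  have param_zero : S.param 0 = S.coeff := by
    funext l
    simp [param, S.isScale.zero]
  rw [coeffValue, coeffValue, evalSeries, evalSeries, ← tsum_mul_left, param_zero]
  refine tsum_congr fun i => ?_
  rw [← mul_assoc, ← S.isScale.eval₂Hom_mul_of_isWeightedHomogeneous φ₀ S.coeff (hP i)]
  rfl

theorem coeffValue_ne_zero_iff (S : MonomialFamily Ω a) (φ₀ : C₀ →+* Ω)
    {P : PowerSeries (MvPolynomial ι C₀)} {χ : Module.Dual ℚ W}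
    (hP : ∀ i, IsWeightedHomogeneous a (PowerSeries.coeff i P) χ) (w : W) :
    S.coeffValue φ₀ P w ≠ 0 ↔ S.coeffValue φ₀ P 0 ≠ 0 := by
  rw [S.coeffValue_eq_scale_mul φ₀ hP, mul_ne_zero_iff, and_iff_right (S.isScale.ne_zero _)]

/-- The zeros `(w, z)` of the ideal `J`, with `w` in the domain and `z` in the closed unit
polydisc. -/
def zeros (S : MonomialFamily Ω a) (φ₀ : C₀ →+* Ω)
    (J : Ideal (PowerSeries (MvPolynomial (Fin n) (MvPolynomial ι C₀)))) : Set (W × (Fin n → Ω)) :=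
  {q | q.1 ∈ S.domain ∧ (∀ j, ‖q.2 j‖ ≤ 1) ∧
    ∀ f ∈ J, evalSeries (evalParam φ₀ (S.param q.1) q.2) S.base f = 0}

/-- The family obtained by restricting the domain to a convex set. -/
def restrict (S : MonomialFamily Ω a) {D : Set W} (hD : Convex ℚ D) : MonomialFamily Ω a where
  __ := S
  domain := S.domain ∩ D
  convex := S.convex.inter hD
  norm_le_one w hw := S.norm_le_one w hw.1

theorem zeros_restrict (S : MonomialFamily Ω a) {D : Set W} (hD : Convex ℚ D) (φ₀ : C₀ →+* Ω)
    (J : Ideal (PowerSeries (MvPolynomial (Fin n) (MvPolynomial ι C₀)))) :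
    (S.restrict hD).zeros φ₀ J = {q ∈ S.zeros φ₀ J | q.1 ∈ D} := by
  ext q
  exact and_right_comm

/-- The family induced on the translate `w₀ + V` of a subspace, whose points are parametrised
by `V`. -/
def slice (S : MonomialFamily Ω a) (V : Submodule ℚ W) (w₀ : W) :
    MonomialFamily Ω fun l => (a l).comp V.subtype where
  base := S.base
  scale := S.scale
  coeff := S.param w₀
  domain := {w : V | w₀ + w ∈ S.domain}
  norm_base_lt := S.norm_base_lt
  isScale := S.isScale
  convex := (S.convex.translate_preimage_right w₀).linear_preimage V.subtype
  norm_le_one w hw l := by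
    simpa [param, S.isScale.add, mul_assoc] using S.norm_param_le_one hw l

theorem param_slice (S : MonomialFamily Ω a) (V : Submodule ℚ W) (w₀ : W) (w : V) :
    (S.slice V w₀).param w = S.param (w₀ + w) := by
  funext l
  simp [param, slice, S.isScale.add, mul_assoc]

theorem exists_zeros_eq_image_slice (S : MonomialFamily Ω a) {V : Submodule ℚ W} {w₀ : W}
    (hV : ∀ w ∈ S.domain, w - w₀ ∈ V) (φ₀ : C₀ →+* Ω)
    (J : Ideal (PowerSeries (MvPolynomial (Fin n) (MvPolynomial ι C₀)))) :
    ∃ f : V × (Fin n → Ω) → W × (Fin n → Ω), f.Injective ∧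
      S.zeros φ₀ J = f '' (S.slice V w₀).zeros φ₀ J := by
  refine ⟨Prod.map (fun w => w₀ + w) id,
    ((add_right_injective w₀).comp Subtype.val_injective).prodMap Function.injective_id, ?_⟩
  have mem_slice_iff (w : V) (z : Fin n → Ω) :
      (w, z) ∈ (S.slice V w₀).zeros φ₀ J ↔ (w₀ + (w : W), z) ∈ S.zeros φ₀ J := by
    simp only [zeros, Set.mem_ofPred_eq, param_slice]
    rfl
  ext ⟨w, z⟩
  constructor
  · intro h
    exact ⟨(⟨w - w₀, hV w h.1⟩, z), (mem_slice_iff _ _).2 (by simpa using h), by simp⟩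
  · rintro ⟨⟨w', z'⟩, h, heq⟩
    exact heq ▸ (mem_slice_iff _ _).1 h

end MonomialFamily

/-! ### Bounds uniform in the family -/

section HasBound

variable {Ω C₀ : Type*} [NormedField Ω] [CommRing C₀] (φ₀ : C₀ →+* Ω)

/-- The number of zeros of `J` is bounded, whenever it is finite, uniformly in the families that
satisfy `P`. -/
def HasBound {W ι : Type*} [AddCommGroup W] [Module ℚ W] {a : ι → Module.Dual ℚ W} {n : ℕ}
    (J : Ideal (PowerSeries (MvPolynomial (Fin n) (MvPolynomial ι C₀))))
    (P : MonomialFamily Ω a → Prop) : Prop :=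
  ∃ N : ℕ, ∀ S, P S → (S.zeros φ₀ J).Finite → (S.zeros φ₀ J).ncard ≤ N

/-- The uniform bound for all ideals in `n` variables and all exponent spaces of dimension less
than `k`. -/
def UniformBound (k n : ℕ) : Prop :=
  ∀ (W : Type) [AddCommGroup W] [Module ℚ W] [Module.Finite ℚ W], Module.finrank ℚ W < k →
  ∀ (ι : Type) [Finite ι] (a : ι → Module.Dual ℚ W)
    (J : Ideal (PowerSeries (MvPolynomial (Fin n) (MvPolynomial ι C₀)))),
    HasBound φ₀ J fun _ : MonomialFamily Ω a => True

variable {φ₀} {W ι : Type*} [AddCommGroup W] [Module ℚ W] {a : ι → Module.Dual ℚ W} {n : ℕ}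
  {J : Ideal (PowerSeries (MvPolynomial (Fin n) (MvPolynomial ι C₀)))}

theorem HasBound.mono {P Q : MonomialFamily Ω a → Prop} (h : HasBound φ₀ J P)
    (hPQ : ∀ S, Q S → P S) : HasBound φ₀ J Q :=
  h.imp fun _ hN S hS => hN S (hPQ S hS)

theorem HasBound.exists_mem {ε : Type*} (t : Finset ε) {P : ε → MonomialFamily Ω a → Prop}
    (h : ∀ e ∈ t, HasBound φ₀ J (P e)) : HasBound φ₀ J fun S => ∃ e ∈ t, P e S := by
  choose! N hN using h
  refine ⟨t.sup N, fun S ⟨e, he, hS⟩ hfin => (hN e he S hS hfin).trans (Finset.le_sup he)⟩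

theorem HasBound.of_cover {ε : Type*} (t : Finset ε) {P : ε → MonomialFamily Ω a → Prop}
    (h : ∀ e ∈ t, HasBound φ₀ J (P e)) {Q : MonomialFamily Ω a → Prop}
    (D : MonomialFamily Ω a → ε → Set W) (hD : ∀ S e, Convex ℚ (D S e))
    (hcover : ∀ S, Q S → ∀ w ∈ S.domain, ∃ e ∈ t, w ∈ D S e)
    (hP : ∀ S, Q S → ∀ e ∈ t, P e (S.restrict (hD S e))) : HasBound φ₀ J Q := by
  choose! N hN using h
  refine ⟨∑ e ∈ t, N e, fun S hS hfin => ?_⟩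
  have restrict_subset (e : ε) : (S.restrict (hD S e)).zeros φ₀ J ⊆ S.zeros φ₀ J :=
    (S.zeros_restrict (hD S e) φ₀ J).trans_subset (Set.sep_subset _ _)
  have subset_biUnion : S.zeros φ₀ J ⊆ ⋃ e ∈ t, (S.restrict (hD S e)).zeros φ₀ J := fun q hq => by
    obtain ⟨e, he, hw⟩ := hcover S hS q.1 hq.1
    exact Set.mem_biUnion he ((S.zeros_restrict (hD S e) φ₀ J).superset ⟨hq, hw⟩)
  calc (S.zeros φ₀ J).ncard
      ≤ (⋃ e ∈ t, (S.restrict (hD S e)).zeros φ₀ J).ncard :=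
        Set.ncard_le_ncard subset_biUnion
          (hfin.subset (Set.iUnion₂_subset fun e _ => restrict_subset e))
    _ ≤ ∑ e ∈ t, ((S.restrict (hD S e)).zeros φ₀ J).ncard := Finset.set_ncard_biUnion_le _ _
    _ ≤ ∑ e ∈ t, N e := Finset.sum_le_sum fun e he =>
        hN e he _ (hP S hS e he) (hfin.subset (restrict_subset e))

end HasBound

/-- A nonzero functional that is constant on the domain confines it to a translate of a
hyperplane. -/
theorem UniformBound.hasBound_of_const {Ω C₀ : Type*} [NormedField Ω] [CommRing C₀]
    {φ₀ : C₀ →+* Ω} {k n : ℕ} (hk : UniformBound φ₀ k n) {W ι : Type} [AddCommGroup W] [Module ℚ W]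
    [Module.Finite ℚ W] (hW : Module.finrank ℚ W < k + 1) [Finite ι] {a : ι → Module.Dual ℚ W}
    (J : Ideal (PowerSeries (MvPolynomial (Fin n) (MvPolynomial ι C₀))))
    {δ : Module.Dual ℚ W} (hδ : δ ≠ 0) :
    HasBound φ₀ J fun S : MonomialFamily Ω a => ∀ w ∈ S.domain, ∀ w' ∈ S.domain, δ w = δ w' := by
  have hker : Module.finrank ℚ (LinearMap.ker δ) < k := by
    have := Submodule.finrank_lt (mt LinearMap.ker_eq_top.1 hδ)
    omega
  obtain ⟨N, hN⟩ := hk _ hker ι (fun l => (a l).comp (LinearMap.ker δ).subtype) J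
  refine ⟨N, fun S hconst hfin => ?_⟩
  rcases (S.zeros φ₀ J).eq_empty_or_nonempty with hempty | ⟨⟨w₀, z₀⟩, hw₀, -⟩
  · simp [hempty]
  have sub_mem_ker : ∀ w ∈ S.domain, w - w₀ ∈ LinearMap.ker δ := fun w hw => by
    rw [LinearMap.mem_ker, map_sub, hconst w hw w₀ hw₀, sub_self]
  obtain ⟨f, hf, heq⟩ := S.exists_zeros_eq_image_slice sub_mem_ker φ₀ J
  rw [heq] at hfin ⊢
  rw [Set.ncard_image_of_injective _ hf]
  exact hN _ trivial ((Set.finite_image_iff hf.injOn).1 hfin)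

/-! ### Dominant coefficients -/

section Dominant

variable {Ω C₀ W ι : Type*} [NormedField Ω] [CommRing C₀] {φ₀ : C₀ →+* Ω} [AddCommGroup W]
  [Module ℚ W] {a : ι → Module.Dual ℚ W} {n : ℕ}
  {F : PowerSeries (MvPolynomial (Fin n) (MvPolynomial ι C₀))}

/-- The factor `z ^ γ.1 + X * Q γ` of a bihomogeneous decomposition. -/
noncomputable def BihomogeneousDecomposition.deformedMonomial (B : BihomogeneousDecomposition a F)
    (γ : B.support) : PowerSeries (MvPolynomial (Fin n) (MvPolynomial ι C₀)) :=
  PowerSeries.C (monomial γ.1.1 1) + PowerSeries.X * B.Q γ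

namespace MonomialFamily

theorem evalSeries_evalParam_eq_sum [IsUltrametricDist Ω] [CompleteSpace Ω]
    (S : MonomialFamily Ω a) (B : BihomogeneousDecomposition a F) (hφ₀ : ∀ x, ‖φ₀ x‖ ≤ 1) {w : W}
    (hw : w ∈ S.domain) {z : Fin n → Ω} (hz : ∀ j, ‖z j‖ ≤ 1) :
    evalSeries (evalParam φ₀ (S.param w) z) S.base F =
      ∑ γ : B.support, S.coeffValue φ₀ (B.P γ) w *
        evalSeries (evalParam φ₀ (S.param w) z) S.base (B.deformedMonomial γ) := by
  have eval_eq := evalSeriesHom_apply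
    (norm_evalParam_le_one hφ₀ (S.norm_param_le_one hw) hz) S.norm_base_lt
  have comp_C : (evalParam φ₀ (S.param w) z).comp C = eval₂Hom φ₀ (S.param w) :=
    RingHom.ext (evalParam_C φ₀ _ _)
  rw [← eval_eq]
  refine (congrArg (evalSeriesHom _ _) B.eq_sum).trans ?_
  rw [map_sum, ← Finset.sum_coe_sort]
  refine Finset.sum_congr rfl fun γ _ => ?_
  rw [map_mul, eval_eq, eval_eq, evalSeries_map, comp_C]
  rfl

variable (S : MonomialFamily Ω a)

theorem convex_norm_coeffValue_le {P P' : PowerSeries (MvPolynomial ι C₀)}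
    {χ χ' : Module.Dual ℚ W} (hP : ∀ i, IsWeightedHomogeneous a (PowerSeries.coeff i P) χ)
    (hP' : ∀ i, IsWeightedHomogeneous a (PowerSeries.coeff i P') χ') (v : Ω) :
    Convex ℚ {w | ‖S.coeffValue φ₀ P w‖ ≤ ‖v * S.coeffValue φ₀ P' w‖} := by
  convert S.isScale.convex_norm_mul_le χ χ' (S.coeffValue φ₀ P 0) (v * S.coeffValue φ₀ P' 0) using 3
  rw [S.coeffValue_eq_scale_mul φ₀ hP, S.coeffValue_eq_scale_mul φ₀ hP', mul_left_comm]

theorem convex_norm_coeffValue_lt {P P' : PowerSeries (MvPolynomial ι C₀)}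
    {χ χ' : Module.Dual ℚ W} (hP : ∀ i, IsWeightedHomogeneous a (PowerSeries.coeff i P) χ)
    (hP' : ∀ i, IsWeightedHomogeneous a (PowerSeries.coeff i P') χ') :
    Convex ℚ {w | ‖S.coeffValue φ₀ P w‖ < ‖S.coeffValue φ₀ P' w‖} := by
  convert S.isScale.convex_norm_mul_lt χ χ' (S.coeffValue φ₀ P 0) (S.coeffValue φ₀ P' 0) using 3
  rw [S.coeffValue_eq_scale_mul φ₀ hP, S.coeffValue_eq_scale_mul φ₀ hP']

/-- At `w`, the coefficients `P γ` with `γ ∈ E` are nonzero and of maximal norm, and the other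
coefficients have smaller norm. -/
def IsDominantAt (φ₀ : C₀ →+* Ω) (B : BihomogeneousDecomposition a F) (E : Finset B.support)
    (w : W) : Prop :=
  ∀ γ ∈ E, S.coeffValue φ₀ (B.P γ) w ≠ 0 ∧ ∀ γ' : B.support,
    ‖S.coeffValue φ₀ (B.P γ') w‖ ≤ ‖S.coeffValue φ₀ (B.P γ) w‖ ∧
      (γ' ∉ E → ‖S.coeffValue φ₀ (B.P γ') w‖ < ‖S.coeffValue φ₀ (B.P γ) w‖)

theorem convex_setOf_isDominantAt (B : BihomogeneousDecomposition a F) (E : Finset B.support) :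
    Convex ℚ {w | S.IsDominantAt φ₀ B E w} := by
  intro x hx y hy s t hs ht hst γ hγ
  have hγ_hom := B.isWeightedHomogeneous γ
  refine ⟨?_, fun γ' => ⟨?_, fun hγ' => ?_⟩⟩
  · rw [S.coeffValue_ne_zero_iff φ₀ hγ_hom, ← S.coeffValue_ne_zero_iff φ₀ hγ_hom x]
    exact (hx γ hγ).1
  · have hconvex := S.convex_norm_coeffValue_le (φ₀ := φ₀) (B.isWeightedHomogeneous γ') hγ_hom 1
    simp only [one_mul] at hconvex
    exact hconvex ((hx γ hγ).2 γ').1 ((hy γ hγ).2 γ').1 hs ht hst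
  · exact S.convex_norm_coeffValue_lt (B.isWeightedHomogeneous γ') hγ_hom
      (((hx γ hγ).2 γ').2 hγ') (((hy γ hγ).2 γ').2 hγ') hs ht hst

variable {S}

theorem exists_isDominantAt {B : BihomogeneousDecomposition a F} {w : W} {γ : B.support}
    (hγ : S.coeffValue φ₀ (B.P γ) w ≠ 0) : ∃ E, E.Nonempty ∧ S.IsDominantAt φ₀ B E w := by
  classical
  obtain ⟨γ₁, -, hmax⟩ := Finset.univ.exists_max_image
    (fun γ : B.support => ‖S.coeffValue φ₀ (B.P γ) w‖) ⟨γ, Finset.mem_univ γ⟩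
  refine ⟨Finset.univ.filter fun γ' : B.support =>
    ‖S.coeffValue φ₀ (B.P γ') w‖ = ‖S.coeffValue φ₀ (B.P γ₁) w‖, ⟨γ₁, by simp⟩, fun γ₂ hγ₂ => ?_⟩
  replace hγ₂ : _ = _ := (Finset.mem_filter.1 hγ₂).2
  rw [← norm_ne_zero_iff, hγ₂]
  have hle (γ' : B.support) := hmax γ' (Finset.mem_univ _)
  exact ⟨((norm_pos_iff.2 hγ).trans_le (hle γ)).ne', fun γ' => ⟨hle γ', fun hγ' =>
    (hle γ').lt_of_ne fun heq => hγ' (Finset.mem_filter.2 ⟨Finset.mem_univ _, heq⟩)⟩⟩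

theorem IsDominantAt.sub_apply_eq {B : BihomogeneousDecomposition a F} {E : Finset B.support}
    {w w' : W} (hw : S.IsDominantAt φ₀ B E w) (hw' : S.IsDominantAt φ₀ B E w') {γ γ' : B.support}
    (hγ : γ ∈ E) (hγ' : γ' ∈ E) : (γ.1.2 - γ'.1.2) w = (γ.1.2 - γ'.1.2) w' := by
  have norm_scale_mul {v : W} (hv : S.IsDominantAt φ₀ B E v) :
      ‖S.scale ((γ.1.2 - γ'.1.2) v)‖ * ‖S.coeffValue φ₀ (B.P γ) 0‖ =
        ‖S.coeffValue φ₀ (B.P γ') 0‖ := by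
    have norm_eq : ‖S.coeffValue φ₀ (B.P γ) v‖ = ‖S.coeffValue φ₀ (B.P γ') v‖ :=
      le_antisymm ((hv γ' hγ').2 γ).1 ((hv γ hγ).2 γ').1
    rw [S.coeffValue_eq_scale_mul φ₀ (B.isWeightedHomogeneous γ),
      S.coeffValue_eq_scale_mul φ₀ (B.isWeightedHomogeneous γ'), norm_mul, norm_mul] at norm_eq
    rw [LinearMap.sub_apply, S.isScale.sub, norm_div, div_mul_eq_mul_div,
      div_eq_iff (norm_ne_zero_iff.2 (S.isScale.ne_zero _)), norm_eq, mul_comm]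
  have hne := (S.coeffValue_ne_zero_iff φ₀ (B.isWeightedHomogeneous γ) w).1 (hw γ hγ).1
  exact S.isScale.strictAnti_norm.injective (mul_right_cancel₀ (norm_ne_zero_iff.2 hne)
    ((norm_scale_mul hw).trans (norm_scale_mul hw').symm))

/-- Without variables each factor of a term is a unit of norm one, so that a unique dominant term
cannot be cancelled. -/
theorem zeros_eq_empty_of_isDominantAt [IsUltrametricDist Ω] [CompleteSpace Ω]
    (hφ₀ : ∀ x, ‖φ₀ x‖ ≤ 1) {F : PowerSeries (MvPolynomial (Fin 0) (MvPolynomial ι C₀))}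
    {J : Ideal (PowerSeries (MvPolynomial (Fin 0) (MvPolynomial ι C₀)))} (hF : F ∈ J)
    {B : BihomogeneousDecomposition a F} {E : Finset B.support} {γ₀ : B.support} (hγ₀ : γ₀ ∈ E)
    (hE : ∀ γ ∈ E, γ.1.2 = γ₀.1.2) (hS : ∀ w ∈ S.domain, S.IsDominantAt φ₀ B E w) :
    S.zeros φ₀ J = ∅ := by
  refine Set.eq_empty_iff_forall_notMem.2 fun ⟨w, z⟩ ⟨hw, hz, hJ⟩ => ?_
  have eval_eq := evalSeriesHom_apply
    (norm_evalParam_le_one hφ₀ (S.norm_param_le_one hw) hz) S.norm_base_lt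
  have norm_eval_deformedMonomial (γ : B.support) :
      ‖evalSeries (evalParam φ₀ (S.param w) z) S.base (B.deformedMonomial γ)‖ = 1 := by
    have hmonomial : (monomial γ.1.1 1 : MvPolynomial (Fin 0) (MvPolynomial ι C₀)) = 1 := by
      rw [Subsingleton.elim γ.1.1 0]
      rfl
    rw [BihomogeneousDecomposition.deformedMonomial, hmonomial, map_one, ← eval_eq, map_add,
      map_one, map_mul, eval_eq, eval_eq, evalSeries_X, ← norm_one (α := Ω)]
    have norm_lt :
        ‖S.base * evalSeries (evalParam φ₀ (S.param w) z) S.base (B.Q γ)‖ < ‖(1 : Ω)‖ := by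
      rw [norm_one, norm_mul]
      exact mul_lt_one_of_nonneg_of_lt_one_left (norm_nonneg _) S.norm_base_lt
        (norm_evalSeries_le_one (norm_evalParam_le_one hφ₀ (S.norm_param_le_one hw) hz)
          S.norm_base_lt _)
    rw [IsUltrametricDist.norm_add_eq_max_of_norm_ne_norm norm_lt.ne', max_eq_left norm_lt.le]
  have norm_term (γ : B.support) : ‖S.coeffValue φ₀ (B.P γ) w *
      evalSeries (evalParam φ₀ (S.param w) z) S.base (B.deformedMonomial γ)‖ =
        ‖S.coeffValue φ₀ (B.P γ) w‖ := by
    rw [norm_mul, norm_eval_deformedMonomial, mul_one]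
  have norm_value_lt (γ : B.support) (hγ : γ ≠ γ₀) :
      ‖S.coeffValue φ₀ (B.P γ) w‖ < ‖S.coeffValue φ₀ (B.P γ₀) w‖ :=
    ((hS w hw γ₀ hγ₀).2 γ).2 fun hγE =>
      hγ (Subtype.ext (Prod.ext (Subsingleton.elim _ _) (hE γ hγE)))
  have hsum := hJ F hF
  rw [S.evalSeries_evalParam_eq_sum B hφ₀ hw hz] at hsum
  have norm_sum := IsUltrametricDist.isNonarchimedean_norm.apply_sum_eq_of_lt
    (fun x : Ω => (norm_neg x).symm) (Finset.mem_univ γ₀) fun γ _ hγ =>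
      (norm_term γ).trans_lt ((norm_value_lt γ hγ).trans_eq (norm_term γ₀).symm)
  rw [hsum, norm_zero, norm_term] at norm_sum
  exact (hS w hw γ₀ hγ₀).1 (norm_eq_zero.1 norm_sum.symm)

end MonomialFamily

end Dominant

/-! ### Elimination of a variable -/

theorem exists_injOn_sum_mul_pow {n : ℕ} (s : Finset (Fin n →₀ ℕ)) :
    ∃ r : ℕ, 0 < r ∧ Set.InjOn (fun β : Fin n →₀ ℕ => ∑ i, β i * r ^ (i : ℕ)) s := by
  set r := (s.sup fun β => Finset.univ.sup β) + 1
  have lt_r {β : Fin n →₀ ℕ} (hβ : β ∈ s) (i : Fin n) : β i < r :=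
    Nat.lt_succ_of_le ((Finset.le_sup (Finset.mem_univ i)).trans
      (Finset.le_sup (f := fun β : Fin n →₀ ℕ => Finset.univ.sup β) hβ))
  refine ⟨r, Nat.succ_pos _, fun β hβ β' hβ' h => ?_⟩
  have digits_eq : (fun i => (⟨β i, lt_r hβ i⟩ : Fin r)) = fun i => ⟨β' i, lt_r hβ' i⟩ := by
    refine finFunctionFinEquiv.injective (Fin.ext ?_)
    simpa only [finFunctionFinEquiv_apply] using h
  exact Finsupp.ext fun i => congrArg Fin.val (congrFun digits_eq i)

/-- The point `(y, y ^ r + z 0, y ^ r ^ 2 + z 1, …)`. -/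
def shear {R : Type*} [CommSemiring R] {n : ℕ} (r : ℕ) (y : R) (z : Fin n → R) : Fin (n + 1) → R :=
  Fin.cons y fun i => y ^ r ^ ((i : ℕ) + 1) + z i

/-- The bijection underlying `shear`. -/
def shearEquiv (R : Type*) [CommRing R] (n r : ℕ) : (Fin n → R) × R ≃ (Fin (n + 1) → R) where
  toFun p := shear r p.2 p.1
  invFun x := (fun i => x i.succ - x 0 ^ r ^ ((i : ℕ) + 1), x 0)
  left_inv p := by simp [shear]
  right_inv x := by
    funext j
    refine Fin.cases ?_ (fun i => ?_) j <;> simp [shear]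

theorem norm_shear_le_one_iff {Ω : Type*} [NormedField Ω] [IsUltrametricDist Ω] {n r : ℕ} {y : Ω}
    {z : Fin n → Ω} : (∀ j, ‖shear r y z j‖ ≤ 1) ↔ ‖y‖ ≤ 1 ∧ ∀ j, ‖z j‖ ≤ 1 := by
  rw [Fin.forall_fin_succ]
  refine and_congr_right fun hy => forall_congr' fun i => ?_
  have norm_pow_le : ‖y ^ r ^ ((i : ℕ) + 1)‖ ≤ 1 := by
    rw [norm_pow]
    exact pow_le_one₀ (norm_nonneg _) hy
  refine ⟨fun h => ?_, fun h =>
    (IsUltrametricDist.norm_add_le_max _ _).trans (max_le norm_pow_le h)⟩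
  have hz : z i = shear r y z i.succ - y ^ r ^ ((i : ℕ) + 1) := by simp [shear]
  exact hz ▸ (norm_sub_le_max _ _).trans (max_le h norm_pow_le)

section Twist

variable {R R' : Type*} [CommRing R] [CommRing R'] (θ : R →+* R') (n r : ℕ)

/-- The substitution of `shear` into polynomials, which makes one variable `X` distinguished,
combined with the change of coefficients `θ`. -/
noncomputable def twist :
    MvPolynomial (Fin (n + 1)) R →+* Polynomial (MvPolynomial (Fin n) R') :=
  eval₂Hom ((Polynomial.C.comp C).comp θ)
    (shear r Polynomial.X fun i => Polynomial.C (X i))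

theorem twist_monomial_one (β : Fin (n + 1) →₀ ℕ) :
    twist θ n r (monomial β 1) =
      ∏ i, shear r Polynomial.X (fun i => Polynomial.C (X i)) i ^ β i := by
  rw [twist, coe_eval₂Hom, eval₂_monomial, map_one, one_mul, Finsupp.prod_fintype]
  simp

variable {r}

theorem monic_shear [Nontrivial R'] (hr : 0 < r) (i : Fin (n + 1)) :
    (shear r Polynomial.X (fun i => Polynomial.C (X i)) i :
        Polynomial (MvPolynomial (Fin n) R')).Monic ∧
      (shear r Polynomial.X (fun i => Polynomial.C (X i)) i :
        Polynomial (MvPolynomial (Fin n) R')).natDegree = r ^ (i : ℕ) := by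
  refine Fin.cases ?_ (fun i => ?_) i
  · simp [shear, Polynomial.monic_X]
  · exact ⟨Polynomial.monic_X_pow_add_C _ (pow_pos hr _).ne', Polynomial.natDegree_X_pow_add_C⟩

theorem monic_twist_monomial_one [Nontrivial R'] (hr : 0 < r) (β : Fin (n + 1) →₀ ℕ) :
    (twist θ n r (monomial β 1)).Monic := by
  rw [twist_monomial_one]
  exact Polynomial.monic_prod_of_monic _ _ fun i _ => (monic_shear n hr i).1.pow _

theorem natDegree_twist_monomial_one [Nontrivial R'] (hr : 0 < r) (β : Fin (n + 1) →₀ ℕ) :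
    (twist θ n r (monomial β 1)).natDegree = ∑ i, β i * r ^ (i : ℕ) := by
  rw [twist_monomial_one,
    Polynomial.natDegree_prod_of_monic _ _ fun i _ => (monic_shear n hr i).1.pow _]
  refine Finset.sum_congr rfl fun i _ => ?_
  rw [(monic_shear n hr i).1.natDegree_pow, (monic_shear n hr i).2]

end Twist

theorem monic_sum_C_mul {A α : Type*} [CommRing A] [Nontrivial A] {s : Finset α} {i : α}
    (hi : i ∈ s) {p : α → Polynomial A} {e : α → A} (hp : (p i).Monic) (he : e i = 1)
    (hlt : ∀ j ∈ s, j ≠ i → e j ≠ 0 → (p j).natDegree < (p i).natDegree) :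
    (∑ j ∈ s, Polynomial.C (e j) * p j).Monic := by
  classical
  rw [← Finset.add_sum_erase _ _ hi, he, map_one, one_mul]
  refine hp.add_of_left ((Polynomial.degree_sum_le _ _).trans_lt
    ((Finset.sup_lt_iff (bot_lt_iff_ne_bot.2 fun h =>
      hp.ne_zero (Polynomial.degree_eq_bot.1 h))).2 fun j hj => ?_))
  rcases eq_or_ne (e j) 0 with h0 | h0
  · rw [h0, map_zero, zero_mul, Polynomial.degree_zero, bot_lt_iff_ne_bot]
    exact fun h => hp.ne_zero (Polynomial.degree_eq_bot.1 h)
  · rw [← Polynomial.smul_eq_C_mul]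
    exact (Polynomial.degree_smul_le _ _).trans_lt (Polynomial.degree_lt_degree
      (hlt j (Finset.mem_of_mem_erase hj) (Finset.ne_of_mem_erase hj) h0))

section ElimHom

variable {C₀ ι κ : Type*} [CommRing C₀] {n : ℕ}

/-- The substitution of `shear` into power series, combined with the rescaling of the variable by
a new parameter. -/
noncomputable def elimHom (κ : Type*) (r : ℕ) :
    PowerSeries (MvPolynomial (Fin (n + 1)) (MvPolynomial ι C₀)) →+*
      PowerSeries (Polynomial (MvPolynomial (Fin n) (MvPolynomial (Option (ι ⊕ κ)) C₀))) :=
  (PowerSeries.rescale (Polynomial.C (C (X none)))).comp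
    (PowerSeries.map (twist (rename fun l => some (Sum.inl l)).toRingHom n r))

theorem constantCoeff_elimHom (r : ℕ)
    (f : PowerSeries (MvPolynomial (Fin (n + 1)) (MvPolynomial ι C₀))) :
    PowerSeries.constantCoeff (elimHom κ r f) =
      twist (rename fun l => some (Sum.inl l)).toRingHom n r (PowerSeries.constantCoeff f) := by
  rw [← PowerSeries.coeff_zero_eq_constantCoeff_apply, elimHom, RingHom.comp_apply,
    PowerSeries.coeff_rescale, pow_zero, one_mul, PowerSeries.coeff_map,
    PowerSeries.coeff_zero_eq_constantCoeff_apply]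

variable {Ω : Type*} [NormedField Ω] (φ₀ : C₀ →+* Ω)

theorem evalSeries_elimHom (r : ℕ) (t : Option (ι ⊕ κ) → Ω) (z : Fin n → Ω) (y v : Ω)
    (f : PowerSeries (MvPolynomial (Fin (n + 1)) (MvPolynomial ι C₀))) :
    evalSeries (Polynomial.eval₂RingHom (evalParam φ₀ t z) y) v (elimHom κ r f) =
      evalSeries (evalParam φ₀ (fun l => t (some (Sum.inl l))) (shear r y z)) (t none * v) f := by
  have eval_twist : (Polynomial.eval₂RingHom (evalParam φ₀ t z) y).comp
      (twist (rename fun l => some (Sum.inl l)).toRingHom n r) =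
        evalParam φ₀ (fun l => t (some (Sum.inl l))) (shear r y z) := by
    refine MvPolynomial.ringHom_ext (fun p => ?_) (fun i => ?_)
    · simpa [twist] using! eval₂_rename φ₀ _ t p
    · refine Fin.cases ?_ (fun i => ?_) i <;> simp [twist, shear]
  rw [elimHom, RingHom.comp_apply, evalSeries_rescale, evalSeries_map, eval_twist]
  simp

end ElimHom

section Eliminant

variable {C₀ W ι : Type*} [CommRing C₀] [AddCommGroup W] [Module ℚ W] {a : ι → Module.Dual ℚ W}
  {n : ℕ} {F : PowerSeries (MvPolynomial (Fin (n + 1)) (MvPolynomial ι C₀))}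

namespace BihomogeneousDecomposition

variable (B : BihomogeneousDecomposition a F) (E : Finset B.support) (γ₀ : B.support)

/-- The weights of the parameters after the elimination of a variable: `none` is the factor by
which the variable of the power series is rescaled, and `some (Sum.inr γ)` is the quotient
`P γ / P γ₀`. -/
def elimWeight : Option (ι ⊕ B.support) → Module.Dual ℚ W :=
  fun l => l.elim 0 (Sum.elim a fun γ => γ.1.2 - γ₀.1.2)

open Classical in
/-- The power series that represents the quotient `P γ / P γ₀`. If `γ ∉ E`, then it has a factor
`PowerSeries.X`, which makes it vanish modulo `PowerSeries.X`. -/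
noncomputable def quotientSeries (γ : B.support) :
    PowerSeries (Polynomial (MvPolynomial (Fin n) (MvPolynomial (Option (ι ⊕ B.support)) C₀))) :=
  if γ = γ₀ then 1 else
    (if γ ∈ E then 1 else PowerSeries.X) *
      PowerSeries.C (Polynomial.C (C (X (some (Sum.inr γ)))))

/-- The power series that represents the quotient `F / P γ₀`. -/
noncomputable def eliminant (r : ℕ) :
    PowerSeries (Polynomial (MvPolynomial (Fin n) (MvPolynomial (Option (ι ⊕ B.support)) C₀))) :=
  ∑ γ : B.support, B.quotientSeries E γ₀ γ * elimHom B.support r (B.deformedMonomial γ)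

/-- The ideal whose zeros are those of `J` in the coordinates of `shear`. -/
noncomputable def elimIdeal (r : ℕ)
    (J : Ideal (PowerSeries (MvPolynomial (Fin (n + 1)) (MvPolynomial ι C₀)))) :
    Ideal (PowerSeries
      (Polynomial (MvPolynomial (Fin n) (MvPolynomial (Option (ι ⊕ B.support)) C₀)))) :=
  Ideal.span {B.eliminant E γ₀ r} ⊔ J.map (elimHom B.support r)

variable {E γ₀}

theorem eliminant_mem_elimIdeal (r : ℕ)
    (J : Ideal (PowerSeries (MvPolynomial (Fin (n + 1)) (MvPolynomial ι C₀)))) :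
    B.eliminant E γ₀ r ∈ B.elimIdeal E γ₀ r J :=
  Ideal.mem_sup_left (Ideal.mem_span_singleton_self _)

theorem monic_constantCoeff_eliminant [Nontrivial C₀] {r : ℕ} (hr : 0 < r)
    (hlt : ∀ γ ∈ E, γ ≠ γ₀ → ∑ i, γ.1.1 i * r ^ (i : ℕ) < ∑ i, γ₀.1.1 i * r ^ (i : ℕ)) :
    (PowerSeries.constantCoeff (B.eliminant E γ₀ r)).Monic := by
  classical
  let q (γ : B.support) :
      Polynomial (MvPolynomial (Fin n) (MvPolynomial (Option (ι ⊕ B.support)) C₀)) :=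
    twist (rename fun l => some (Sum.inl l)).toRingHom n r (monomial γ.1.1 1)
  let e : B.support → MvPolynomial (Fin n) (MvPolynomial (Option (ι ⊕ B.support)) C₀) :=
    fun γ => if γ = γ₀ then 1 else if γ ∈ E then C (X (some (Sum.inr γ))) else 0
  have constantCoeff_eq : PowerSeries.constantCoeff (B.eliminant E γ₀ r) =
      ∑ γ, Polynomial.C (e γ) * q γ := by
    rw [eliminant, map_sum]
    refine Finset.sum_congr rfl fun γ _ => ?_
    have constantCoeff_quotientSeries :
        PowerSeries.constantCoeff (B.quotientSeries E γ₀ γ) = Polynomial.C (e γ) := by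
      simp only [quotientSeries, e]
      split_ifs <;> simp
    have constantCoeff_deformedMonomial :
        PowerSeries.constantCoeff (B.deformedMonomial γ) = monomial γ.1.1 1 := by
      simp [deformedMonomial]
    rw [map_mul, constantCoeff_elimHom, constantCoeff_quotientSeries,
      constantCoeff_deformedMonomial]
  rw [constantCoeff_eq]
  refine monic_sum_C_mul (Finset.mem_univ γ₀) (monic_twist_monomial_one _ n hr _) (if_pos rfl)
    fun γ _ hγ he => ?_
  rw [natDegree_twist_monomial_one _ n hr, natDegree_twist_monomial_one _ n hr]
  refine hlt γ ?_ hγ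
  by_contra hγE
  exact he (by simp only [e, if_neg hγ, if_neg hγE])

end BihomogeneousDecomposition

variable {Ω : Type*} [NormedField Ω]

/-- The family `S` is adapted to the elimination of a variable: the value of `P γ₀` has the
largest norm on the domain, by a factor of at least `‖v‖⁻¹` compared to the values of `P γ` for
`γ ∉ E`. -/
structure MonomialFamily.IsSeparated (S : MonomialFamily Ω a) (φ₀ : C₀ →+* Ω)
    (B : BihomogeneousDecomposition a F) (E : Finset B.support) (γ₀ : B.support) (v : Ω) :
    Prop where
  ne_zero : v ≠ 0
  norm_lt : ‖v‖ < 1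
  norm_base_le : ‖S.base‖ ≤ ‖v‖
  coeffValue_ne_zero : ∀ w ∈ S.domain, S.coeffValue φ₀ (B.P γ₀) w ≠ 0
  norm_le : ∀ w ∈ S.domain, ∀ γ : B.support,
    ‖S.coeffValue φ₀ (B.P γ) w‖ ≤ ‖S.coeffValue φ₀ (B.P γ₀) w‖
  norm_le_mul : ∀ w ∈ S.domain, ∀ γ ∉ E,
    ‖S.coeffValue φ₀ (B.P γ) w‖ ≤ ‖v * S.coeffValue φ₀ (B.P γ₀) w‖

namespace MonomialFamily.IsSeparated

variable {φ₀ : C₀ →+* Ω} {B : BihomogeneousDecomposition a F} {E : Finset B.support}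
  {γ₀ : B.support} {v : Ω} {S : MonomialFamily Ω a}

theorem div_mul_scale_elimWeight (S : MonomialFamily Ω a) (φ₀ : C₀ →+* Ω) (γ γ₀ : B.support) (x : Ω)
    (w : W) : S.coeffValue φ₀ (B.P γ) 0 / (x * S.coeffValue φ₀ (B.P γ₀) 0) *
      S.scale ((γ.1.2 - γ₀.1.2) w) =
        S.coeffValue φ₀ (B.P γ) w / (x * S.coeffValue φ₀ (B.P γ₀) w) := by
  rw [S.coeffValue_eq_scale_mul φ₀ (B.isWeightedHomogeneous γ) w,
    S.coeffValue_eq_scale_mul φ₀ (B.isWeightedHomogeneous γ₀) w, LinearMap.sub_apply,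
    S.isScale.sub, div_mul_div_comm]
  congr 1 <;> ring

open Classical in
/-- The family of parameters after the elimination of a variable. -/
noncomputable def eliminate (h : S.IsSeparated φ₀ B E γ₀ v) :
    MonomialFamily Ω (B.elimWeight γ₀) where
  base := v
  scale := S.scale
  coeff l := l.elim (S.base / v) (Sum.elim S.coeff fun γ =>
    S.coeffValue φ₀ (B.P γ) 0 / ((if γ ∈ E then 1 else v) * S.coeffValue φ₀ (B.P γ₀) 0))
  domain := S.domain
  norm_base_lt := h.norm_lt
  isScale := S.isScale
  convex := S.convex
  norm_le_one w hw l := by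
    rcases l with _ | l | γ
    · simpa [BihomogeneousDecomposition.elimWeight, S.isScale.zero] using
        div_le_one_of_le₀ h.norm_base_le (norm_nonneg v)
    · exact S.norm_le_one w hw l
    · refine (congrArg norm (div_mul_scale_elimWeight S φ₀ γ γ₀ _ w)).trans_le ?_
      rw [norm_div]
      refine div_le_one_of_le₀ ?_ (norm_nonneg _)
      split_ifs with hγ
      · simpa using h.norm_le w hw γ
      · exact h.norm_le_mul w hw γ hγ

theorem param_eliminate_none (h : S.IsSeparated φ₀ B E γ₀ v) (w : W) :
    h.eliminate.param w none = S.base / v := by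
  simp [param, eliminate, BihomogeneousDecomposition.elimWeight, S.isScale.zero]

open Classical in
theorem param_eliminate_inr (h : S.IsSeparated φ₀ B E γ₀ v) (w : W) (γ : B.support) :
    h.eliminate.param w (some (Sum.inr γ)) =
      S.coeffValue φ₀ (B.P γ) w / ((if γ ∈ E then 1 else v) * S.coeffValue φ₀ (B.P γ₀) w) :=
  div_mul_scale_elimWeight S φ₀ γ γ₀ _ w

theorem evalSeries_eliminate_elimHom (h : S.IsSeparated φ₀ B E γ₀ v) (r : ℕ) (w : W) (z : Fin n → Ω)
    (y : Ω) (f : PowerSeries (MvPolynomial (Fin (n + 1)) (MvPolynomial ι C₀))) :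
    evalSeries (Polynomial.eval₂RingHom (evalParam φ₀ (h.eliminate.param w) z) y) v
      (elimHom B.support r f) = evalSeries (evalParam φ₀ (S.param w) (shear r y z)) S.base f := by
  rw [evalSeries_elimHom, h.param_eliminate_none, div_mul_cancel₀ _ h.ne_zero]
  rfl

variable [IsUltrametricDist Ω] [CompleteSpace Ω]

theorem evalSeries_eliminate_eliminant (h : S.IsSeparated φ₀ B E γ₀ v) (hφ₀ : ∀ x, ‖φ₀ x‖ ≤ 1)
    (r : ℕ) {w : W} (hw : w ∈ S.domain) {z : Fin n → Ω} (hz : ∀ j, ‖z j‖ ≤ 1) {y : Ω}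
    (hy : ‖y‖ ≤ 1) :
    evalSeries (Polynomial.eval₂RingHom (evalParam φ₀ (h.eliminate.param w) z) y) v
      (B.eliminant E γ₀ r) = (S.coeffValue φ₀ (B.P γ₀) w)⁻¹ *
        evalSeries (evalParam φ₀ (S.param w) (shear r y z)) S.base F := by
  classical
  have eval_eq := evalSeriesHom_apply (norm_eval₂RingHom_le_one
    (norm_evalParam_le_one hφ₀ (h.eliminate.norm_param_le_one hw) hz) hy) h.norm_lt
  have eval_quotientSeries (γ : B.support) :
      evalSeries (Polynomial.eval₂RingHom (evalParam φ₀ (h.eliminate.param w) z) y) v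
        (B.quotientSeries E γ₀ γ) =
          (S.coeffValue φ₀ (B.P γ₀) w)⁻¹ * S.coeffValue φ₀ (B.P γ) w := by
    rw [BihomogeneousDecomposition.quotientSeries, ← eval_eq]
    split_ifs with hγ₀ hγ
    · rw [map_one, hγ₀, inv_mul_cancel₀ (h.coeffValue_ne_zero w hw)]
    · simp [eval_eq, h.param_eliminate_inr, hγ, inv_mul_eq_div]
    · rw [map_mul, eval_eq, eval_eq]
      have := h.ne_zero
      simp [h.param_eliminate_inr, hγ]
      field_simp
  rw [S.evalSeries_evalParam_eq_sum B hφ₀ hw (norm_shear_le_one_iff.2 ⟨hy, hz⟩), Finset.mul_sum,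
    BihomogeneousDecomposition.eliminant, ← eval_eq, map_sum]
  refine Finset.sum_congr rfl fun γ _ => ?_
  rw [map_mul, eval_eq, eval_eq, h.evalSeries_eliminate_elimHom, eval_quotientSeries, mul_assoc]

end MonomialFamily.IsSeparated

end Eliminant

theorem ncard_le_mul_ncard_image_fst {β γ : Type*} {T : Set (β × γ)} (hT : T.Finite) {s : ℕ}
    (hs : ∀ b ∈ Prod.fst '' T, {y | (b, y) ∈ T}.encard ≤ s) :
    T.ncard ≤ s * (Prod.fst '' T).ncard := by
  classical
  lift T to Finset (β × γ) using hT
  rw [← Finset.coe_image, Set.ncard_coe_finset, Set.ncard_coe_finset]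
  refine Finset.card_le_mul_card_image T s fun b hb => ?_
  have image_snd : {y | (b, y) ∈ (T : Set (β × γ))} =
      (({p ∈ T | p.1 = b}.image Prod.snd : Finset γ) : Set γ) := by
    ext y
    simp
  have hsb := hs b (by simpa using hb)
  rw [image_snd, Set.encard_coe_eq_coe_finsetCard, Finset.card_image_of_injOn] at hsb
  · exact_mod_cast hsb
  · rintro p hp p' hp' h
    exact Prod.ext ((Finset.mem_filter.1 hp).2.trans (Finset.mem_filter.1 hp').2.symm) h

section HasBoundOfDominant

variable {Ω C₀ W ι : Type*} [NormedField Ω] [IsUltrametricDist Ω] [CompleteSpace Ω] [CommRing C₀]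
  [AddCommGroup W] [Module ℚ W] {a : ι → Module.Dual ℚ W} {n : ℕ}
  {F : PowerSeries (MvPolynomial (Fin (n + 1)) (MvPolynomial ι C₀))}
  {J : Ideal (PowerSeries (MvPolynomial (Fin (n + 1)) (MvPolynomial ι C₀)))}
  {φ₀ : C₀ →+* Ω} {B : BihomogeneousDecomposition a F} {E : Finset B.support} {γ₀ : B.support}

namespace MonomialFamily.IsSeparated

variable {S : MonomialFamily Ω a} {v : Ω}

theorem mem_fibre_elimIdeal_iff (h : S.IsSeparated φ₀ B E γ₀ v) (hφ₀ : ∀ x, ‖φ₀ x‖ ≤ 1)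
    (hF : F ∈ J) (r : ℕ) {w : W} (hw : w ∈ S.domain) {z : Fin n → Ω} (hz : ∀ j, ‖z j‖ ≤ 1)
    {y : Ω} : y ∈ fibre (B.elimIdeal E γ₀ r J) (evalParam φ₀ (h.eliminate.param w) z) v ↔
      (w, shear r y z) ∈ S.zeros φ₀ J := by
  constructor
  · refine fun ⟨hy, hJ⟩ => ⟨hw, norm_shear_le_one_iff.2 ⟨hy, hz⟩, fun f hf => ?_⟩
    rw [← h.evalSeries_eliminate_elimHom]
    exact hJ _ (Ideal.mem_sup_right (Ideal.mem_map_of_mem _ hf))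
  · rintro ⟨-, hshear, hJ⟩
    have hy := (norm_shear_le_one_iff.1 hshear).1
    have norm_eval_le := norm_eval₂RingHom_le_one
      (norm_evalParam_le_one hφ₀ (h.eliminate.norm_param_le_one hw) hz) hy
    have le_ker : B.elimIdeal E γ₀ r J ≤ RingHom.ker (evalSeriesHom norm_eval_le h.norm_lt) := by
      refine sup_le ?_ (Ideal.map_le_iff_le_comap.2 fun f hf => ?_)
      · rw [Ideal.span_singleton_le_iff_mem, RingHom.mem_ker, evalSeriesHom_apply,
          h.evalSeries_eliminate_eliminant hφ₀ r hw hz hy, hJ F hF, mul_zero]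
      · rw [Ideal.mem_comap, RingHom.mem_ker, evalSeriesHom_apply, h.evalSeries_eliminate_elimHom]
        exact hJ f hf
    exact ⟨hy, fun f hf => le_ker hf⟩

/-- Every zero of the contracted ideal lifts, by Weierstrass preparation. -/
theorem image_fst_setOf_shear_mem_zeros [IsAlgClosed Ω] (h : S.IsSeparated φ₀ B E γ₀ v)
    (hφ₀ : ∀ x, ‖φ₀ x‖ ≤ 1) (hF : F ∈ J) {r : ℕ}
    (hmonic : (PowerSeries.constantCoeff (B.eliminant E γ₀ r)).Monic) :
    Prod.fst '' {q : (W × (Fin n → Ω)) × Ω | (q.1.1, shear r q.2 q.1.2) ∈ S.zeros φ₀ J} =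
      h.eliminate.zeros φ₀ ((B.elimIdeal E γ₀ r J).comap (PowerSeries.map Polynomial.C)) := by
  ext ⟨w, z⟩
  constructor
  · rintro ⟨⟨-, y⟩, hq, rfl⟩
    have hz := (norm_shear_le_one_iff.1 hq.2.1).2
    refine ⟨hq.1, hz, fun f hf => ?_⟩
    rw [← evalSeries_eval₂RingHom_map_C _ _ y]
    exact ((h.mem_fibre_elimIdeal_iff hφ₀ hF r hq.1 hz).2 hq).2 _ hf
  · rintro ⟨hw, hz, hJ⟩
    obtain ⟨y, hy⟩ := fibre_nonempty (B.eliminant_mem_elimIdeal r J) hmonic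
      (norm_evalParam_le_one hφ₀ (h.eliminate.norm_param_le_one hw) hz) h.norm_lt hJ
    exact ⟨((w, z), y), (h.mem_fibre_elimIdeal_iff hφ₀ hF r hw hz).1 hy, rfl⟩

end MonomialFamily.IsSeparated

theorem hasBound_of_isSeparated [IsAlgClosed Ω] (hφ₀ : ∀ x, ‖φ₀ x‖ ≤ 1) (hF : F ∈ J) {r : ℕ}
    (hmonic : (PowerSeries.constantCoeff (B.eliminant E γ₀ r)).Monic)
    (hbound : HasBound φ₀ ((B.elimIdeal E γ₀ r J).comap (PowerSeries.map Polynomial.C))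
      fun _ : MonomialFamily Ω (B.elimWeight γ₀) => True) :
    HasBound φ₀ J fun S : MonomialFamily Ω a => ∃ v, S.IsSeparated φ₀ B E γ₀ v := by
  obtain ⟨N, hN⟩ := hbound
  obtain ⟨s, hs⟩ := exists_encard_fibre_le (Ω := Ω) (B.eliminant_mem_elimIdeal r J) hmonic
  refine ⟨s * N, fun S ⟨v, h⟩ hfin => ?_⟩
  let e : (W × (Fin n → Ω)) × Ω ≃ W × (Fin (n + 1) → Ω) :=
    (Equiv.prodAssoc _ _ _).trans ((Equiv.refl W).prodCongr (shearEquiv Ω n r))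
  let T := e ⁻¹' S.zeros φ₀ J
  have hT : T.Finite := hfin.preimage e.injective.injOn
  have image_T := h.image_fst_setOf_shear_mem_zeros hφ₀ hF hmonic
  have fibre_le (q) (hq : q ∈ Prod.fst '' T) : {y | (q, y) ∈ T}.encard ≤ s := by
    obtain ⟨hw, hz, -⟩ := image_T.le hq
    refine (Set.encard_le_encard fun y hy => ?_).trans (hs _ v
      (norm_evalParam_le_one hφ₀ (h.eliminate.norm_param_le_one hw) hz) h.norm_lt)
    exact (h.mem_fibre_elimIdeal_iff hφ₀ hF r hw hz).2 hy
  calc (S.zeros φ₀ J).ncard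
      = T.ncard := (Set.ncard_preimage_of_injective_subset_range e.injective
        (e.range_eq_univ ▸ Set.subset_univ _)).symm
    _ ≤ s * (Prod.fst '' T).ncard := ncard_le_mul_ncard_image_fst hT fibre_le
    _ ≤ s * N := Nat.mul_le_mul_left _ (by
        rw [show Prod.fst '' T = _ from image_T]
        exact hN _ trivial (image_T ▸ hT.image Prod.fst))

end HasBoundOfDominant

theorem exists_norm_lt_one_forall_norm_le {Ω : Type*} [NontriviallyNormedField Ω] {T : Set Ω}
    (hT : T.Finite) (hlt : ∀ x ∈ T, ‖x‖ < 1) : ∃ v : Ω, v ≠ 0 ∧ ‖v‖ < 1 ∧ ∀ x ∈ T, ‖x‖ ≤ ‖v‖ := by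
  obtain ⟨x₀, hx₀, hx₀_lt⟩ := NormedField.exists_norm_lt_one Ω
  obtain ⟨v, hv, hmax⟩ :=
    (hT.insert x₀).exists_maximalFor (fun x => ‖x‖) _ ⟨x₀, Set.mem_insert _ _⟩
  have norm_le (x) (hx : x ∈ insert x₀ T) : ‖x‖ ≤ ‖v‖ := (le_total _ _).elim id fun h => hmax hx h
  refine ⟨v, norm_pos_iff.1 (hx₀.trans_le (norm_le _ (Set.mem_insert _ _))), ?_,
    fun x hx => norm_le x (Set.mem_insert_of_mem _ hx)⟩
  rcases hv with rfl | hv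
  exacts [hx₀_lt, hlt v hv]

theorem infinite_setOf_norm_le_one {Ω : Type*} [NontriviallyNormedField Ω] :
    {x : Ω | ‖x‖ ≤ 1}.Infinite := by
  obtain ⟨x, hx₀, hx₁⟩ := NormedField.exists_norm_lt_one Ω
  refine Set.infinite_of_injective_forall_mem (f := fun k : ℕ => x ^ k) (fun i j hij => ?_)
    fun k => ?_
  · exact (pow_right_strictAnti₀ hx₀ hx₁).injective
      (by simpa only [norm_pow] using congrArg norm hij)
  · simpa using pow_le_one₀ (norm_nonneg x) hx₁.le

theorem subsingleton_of_convex_of_finite {W : Type*} [AddCommGroup W] [Module ℚ W] {D : Set W}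
    (hD : Convex ℚ D) (hfin : D.Finite) : D.Subsingleton := by
  intro x hx y hy
  by_contra hne
  have Icc_subset : Set.Icc (0 : ℚ) 1 ⊆ AffineMap.lineMap x y ⁻¹' D := fun t ht =>
    hD.lineMap_mem hx hy ht
  exact Set.Icc_infinite (zero_lt_one' ℚ)
    ((hfin.preimage (AffineMap.lineMap_injective ℚ hne).injOn).subset Icc_subset)

section Induction

variable {Ω : Type*} [NontriviallyNormedField Ω] {C₀ : Type*} [CommRing C₀] {φ₀ : C₀ →+* Ω}

namespace MonomialFamily

variable {W ι : Type*} [AddCommGroup W] [Module ℚ W] {a : ι → Module.Dual ℚ W} {n : ℕ}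

theorem zeros_subsingleton_of_forall_mem
    {J : Ideal (PowerSeries (MvPolynomial (Fin n) (MvPolynomial ι C₀)))} {S : MonomialFamily Ω a}
    (hall : ∀ w ∈ S.domain, ∀ z : Fin n → Ω, (∀ j, ‖z j‖ ≤ 1) → (w, z) ∈ S.zeros φ₀ J)
    (hfin : (S.zeros φ₀ J).Finite) : (S.zeros φ₀ J).Subsingleton := by
  have domain_subsingleton : S.domain.Subsingleton :=
    subsingleton_of_convex_of_finite S.convex <| (hfin.image Prod.fst).subset fun w hw =>
      ⟨(w, 0), hall w hw 0 (by simp), rfl⟩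
  rintro ⟨w, z⟩ hq ⟨w', z'⟩ hq'
  refine Prod.ext (domain_subsingleton hq.1 hq'.1) ?_
  rcases n with _ | n
  · exact Subsingleton.elim _ _
  · refine absurd ((hfin.image fun q => q.2 0).subset fun x hx => ?_)
      (infinite_setOf_norm_le_one (Ω := Ω))
    exact ⟨(w, fun _ => x), hall w hq.1 _ fun _ => hx, rfl⟩

variable {F : PowerSeries (MvPolynomial (Fin (n + 1)) (MvPolynomial ι C₀))}
  {J : Ideal (PowerSeries (MvPolynomial (Fin (n + 1)) (MvPolynomial ι C₀)))}
  {B : BihomogeneousDecomposition a F} {E : Finset B.support} {γ₀ : B.support}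

/-- If the zeros are finite in number, then on a smaller domain the dominant terms exceed the
other ones by a factor bounded away from `1`. -/
theorem exists_isSeparated_restrict {S : MonomialFamily Ω a} (hγ₀ : γ₀ ∈ E)
    (hS : ∀ w ∈ S.domain, S.IsDominantAt φ₀ B E w) (hfin : (S.zeros φ₀ J).Finite) :
    ∃ (D : Set W) (hD : Convex ℚ D) (v : Ω), (S.restrict hD).IsSeparated φ₀ B E γ₀ v ∧
      (S.restrict hD).zeros φ₀ J = S.zeros φ₀ J := by
  let quot (q : W × (Fin (n + 1) → Ω)) (γ : B.support) : Ω :=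
    S.coeffValue φ₀ (B.P γ) q.1 / S.coeffValue φ₀ (B.P γ₀) q.1
  have finite_quot : (⋃ q ∈ S.zeros φ₀ J, quot q '' {γ | γ ∉ E}).Finite :=
    hfin.biUnion fun q _ => Set.toFinite _
  obtain ⟨v, hv, hv_lt, hle⟩ := exists_norm_lt_one_forall_norm_le (finite_quot.insert S.base) <| by
    rintro _ (rfl | hx)
    · exact S.norm_base_lt
    · obtain ⟨q, hq, γ, hγ, rfl⟩ := Set.mem_iUnion₂.1 hx
      have hdom := hS q.1 hq.1 γ₀ hγ₀
      rw [norm_div]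
      exact (div_lt_one (norm_pos_iff.2 hdom.1)).2 ((hdom.2 γ).2 hγ)
  let D : Set W := ⋂ γ ∈ {γ | γ ∉ E},
    {w | ‖S.coeffValue φ₀ (B.P γ) w‖ ≤ ‖v * S.coeffValue φ₀ (B.P γ₀) w‖}
  have hD : Convex ℚ D := convex_iInter₂ fun γ _ =>
    S.convex_norm_coeffValue_le (B.isWeightedHomogeneous γ) (B.isWeightedHomogeneous γ₀) v
  refine ⟨D, hD, v, ⟨hv, hv_lt, hle _ (Set.mem_insert _ _), fun w hw => (hS w hw.1 γ₀ hγ₀).1,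
    fun w hw γ => ((hS w hw.1 γ₀ hγ₀).2 γ).1, fun w hw γ hγ => Set.mem_iInter₂.1 hw.2 γ hγ⟩, ?_⟩
  rw [S.zeros_restrict hD φ₀ J, Set.sep_eq_self_iff_mem_true]
  refine fun q hq => Set.mem_iInter₂.2 fun γ hγ => ?_
  have hquot := hle (quot q γ)
    (Set.mem_insert_of_mem _ (Set.mem_biUnion hq (Set.mem_image_of_mem _ hγ)))
  rwa [norm_div, div_le_iff₀ (norm_pos_iff.2 (hS q.1 hq.1 γ₀ hγ₀).1), ← norm_mul] at hquot

end MonomialFamily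

variable [IsUltrametricDist Ω] [CompleteSpace Ω] [IsAlgClosed Ω] {k n : ℕ} {W ι : Type}
  [AddCommGroup W] [Module ℚ W] [Module.Finite ℚ W] [Finite ι] {a : ι → Module.Dual ℚ W}

theorem hasBound_of_dominant_weight_eq (hφ₀ : ∀ x, ‖φ₀ x‖ ≤ 1)
    (hn : UniformBound φ₀ k n) (hW : Module.finrank ℚ W < k)
    {F : PowerSeries (MvPolynomial (Fin (n + 1)) (MvPolynomial ι C₀))}
    {J : Ideal (PowerSeries (MvPolynomial (Fin (n + 1)) (MvPolynomial ι C₀)))} (hF : F ∈ J)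
    {B : BihomogeneousDecomposition a F} {E : Finset B.support} (hE : E.Nonempty)
    {χ : Module.Dual ℚ W} (hχ : ∀ γ ∈ E, γ.1.2 = χ) :
    HasBound φ₀ J fun S : MonomialFamily Ω a => ∀ w ∈ S.domain, S.IsDominantAt φ₀ B E w := by
  classical
  have := φ₀.domain_nontrivial
  obtain ⟨r, hr, hinj⟩ := exists_injOn_sum_mul_pow (E.image fun γ => γ.1.1)
  obtain ⟨γ₀, hγ₀, hmax⟩ := E.exists_max_image (fun γ => ∑ i, γ.1.1 i * r ^ (i : ℕ)) hE
  have degree_lt (γ) (hγ : γ ∈ E) (hne : γ ≠ γ₀) :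
      ∑ i, γ.1.1 i * r ^ (i : ℕ) < ∑ i, γ₀.1.1 i * r ^ (i : ℕ) := by
    refine (hmax γ hγ).lt_of_ne fun heq => hne (Subtype.ext (Prod.ext ?_ ?_))
    · exact hinj (Finset.mem_image_of_mem _ hγ) (Finset.mem_image_of_mem _ hγ₀) heq
    · rw [hχ γ hγ, hχ γ₀ hγ₀]
  obtain ⟨N, hN⟩ := hasBound_of_isSeparated (Ω := Ω) hφ₀ hF
    (B.monic_constantCoeff_eliminant hr degree_lt) (hn W hW _ _ _)
  refine ⟨N, fun S hS hfin => ?_⟩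
  obtain ⟨D, hD, v, hsep, heq⟩ := S.exists_isSeparated_restrict hγ₀ hS hfin
  exact heq ▸ hN _ ⟨v, hsep⟩ (heq ▸ hfin)

variable {J : Ideal (PowerSeries (MvPolynomial (Fin n) (MvPolynomial ι C₀)))}
  {F : PowerSeries (MvPolynomial (Fin n) (MvPolynomial ι C₀))}

/-- If two dominant terms have different weights, then the domain lies in a hyperplane; otherwise
a variable can be eliminated. -/
theorem hasBound_of_dominant (hφ₀ : ∀ x, ‖φ₀ x‖ ≤ 1) (hk : UniformBound φ₀ k n)
    (hn : ∀ n', n = n' + 1 → UniformBound φ₀ (k + 1) n') (hW : Module.finrank ℚ W < k + 1)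
    (hF : F ∈ J) {B : BihomogeneousDecomposition a F} {E : Finset B.support} (hE : E.Nonempty) :
    HasBound φ₀ J fun S : MonomialFamily Ω a => ∀ w ∈ S.domain, S.IsDominantAt φ₀ B E w := by
  obtain ⟨γ₀, hγ₀⟩ := hE
  by_cases hχ : ∀ γ ∈ E, γ.1.2 = γ₀.1.2
  · rcases n with _ | n
    · refine ⟨0, fun S hS _ => ?_⟩
      rw [MonomialFamily.zeros_eq_empty_of_isDominantAt hφ₀ hF hγ₀ hχ hS, Set.ncard_empty]
    · exact hasBound_of_dominant_weight_eq hφ₀ (hn n rfl) hW hF ⟨γ₀, hγ₀⟩ hχ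
  · push Not at hχ
    obtain ⟨γ, hγ, hne⟩ := hχ
    exact (hk.hasBound_of_const hW J (sub_ne_zero.2 hne)).mono fun S hS w hw w' hw' =>
      (hS w hw).sub_apply_eq (hS w' hw') hγ hγ₀

theorem hasBound_of_coeffValue_ne_zero (hφ₀ : ∀ x, ‖φ₀ x‖ ≤ 1) (hk : UniformBound φ₀ k n)
    (hn : ∀ n', n = n' + 1 → UniformBound φ₀ (k + 1) n') (hW : Module.finrank ℚ W < k + 1)
    (hF : F ∈ J) (B : BihomogeneousDecomposition a F) :
    HasBound φ₀ J fun S : MonomialFamily Ω a =>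
      ∃ γ : B.support, S.coeffValue φ₀ (B.P γ) 0 ≠ 0 := by
  classical
  refine HasBound.of_cover ({E : Finset B.support | E.Nonempty} : Finset (Finset B.support))
    (fun E hE => hasBound_of_dominant hφ₀ hk hn hW hF (Finset.mem_filter.1 hE).2)
    (fun S E => {w | S.IsDominantAt φ₀ B E w}) (fun S E => S.convex_setOf_isDominantAt B E) ?_
    fun S _ E _ w hw => hw.2
  rintro S ⟨γ, hγ⟩ w -
  obtain ⟨E, hE, hdom⟩ := MonomialFamily.exists_isDominantAt
    ((S.coeffValue_ne_zero_iff φ₀ (B.isWeightedHomogeneous γ) w).2 hγ)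
  exact ⟨E, by simpa using hE, hdom⟩

theorem uniformBound_succ [IsNoetherianRing C₀] (hφ₀ : ∀ x, ‖φ₀ x‖ ≤ 1)
    (hk : UniformBound φ₀ k n) (hn : ∀ n', n = n' + 1 → UniformBound φ₀ (k + 1) n') :
    UniformBound φ₀ (k + 1) n := by
  intro W _ _ _ hW ι _ a J
  obtain ⟨T, rfl⟩ := IsNoetherian.noetherian J
  have B := fun F : PowerSeries (MvPolynomial (Fin n) (MvPolynomial ι C₀)) =>
    (nonempty_bihomogeneousDecomposition a F).some
  obtain ⟨N, hN⟩ := HasBound.exists_mem T fun F hF =>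
    hasBound_of_coeffValue_ne_zero hφ₀ hk hn hW (Ideal.subset_span hF) (B F)
  refine ⟨max 1 N, fun S _ hfin => le_max_iff.2 (or_iff_not_imp_right.2 fun hlt => ?_)⟩
  have coeffValue_eq_zero (F) (hF : F ∈ T) (w) (γ : (B F).support) :
      S.coeffValue φ₀ ((B F).P γ) w = 0 := by
    by_contra hne
    exact hlt (hN S ⟨F, hF, γ,
      (S.coeffValue_ne_zero_iff φ₀ ((B F).isWeightedHomogeneous γ) w).1 hne⟩ hfin)
  have := hfin.to_subtype
  refine Set.ncard_le_one_iff_subsingleton.2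
    (S.zeros_subsingleton_of_forall_mem (fun w hw z hz => ⟨hw, hz, ?_⟩) hfin)
  have le_ker : Ideal.span (T : Set _) ≤ RingHom.ker
      (evalSeriesHom (norm_evalParam_le_one hφ₀ (S.norm_param_le_one hw) hz) S.norm_base_lt) := by
    refine Ideal.span_le.2 fun F hF => ?_
    rw [SetLike.mem_coe, RingHom.mem_ker, evalSeriesHom_apply,
      S.evalSeries_evalParam_eq_sum (B F) hφ₀ hw hz]
    exact Finset.sum_eq_zero fun γ _ => by rw [coeffValue_eq_zero F hF, zero_mul]
  exact fun f hf => le_ker hf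

theorem uniformBound [IsNoetherianRing C₀] (hφ₀ : ∀ x, ‖φ₀ x‖ ≤ 1) (k n : ℕ) :
    UniformBound φ₀ k n := by
  induction k generalizing n with
  | zero => exact fun W _ _ _ hW => absurd hW (Nat.not_lt_zero _)
  | succ k ihk =>
    induction n with
    | zero => exact uniformBound_succ hφ₀ (ihk 0) nofun
    | succ n ihn => exact uniformBound_succ hφ₀ (ihk _) fun n' hn' => Nat.succ_injective hn' ▸ ihn

end Induction

/-! ### Sparse systems in a coset -/

section BinomSeries

/-- The `2`-adic integer `2 ^ i / i!`. -/
noncomputable def twoPowDivFactorial (i : ℕ) : ℤ_[2] :=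
  ⟨2 ^ i / i.factorial, by
    have padicValNat_le : padicValNat 2 i.factorial ≤ i := by
      have := sub_one_mul_padicValNat_factorial (p := 2) i
      omega
    have factorial_ne_zero : (i.factorial : ℚ_[2]) ≠ 0 := by exact_mod_cast i.factorial_ne_zero
    rw [norm_div, norm_pow, show ‖(2 : ℚ_[2])‖ = 2⁻¹ from Padic.norm_p (p := 2),
      Padic.norm_eq_zpow_neg_valuation factorial_ne_zero, Padic.valuation_natCast]
    refine div_le_one_of_le₀ ?_ (by positivity)
    rw [inv_pow, zpow_neg, zpow_natCast, Nat.cast_ofNat]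
    gcongr
    norm_num⟩

theorem twoPowDivFactorial_mul_factorial (i : ℕ) :
    twoPowDivFactorial i * i.factorial = 2 ^ i := by
  refine Subtype.ext ?_
  have factorial_ne_zero : (i.factorial : ℚ_[2]) ≠ 0 := by exact_mod_cast i.factorial_ne_zero
  push_cast
  exact div_mul_cancel₀ _ factorial_ne_zero

variable {n : ℕ} {ι : Type*}

/-- The power series `(1 + u z) ^ a₀ * ∑ 2 ^ i / i! * (b)_i * (z + z ^ 2) ^ i * u ^ i` in `u`, where
`(b)_i` is the falling factorial and `z` is the `j`-th variable. Its value at `u = 2` is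
`(1 + 2 z) ^ a₀ * (1 + 4 (z + z ^ 2)) ^ b = (1 + 2 z) ^ (a₀ + 2 b)`. Its coefficients are
polynomial in `b`, so that the exponent becomes a parameter. -/
noncomputable def binomSeries (a₀ : ℕ) (b : ι) (j : Fin n) :
    PowerSeries (MvPolynomial (Fin n) (MvPolynomial ι ℤ_[2])) :=
  (1 + PowerSeries.X * PowerSeries.C (X j)) ^ a₀ * PowerSeries.mk fun i =>
    C (C (twoPowDivFactorial i) * (descPochhammer (MvPolynomial ι ℤ_[2]) i).eval (X b)) *
      (X j + X j ^ 2) ^ i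

variable {Ω : Type*} [NormedField Ω] (φ₀ : ℤ_[2] →+* Ω)

theorem eval₂Hom_eval_descPochhammer {t : ι → Ω} {b : ι} {β : ℕ} (hβ : t b = β) (i : ℕ) :
    eval₂Hom φ₀ t ((descPochhammer (MvPolynomial ι ℤ_[2]) i).eval (X b)) = β.descFactorial i := by
  rw [← descPochhammer_eval_eq_descFactorial, ← hβ, Polynomial.eval, Polynomial.hom_eval₂,
    ← Polynomial.eval_map, RingHom.comp_id, descPochhammer_map]
  simp

theorem evalSeries_mk_descPochhammer {t : ι → Ω} {b : ι} {β : ℕ} (hβ : t b = β) (z : Fin n → Ω)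
    (j : Fin n) :
    evalSeries (evalParam φ₀ t z) 2 (PowerSeries.mk fun i =>
      C (C (twoPowDivFactorial i) * (descPochhammer (MvPolynomial ι ℤ_[2]) i).eval (X b)) *
        (X j + X j ^ 2) ^ i) = (1 + 2 * z j) ^ (2 * β) := by
  have evalParam_coeff (i : ℕ) : evalParam φ₀ t z
      (C (C (twoPowDivFactorial i) * (descPochhammer (MvPolynomial ι ℤ_[2]) i).eval (X b)) *
        (X j + X j ^ 2) ^ i) =
      φ₀ (twoPowDivFactorial i) * β.descFactorial i * (z j + z j ^ 2) ^ i := by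
    rw [map_mul, evalParam_C, map_mul, eval₂Hom_eval_descPochhammer φ₀ hβ]
    simp
  have two_pow_eq (i : ℕ) : φ₀ (twoPowDivFactorial i) * i.factorial = 2 ^ i := by
    rw [← map_natCast φ₀, ← map_mul, twoPowDivFactorial_mul_factorial, map_pow, map_ofNat]
  have pow_eq : (1 + 2 * z j) ^ (2 * β) = (2 * 2 * (z j + z j ^ 2) + 1) ^ β := by
    rw [pow_mul]
    ring
  rw [evalSeries, tsum_eq_sum (s := Finset.range (β + 1)), pow_eq, add_pow]
  · refine Finset.sum_congr rfl fun i _ => ?_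
    rw [PowerSeries.coeff_mk, evalParam_coeff, Nat.descFactorial_eq_factorial_mul_choose,
      Nat.cast_mul, ← mul_assoc, two_pow_eq, mul_pow, mul_pow]
    ring
  · intro i hi
    have lt_of_notMem : β < i := by simpa using hi
    rw [PowerSeries.coeff_mk, evalParam_coeff, Nat.descFactorial_eq_zero_iff_lt.2 lt_of_notMem]
    simp

theorem evalSeries_binomSeries [IsUltrametricDist Ω] [CompleteSpace Ω] (hφ₀ : ∀ x, ‖φ₀ x‖ ≤ 1)
    (h2 : ‖(2 : Ω)‖ < 1) {t : ι → Ω} (ht : ∀ l, ‖t l‖ ≤ 1) {z : Fin n → Ω} (hz : ∀ j, ‖z j‖ ≤ 1)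
    (a₀ : ℕ) {b : ι} {β : ℕ} (hβ : t b = β) (j : Fin n) :
    evalSeries (evalParam φ₀ t z) 2 (binomSeries a₀ b j) = (1 + 2 * z j) ^ (a₀ + 2 * β) := by
  have eval_eq := evalSeriesHom_apply (norm_evalParam_le_one hφ₀ ht hz) h2
  have eval_base :
      evalSeries (evalParam φ₀ t z) 2 (1 + PowerSeries.X * PowerSeries.C (X j)) = 1 + 2 * z j := by
    rw [← eval_eq, map_add, map_one, map_mul, eval_eq, eval_eq]
    simp
  rw [binomSeries, ← eval_eq, map_mul, map_pow, eval_eq, eval_eq, eval_base,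
    evalSeries_mk_descPochhammer φ₀ hβ, pow_add]

end BinomSeries

section Coset

variable {Ω L : Type*} {n k : ℕ}

/-- The points of the coset `τ(ℚ ^ n) (1 + 2 O) ^ n`, for `z` in the unit polydisc `O ^ n`. -/
def cosetPoint [CommSemiring Ω] (τ : ℚ → Ω) (w : Fin n → ℚ) (z : Fin n → Ω) : Fin n → Ω :=
  fun j => τ (w j) * (1 + 2 * z j)

/-- The group `τ(ℚ ^ n) (1 + 2 O) ^ n`. -/
def scaleSubgroup [NormedField Ω] (n : ℕ) (τ : ℚ → Ω) : Set (Fin n → Ω) :=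
  {x | ∃ w z, (∀ j, ‖z j‖ ≤ 1) ∧ cosetPoint τ w z = x}

theorem prod_cosetPoint_pow [NormedField Ω] {τ : ℚ → Ω} (hτ : IsScale τ) (a : Fin n → ℕ)
    (w : Fin n → ℚ) (z : Fin n → Ω) :
    ∏ j, cosetPoint τ w z j ^ a j = τ (∑ j, a j * w j) * ∏ j, (1 + 2 * z j) ^ a j := by
  simp only [cosetPoint, mul_pow, Finset.prod_mul_distrib, hτ.sum, hτ.natCast_mul]

theorem cosetPoint_injective [NormedField Ω] [IsUltrametricDist Ω] {τ : ℚ → Ω} (hτ : IsScale τ)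
    (h2 : ‖(2 : Ω)‖ < 1) (h20 : (2 : Ω) ≠ 0) {w w' : Fin n → ℚ} {z z' : Fin n → Ω}
    (hz : ∀ j, ‖z j‖ ≤ 1) (hz' : ∀ j, ‖z' j‖ ≤ 1) (h : cosetPoint τ w z = cosetPoint τ w' z') :
    w = w' ∧ z = z' := by
  have norm_one_add (x : Ω) (hx : ‖x‖ ≤ 1) : ‖1 + 2 * x‖ = 1 := by
    have norm_lt : ‖2 * x‖ < ‖(1 : Ω)‖ := by
      rw [norm_mul, norm_one]
      exact mul_lt_one_of_nonneg_of_lt_one_left (norm_nonneg _) h2 hx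
    rw [IsUltrametricDist.norm_add_eq_max_of_norm_ne_norm norm_lt.ne', max_eq_left norm_lt.le,
      norm_one]
  have hw : w = w' := by
    funext j
    have hnorm := congrArg norm (congrFun h j)
    simp only [cosetPoint, norm_mul, norm_one_add _ (hz j), norm_one_add _ (hz' j), mul_one]
      at hnorm
    exact hτ.strictAnti_norm.injective hnorm
  subst hw
  refine ⟨rfl, funext fun j => ?_⟩
  exact mul_left_cancel₀ h20 (add_left_cancel (mul_left_cancel₀ (hτ.ne_zero _) (congrFun h j)))

/-- The weights of the parameters of a sparse system in a coset. The parameters `Sum.inl` are the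
halves of the exponents, and the parameters `Sum.inr` are the quotients of the terms of the `i`-th
equation by its term `μ i`. The exponent space contains, besides `w`, the values
`∑ j, α l j * w j`, so that the weights do not depend on `α`. -/
def cosetWeight (μ : Fin k → L) :
    (L × Fin n) ⊕ (Fin k × L) → Module.Dual ℚ ((Fin n → ℚ) × (L → ℚ)) :=
  Sum.elim 0 fun p =>
    (LinearMap.proj (R := ℚ) (φ := fun _ : L => ℚ) p.2 - LinearMap.proj (μ p.1)) ∘ₗ
      LinearMap.snd ℚ (Fin n → ℚ) (L → ℚ)

theorem convex_setOf_eq_sum (α : L → Fin n → ℕ) :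
    Convex ℚ {p : (Fin n → ℚ) × (L → ℚ) | ∀ l, p.2 l = ∑ j, α l j * p.1 j} := by
  intro x hx y hy s t _ _ _ l
  change s * x.2 l + t * y.2 l = ∑ j, (α l j : ℚ) * (s * x.1 j + t * y.1 j)
  simp only [hx l, hy l, Finset.mul_sum, ← Finset.sum_add_distrib]
  exact Finset.sum_congr rfl fun j _ => by ring

section CosetFamily

variable [NormedField Ω] [IsUltrametricDist Ω] {τ : ℚ → Ω} (hτ : IsScale τ) (h2 : ‖(2 : Ω)‖ < 1)
  (α : L → Fin n → ℕ) (b : Fin k → L → Ω) (μ : Fin k → L)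

/-- The family of parameters of the sparse system with exponents `α` and coefficients `b`, at those
points of the coset `τ(ℚ ^ n) (1 + 2 O) ^ n` where the term `μ i` dominates the `i`-th equation. -/
noncomputable def cosetFamily : MonomialFamily Ω (cosetWeight (n := n) μ) where
  base := 2
  scale := τ
  coeff := Sum.elim (fun p => (α p.1 p.2 / 2 : ℕ)) fun p => b p.1 p.2 / b p.1 (μ p.1)
  domain := {p | ∀ l, p.2 l = ∑ j, α l j * p.1 j} ∩ ⋂ (i) (l),
    {p | ‖τ (p.2 l) * b i l‖ ≤ ‖τ (p.2 (μ i)) * b i (μ i)‖}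
  norm_base_lt := h2
  isScale := hτ
  convex := (convex_setOf_eq_sum α).inter <| convex_iInter₂ fun i l =>
    hτ.convex_norm_mul_le
      (LinearMap.proj (R := ℚ) (φ := fun _ : L => ℚ) l ∘ₗ LinearMap.snd ℚ (Fin n → ℚ) (L → ℚ))
      (LinearMap.proj (R := ℚ) (φ := fun _ : L => ℚ) (μ i) ∘ₗ LinearMap.snd ℚ (Fin n → ℚ) (L → ℚ))
      (b i l) (b i (μ i))
  norm_le_one := by
    rintro p ⟨-, hp⟩ (⟨l, j⟩ | ⟨i, l⟩)
    · simpa [cosetWeight, hτ.zero] using IsUltrametricDist.norm_natCast_le_one Ω (α l j / 2)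
    · rw [Set.mem_iInter₂] at hp
      change ‖b i l / b i (μ i) * τ (p.2 l - p.2 (μ i))‖ ≤ 1
      rw [hτ.sub, div_mul_div_comm, mul_comm (b i l), mul_comm (b i (μ i)), norm_div]
      exact div_le_one_of_le₀ (hp i l) (norm_nonneg _)

theorem cosetFamily_param_inl (p : (Fin n → ℚ) × (L → ℚ)) (l : L) (j : Fin n) :
    (cosetFamily hτ h2 α b μ).param p (Sum.inl (l, j)) = (α l j / 2 : ℕ) := by
  simp [cosetFamily, MonomialFamily.param, cosetWeight, hτ.zero]

theorem cosetFamily_param_inr (p : (Fin n → ℚ) × (L → ℚ)) (i : Fin k) (l : L) :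
    (cosetFamily hτ h2 α b μ).param p (Sum.inr (i, l)) =
      b i l / b i (μ i) * (τ (p.2 l) / τ (p.2 (μ i))) :=
  congrArg _ (hτ.sub _ _)

theorem injOn_cosetPoint (h20 : (2 : Ω) ≠ 0) (φ₀ : ℤ_[2] →+* Ω)
    (J : Ideal (PowerSeries
      (MvPolynomial (Fin n) (MvPolynomial ((L × Fin n) ⊕ (Fin k × L)) ℤ_[2])))) :
    Set.InjOn (fun q => cosetPoint τ q.1.1 q.2) ((cosetFamily hτ h2 α b μ).zeros φ₀ J) := by
  rintro ⟨⟨w, v⟩, z⟩ ⟨⟨hv, -⟩, hz, -⟩ ⟨⟨w', v'⟩, z'⟩ ⟨⟨hv', -⟩, hz', -⟩ h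
  obtain ⟨rfl, rfl⟩ := cosetPoint_injective hτ h2 h20 hz hz' h
  obtain rfl : v = v' := funext fun l => (hv l).trans (hv' l).symm
  rfl

theorem exists_mem_domain_cosetFamily [Finite L] [Nonempty L] (w : Fin n → ℚ) :
    ∃ μ : Fin k → L, (∀ i, b i (μ i) = 0 → ∀ l, b i l = 0) ∧
      (w, fun l => ∑ j, α l j * w j) ∈ (cosetFamily hτ h2 α b μ).domain := by
  choose μ hμ using fun i => Finite.exists_max fun l => ‖τ (∑ j, α l j * w j) * b i l‖
  refine ⟨μ, fun i h0 l => ?_, fun l => rfl, Set.mem_iInter₂.2 hμ⟩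
  have norm_le := hμ i l
  rw [h0, mul_zero, norm_zero, norm_le_zero_iff] at norm_le
  exact (mul_eq_zero.1 norm_le).resolve_left (hτ.ne_zero _)

end CosetFamily

variable [Fintype L]

/-- The zero set of the system of the polynomials `∑ l, c i l * x ^ α l`. -/
def sparseZeros [CommSemiring Ω] (α : L → Fin n → ℕ) (c : Fin k → L → Ω) : Set (Fin n → Ω) :=
  {x | ∀ i, ∑ l, c i l * ∏ j, x j ^ α l j = 0}

/-- The power series that represents the `i`-th equation divided by its term `μ i`, for exponents
with parities `a₀`. -/
noncomputable def cosetSeries (a₀ : L → Fin n → ℕ) (i : Fin k) :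
    PowerSeries (MvPolynomial (Fin n) (MvPolynomial ((L × Fin n) ⊕ (Fin k × L)) ℤ_[2])) :=
  ∑ l, PowerSeries.C (C (X (Sum.inr (i, l)))) * ∏ j, binomSeries (a₀ l j) (Sum.inl (l, j)) j

theorem evalSeries_cosetSeries [NormedField Ω] [IsUltrametricDist Ω] [CompleteSpace Ω]
    {φ₀ : ℤ_[2] →+* Ω} (hφ₀ : ∀ x, ‖φ₀ x‖ ≤ 1) (h2 : ‖(2 : Ω)‖ < 1)
    {t : (L × Fin n) ⊕ (Fin k × L) → Ω} (ht : ∀ l, ‖t l‖ ≤ 1) {z : Fin n → Ω}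
    (hz : ∀ j, ‖z j‖ ≤ 1) {α : L → Fin n → ℕ}
    (hα : ∀ l j, t (Sum.inl (l, j)) = (α l j / 2 : ℕ)) (i : Fin k) :
    evalSeries (evalParam φ₀ t z) 2 (cosetSeries (fun l j => α l j % 2) i) =
      ∑ l, t (Sum.inr (i, l)) * ∏ j, (1 + 2 * z j) ^ α l j := by
  have eval_eq := evalSeriesHom_apply (norm_evalParam_le_one hφ₀ ht hz) h2
  rw [cosetSeries, ← eval_eq, map_sum]
  refine Finset.sum_congr rfl fun l _ => ?_
  rw [map_mul, map_prod, eval_eq, evalSeries_C, evalParam_C]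
  simp only [eval_eq, evalSeries_binomSeries φ₀ hφ₀ h2 ht hz _ (hα l _), Nat.mod_add_div]
  simp

section Zeros

variable [NormedField Ω] [IsUltrametricDist Ω] [CompleteSpace Ω] {φ₀ : ℤ_[2] →+* Ω}
  (hφ₀ : ∀ x, ‖φ₀ x‖ ≤ 1) {τ : ℚ → Ω} (hτ : IsScale τ) (h2 : ‖(2 : Ω)‖ < 1) {α : L → Fin n → ℕ}
  {c : Fin k → L → Ω} {μ : Fin k → L}
include hφ₀

theorem sum_cosetPoint_eq_mul_evalSeries {i : Fin k} (hμ : c i (μ i) ≠ 0)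
    {p : (Fin n → ℚ) × (L → ℚ)} (hp : p ∈ (cosetFamily hτ h2 α c μ).domain) {z : Fin n → Ω}
    (hz : ∀ j, ‖z j‖ ≤ 1) :
    ∑ l, c i l * ∏ j, cosetPoint τ p.1 z j ^ α l j = τ (p.2 (μ i)) * c i (μ i) *
      evalSeries (evalParam φ₀ ((cosetFamily hτ h2 α c μ).param p) z) 2
        (cosetSeries (fun l j => α l j % 2) i) := by
  rw [evalSeries_cosetSeries hφ₀ h2 ((cosetFamily hτ h2 α c μ).norm_param_le_one hp) hz
    (cosetFamily_param_inl hτ h2 α c μ p), Finset.mul_sum]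
  refine Finset.sum_congr rfl fun l _ => ?_
  have hτμ := hτ.ne_zero (p.2 (μ i))
  rw [cosetFamily_param_inr, prod_cosetPoint_pow hτ, ← hp.1 l]
  field_simp

theorem evalSeries_cosetSeries_eq_zero_iff {i : Fin k} (hμ : c i (μ i) = 0 → ∀ l, c i l = 0)
    {p : (Fin n → ℚ) × (L → ℚ)} (hp : p ∈ (cosetFamily hτ h2 α c μ).domain) {z : Fin n → Ω}
    (hz : ∀ j, ‖z j‖ ≤ 1) :
    evalSeries (evalParam φ₀ ((cosetFamily hτ h2 α c μ).param p) z) 2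
        (cosetSeries (fun l j => α l j % 2) i) = 0 ↔
      ∑ l, c i l * ∏ j, cosetPoint τ p.1 z j ^ α l j = 0 := by
  by_cases h0 : c i (μ i) = 0
  · rw [evalSeries_cosetSeries hφ₀ h2 ((cosetFamily hτ h2 α c μ).norm_param_le_one hp) hz
      (cosetFamily_param_inl hτ h2 α c μ p)]
    simp [cosetFamily_param_inr, hμ h0]
  · rw [sum_cosetPoint_eq_mul_evalSeries hφ₀ hτ h2 h0 hp hz, mul_eq_zero,
      or_iff_right (mul_ne_zero (hτ.ne_zero _) h0)]

theorem mem_zeros_cosetFamily_iff (hμ : ∀ i, c i (μ i) = 0 → ∀ l, c i l = 0)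
    (p : (Fin n → ℚ) × (L → ℚ)) (z : Fin n → Ω) :
    (p, z) ∈ (cosetFamily hτ h2 α c μ).zeros φ₀
        (Ideal.span (Set.range (cosetSeries fun l j => α l j % 2))) ↔
      p ∈ (cosetFamily hτ h2 α c μ).domain ∧ (∀ j, ‖z j‖ ≤ 1) ∧
        cosetPoint τ p.1 z ∈ sparseZeros α c := by
  refine and_congr_right fun hp => and_congr_right fun hz => ?_
  have eval_eq := evalSeriesHom_apply
    (norm_evalParam_le_one hφ₀ ((cosetFamily hτ h2 α c μ).norm_param_le_one hp) hz) h2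
  calc (∀ f ∈ Ideal.span (Set.range (cosetSeries fun l j => α l j % 2)),
        evalSeries (evalParam φ₀ ((cosetFamily hτ h2 α c μ).param p) z) 2 f = 0)
      ↔ ∀ i, evalSeries (evalParam φ₀ ((cosetFamily hτ h2 α c μ).param p) z) 2
          (cosetSeries (fun l j => α l j % 2) i) = 0 := by
        simp only [← eval_eq, ← RingHom.mem_ker]
        exact Ideal.span_le.trans Set.range_subset_iff
    _ ↔ cosetPoint τ p.1 z ∈ sparseZeros α c :=
        forall_congr' fun i => evalSeries_cosetSeries_eq_zero_iff hφ₀ hτ h2 (hμ i) hp hz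

end Zeros

variable [NontriviallyNormedField Ω] [IsUltrametricDist Ω] [CompleteSpace Ω] [IsAlgClosed Ω]
  {φ₀ : ℤ_[2] →+* Ω} (hφ₀ : ∀ x, ‖φ₀ x‖ ≤ 1) (h2 : ‖(2 : Ω)‖ < 1)
include hφ₀

theorem exists_ncard_zeros_cosetFamily_le (n k : ℕ) (L : Type) [Fintype L] :
    ∃ N, ∀ (τ : ℚ → Ω) (hτ : IsScale τ) (α : L → Fin n → ℕ) (c : Fin k → L → Ω) (μ : Fin k → L),
      let Z := (cosetFamily hτ h2 α c μ).zeros φ₀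
        (Ideal.span (Set.range (cosetSeries fun l j => α l j % 2)))
      Z.Finite → Z.ncard ≤ N := by
  classical
  have hasBound (a₀ : L → Fin n → Fin 2) (μ : Fin k → L) :
      HasBound φ₀ (Ideal.span (Set.range (cosetSeries fun l j => a₀ l j)))
        fun _ : MonomialFamily Ω (cosetWeight μ) => True :=
    uniformBound hφ₀ _ n _ (Nat.lt_succ_self _) _ _ _
  choose N hN using hasBound
  refine ⟨∑ a₀, ∑ μ, N a₀ μ, fun τ hτ α c μ hfin => ?_⟩
  let a₀ : L → Fin n → Fin 2 := fun l j => ⟨α l j % 2, Nat.mod_lt _ two_pos⟩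
  calc _ ≤ N a₀ μ := hN a₀ μ (cosetFamily hτ h2 α c μ) trivial hfin
    _ ≤ ∑ μ, N a₀ μ := Finset.single_le_sum (fun _ _ => Nat.zero_le _) (Finset.mem_univ μ)
    _ ≤ ∑ a₀, ∑ μ, N a₀ μ := Finset.single_le_sum (f := fun a₀ => ∑ μ, N a₀ μ)
      (fun _ _ => Nat.zero_le _) (Finset.mem_univ a₀)

include h2 in
theorem exists_ncard_sparseZeros_inter_le (h20 : (2 : Ω) ≠ 0) (n k : ℕ) (L : Type) [Fintype L]
    [Nonempty L] :
    ∃ N, ∀ τ : ℚ → Ω, IsScale τ → ∀ (α : L → Fin n → ℕ) (c : Fin k → L → Ω),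
      (sparseZeros α c ∩ scaleSubgroup n τ).Finite →
        (sparseZeros α c ∩ scaleSubgroup n τ).ncard ≤ N := by
  classical
  obtain ⟨N, hN⟩ := exists_ncard_zeros_cosetFamily_le hφ₀ h2 n k L
  refine ⟨∑ _μ : Fin k → L, N, fun τ hτ α c hfin => ?_⟩
  let Z (μ : Fin k → L) := (cosetFamily hτ h2 α c μ).zeros φ₀
    (Ideal.span (Set.range (cosetSeries fun l j => α l j % 2)))
  let M := Finset.univ.filter fun μ : Fin k → L => ∀ i, c i (μ i) = 0 → ∀ l, c i l = 0
  have image_subset {μ : Fin k → L} (hμ : μ ∈ M) : (fun q => cosetPoint τ q.1.1 q.2) '' Z μ ⊆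
      sparseZeros α c ∩ scaleSubgroup n τ := by
    rintro _ ⟨⟨p, z⟩, hq, rfl⟩
    obtain ⟨-, hz, hx⟩ :=
      (mem_zeros_cosetFamily_iff hφ₀ hτ h2 (Finset.mem_filter.1 hμ).2 p z).1 hq
    exact ⟨hx, p.1, z, hz, rfl⟩
  have finite_zeros {μ : Fin k → L} (hμ : μ ∈ M) : (Z μ).Finite :=
    (hfin.subset (image_subset hμ)).of_finite_image (injOn_cosetPoint hτ h2 α c μ h20 φ₀ _)
  have subset_iUnion : sparseZeros α c ∩ scaleSubgroup n τ ⊆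
      ⋃ μ ∈ M, (fun q => cosetPoint τ q.1.1 q.2) '' Z μ := by
    rintro _ ⟨hx, w, z, hz, rfl⟩
    obtain ⟨μ, hμ, hdomain⟩ := exists_mem_domain_cosetFamily hτ h2 α c w
    exact Set.mem_biUnion (Finset.mem_filter.2 ⟨Finset.mem_univ μ, hμ⟩)
      ⟨_, (mem_zeros_cosetFamily_iff hφ₀ hτ h2 hμ _ z).2 ⟨hdomain, hz, hx⟩, rfl⟩
  calc (sparseZeros α c ∩ scaleSubgroup n τ).ncard
      ≤ (⋃ μ ∈ M, (fun q => cosetPoint τ q.1.1 q.2) '' Z μ).ncard :=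
        Set.ncard_le_ncard subset_iUnion (M.finite_toSet.biUnion fun μ hμ =>
          (finite_zeros hμ).image _)
    _ ≤ ∑ μ ∈ M, ((fun q => cosetPoint τ q.1.1 q.2) '' Z μ).ncard :=
        Finset.set_ncard_biUnion_le _ _
    _ ≤ ∑ _μ ∈ M, N := Finset.sum_le_sum fun μ hμ =>
        (Set.ncard_image_le (finite_zeros hμ)).trans (hN τ hτ α c μ (finite_zeros hμ))
    _ ≤ ∑ _μ : Fin k → L, N := Finset.sum_le_sum_of_subset (Finset.filter_subset _ _)

end Coset

/-! ### Points of a variety near a given point -/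

section SpecializedRoots

variable {F : Type*} [NontriviallyNormedField F]

section Family

variable {σ : Type*} {p : Polynomial (MvPolynomial σ F)}
  {y₀ : σ → F} {r : (σ → F) → F}

theorem continuous_eval_map_eval (x : F) : Continuous fun y => (p.map (eval y)).eval x := by
  simp only [Polynomial.eval_map, Polynomial.eval₂_eq_sum_range]
  exact continuous_finsetSum _ fun i _ => (MvPolynomial.continuous_eval _).mul continuous_const

open Asymptotics in
theorem isBigO_one_of_isRoot_map_eval (hp : p.Monic) (hr : ∀ y, (p.map (eval y)).IsRoot (r y)) :
    r =O[𝓝 y₀] fun _ => (1 : ℝ) := by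
  let S (y : σ → F) := ∑ i ∈ Finset.range p.natDegree, ‖eval y (p.coeff i)‖₊
  have continuous_bound : Continuous fun y => ((S y + 1 : NNReal) : ℝ) :=
    NNReal.continuous_coe.comp <| (continuous_finsetSum _ fun i _ =>
      (MvPolynomial.continuous_eval _).nnnorm).add continuous_const
  have norm_le (y) : ‖r y‖₊ ≤ S y + 1 := by
    have hpy := hp.map (eval y)
    refine ((hr y).norm_lt_cauchyBound hpy.ne_zero).le.trans ?_
    rw [Polynomial.cauchyBound, hpy.leadingCoeff, nnnorm_one, div_one, hp.natDegree_map]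
    refine add_le_add_left (Finset.sup_le fun i hi => ?_) 1
    rw [Polynomial.coeff_map]
    exact Finset.single_le_sum (f := fun i => ‖eval y (p.coeff i)‖₊) (fun _ _ => zero_le) hi
  refine IsBigO.trans (IsBigO.of_bound 1 (Eventually.of_forall fun y => ?_))
    ((continuous_bound.tendsto y₀).isBigO_one ℝ)
  rw [one_mul, Real.norm_of_nonneg (NNReal.coe_nonneg _)]
  exact norm_le y

open Asymptotics in
theorem tendsto_eval_map_eval_of_isRoot (hp : p.Monic)
    (hr : ∀ y, (p.map (eval y)).IsRoot (r y)) :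
    Tendsto (fun y => (p.map (eval y₀)).eval (r y)) (𝓝 y₀) (𝓝 0) := by
  have eval_eq_sum : (fun y => (p.map (eval y₀)).eval (r y)) = fun y =>
      ∑ i ∈ Finset.range (p.natDegree + 1),
        (eval y₀ (p.coeff i) - eval y (p.coeff i)) * r y ^ i := by
    funext y
    have hry := (hr y).eq_zero
    rw [Polynomial.eval_map, Polynomial.eval₂_eq_sum_range] at hry ⊢
    simp only [sub_mul, Finset.sum_sub_distrib, hry, sub_zero]
  rw [eval_eq_sum, ← isLittleO_one_iff ℝ]
  refine IsLittleO.fun_sum fun i _ => ?_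
  have coeff_sub : (fun y => eval y₀ (p.coeff i) - eval y (p.coeff i)) =o[𝓝 y₀]
      fun _ => (1 : ℝ) := by
    rw [isLittleO_one_iff]
    simpa using ((MvPolynomial.continuous_eval (p.coeff i)).tendsto y₀).const_sub
      (eval y₀ (p.coeff i))
  simpa using coeff_sub.mul_isBigO ((isBigO_one_of_isRoot_map_eval hp hr).pow i)

end Family

theorem exists_isRoot_norm_sub_pow_le {E : Type*} [NormedField E] [IsAlgClosed E]
    {p : Polynomial E} (hp : p.Monic) (hd : p.natDegree ≠ 0) (x : E) :
    ∃ r, p.IsRoot r ∧ ‖r - x‖ ^ p.natDegree ≤ ‖p.eval x‖ := by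
  classical
  have hsplits := IsAlgClosed.splits p
  have card_roots : p.roots.card = p.natDegree := hsplits.natDegree_eq_card_roots.symm
  have roots_nonempty : p.roots.toFinset.Nonempty := by
    rw [Multiset.toFinset_nonempty, ← Multiset.card_pos, card_roots]
    exact Nat.pos_of_ne_zero hd
  obtain ⟨r, hr, hmin⟩ :=
    Finset.exists_min_image p.roots.toFinset (fun r => ‖r - x‖) roots_nonempty
  refine ⟨r, Polynomial.isRoot_of_mem_roots (Multiset.mem_toFinset.1 hr), ?_⟩
  calc ‖r - x‖ ^ p.natDegree
      = (p.roots.map fun _ => ‖r - x‖).prod := by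
        rw [← card_roots, ← Multiset.prod_replicate, ← Multiset.map_const']
    _ ≤ (p.roots.map fun a => ‖a - x‖).prod :=
        Multiset.prod_map_le_prod_map₀ _ _ (fun _ _ => norm_nonneg _)
          fun a ha => hmin a (Multiset.mem_toFinset.2 ha)
    _ = ‖p.eval x‖ := by
        conv_rhs => rw [hsplits.eq_prod_roots_of_monic hp, Polynomial.eval_multiset_prod,
          Multiset.map_map, ← normHom_apply, map_multiset_prod, Multiset.map_map]
        simp [norm_sub_rev]

theorem tendsto_zero_of_pow {α : Type*} {l : Filter α} {f : α → F} {d : ℕ}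
    (h : Tendsto (fun y => f y ^ d) l (𝓝 0)) : Tendsto f l (𝓝 0) := by
  rw [NormedAddGroup.tendsto_nhds_zero] at h ⊢
  intro ε hε
  filter_upwards [h _ (pow_pos hε d)] with y hy
  rw [norm_pow] at hy
  exact lt_of_pow_lt_pow_left₀ d hε.le hy

open Asymptotics in
theorem tendsto_of_tendsto_prod_eval {α σ : Type*} [Fintype σ] {l : Filter α} {x : σ → α → F}
    {q : σ → Polynomial F} {e : F} (hx : ∀ i, x i =O[l] fun _ => (1 : ℝ))
    (he : Tendsto (fun y => ∏ i, (q i).eval (x i y)) l (𝓝 e)) (he0 : e ≠ 0) {j : σ} {ζ : F}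
    {a : ℕ} (hj : Tendsto (fun y => (x j y - ζ) ^ a * (q j).eval (x j y)) l (𝓝 0)) :
    Tendsto (x j) l (𝓝 ζ) := by
  classical
  have eval_isBigO (i) : (fun y => (q i).eval (x i y)) =O[l] fun _ => (1 : ℝ) := by
    simp only [Polynomial.eval_eq_sum_range]
    refine IsBigO.fun_sum fun d _ => ?_
    simpa using ((hx i).pow d).const_mul_left ((q i).coeff d)
  have prod_isBigO : (fun y => ∏ i ∈ Finset.univ.erase j, (q i).eval (x i y)) =O[l]
      fun _ => (1 : ℝ) := by
    simpa using IsBigO.finsetProd (s := Finset.univ.erase j) fun i _ => eval_isBigO i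
  have pow_mul_prod : Tendsto (fun y => (x j y - ζ) ^ a * ∏ i, (q i).eval (x i y)) l (𝓝 0) := by
    simp_rw [← Finset.mul_prod_erase _ _ (Finset.mem_univ j), ← mul_assoc]
    rw [← isLittleO_one_iff ℝ] at hj ⊢
    simpa using hj.mul_isBigO prod_isBigO
  refine tendsto_sub_nhds_zero_iff.1 (tendsto_zero_of_pow (d := a) ?_)
  refine (zero_div e ▸ pow_mul_prod.div he he0).congr' ?_
  filter_upwards [he.eventually_ne he0] with y hy using mul_div_cancel_right₀ _ hy

theorem frequently_eval_ne_zero {s : Type*} [Finite s] {u : MvPolynomial s F} (hu : u ≠ 0)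
    (y₀ : s → F) :
    ∃ᶠ y in 𝓝 y₀, eval y u ≠ 0 := by
  cases nonempty_fintype s
  intro hev
  simp only [ne_eq, not_not] at hev
  obtain ⟨ε, hε, hball⟩ := Metric.eventually_nhds_iff_ball.1 hev
  refine hu (MvPolynomial.funext_set (fun i => Metric.ball (y₀ i) ε)
    (fun i => infinite_of_mem_nhds (y₀ i) (Metric.ball_mem_nhds _ hε)) fun y hy => ?_)
  rw [map_zero]
  exact hball y (by rwa [ball_pi _ hε])

end SpecializedRoots

section PointsOfIntegralExtension

variable {F A B : Type*} [Field F] [CommRing A] [Algebra F A] [CommRing B] [Algebra F B]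
  [Algebra A B]

theorem isRoot_map_minpoly {φ : A →ₐ[F] F} {Φ : B →ₐ[F] F}
    (hΦ : ∀ a, Φ (algebraMap A B a) = φ a) (b : B) :
    ((minpoly A b).map (φ : A →+* F)).IsRoot (Φ b) := by
  have hcomp : (φ : A →+* F) = (Φ : B →+* F).comp (algebraMap A B) :=
    RingHom.ext fun a => (hΦ a).symm
  rw [Polynomial.IsRoot.def, hcomp, ← Polynomial.map_map, Polynomial.eval_map,
    ← RingHom.coe_coe Φ, Polynomial.eval₂_hom, Polynomial.eval_map, ← Polynomial.aeval_def,
    minpoly.aeval, map_zero]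

variable [IsScalarTower F A B] [IsDomain A] [IsIntegrallyClosed A] [IsDomain B]
  [Algebra.IsIntegral A B] [Module.IsTorsionFree A B] [IsAlgClosed F]

theorem exists_algHom_of_isRoot_map_minpoly {b : B} {φ : A →ₐ[F] F} {r : F}
    (hr : ((minpoly A b).map (φ : A →+* F)).IsRoot r) :
    ∃ Φ : B →ₐ[F] F, (∀ a, Φ (algebraMap A B a) = φ a) ∧ Φ b = r := by
  have aeval_isIntegral : (Polynomial.aeval (R := A) b).toRingHom.IsIntegral := by
    refine RingHom.IsIntegral.tower_top Polynomial.C _ ?_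
    convert algebraMap_isIntegral_iff.2 (inferInstance : Algebra.IsIntegral A B) using 1
    ext a
    simp
  obtain ⟨Φ, hΦ⟩ := exists_comp_eq_of_isIntegral aeval_isIntegral
      (φ := Polynomial.eval₂RingHom (φ : A →+* F) r) <| by
    rw [minpoly.ker_eval (Algebra.IsIntegral.isIntegral b), Ideal.span_singleton_le_iff_mem,
      RingHom.mem_ker]
    rwa [Polynomial.IsRoot.def, Polynomial.eval_map] at hr
  have hΦ' (f : Polynomial A) : Φ (Polynomial.aeval b f) = f.eval₂ (φ : A →+* F) r :=
    RingHom.congr_fun hΦ f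
  have hΦA (a : A) : Φ (algebraMap A B a) = φ a := by simpa using hΦ' (Polynomial.C a)
  refine ⟨⟨Φ, fun c => ?_⟩, hΦA, by simpa using hΦ' Polynomial.X⟩
  simpa [IsScalarTower.algebraMap_apply F A B] using hΦA (algebraMap F A c)

end PointsOfIntegralExtension

section PointsNear

variable {F : Type*} [NontriviallyNormedField F] [IsAlgClosed F] {s : Type*} {B : Type*}
  [CommRing B] [IsDomain B] [Algebra F B] [Algebra (MvPolynomial s F) B]
  [IsScalarTower F (MvPolynomial s F) B] [Algebra.IsIntegral (MvPolynomial s F) B]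
  [Module.IsTorsionFree (MvPolynomial s F) B]

theorem exists_algHom_tendsto_apply {Ψ : B →ₐ[F] F} {y₀ : s → F}
    (hΨ : ∀ a : MvPolynomial s F, Ψ (algebraMap _ B a) = aeval y₀ a) (b : B) :
    ∃ Φ : (s → F) → B →ₐ[F] F, (∀ y a, Φ y (algebraMap (MvPolynomial s F) B a) = aeval y a) ∧
      Tendsto (fun y => Φ y b) (𝓝 y₀) (𝓝 (Ψ b)) := by
  let p := minpoly (MvPolynomial s F) b
  have hb : IsIntegral (MvPolynomial s F) b := Algebra.IsIntegral.isIntegral b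
  have natDegree_map (y) : (p.map (eval y)).natDegree = p.natDegree :=
    (minpoly.monic hb).natDegree_map _
  have exists_near (y : s → F) : ∃ Φ : B →ₐ[F] F,
      (∀ a, Φ (algebraMap (MvPolynomial s F) B a) = aeval y a) ∧
        ‖Φ b - Ψ b‖ ^ p.natDegree ≤ ‖(p.map (eval y)).eval (Ψ b)‖ := by
    obtain ⟨r, hr, hr'⟩ := exists_isRoot_norm_sub_pow_le ((minpoly.monic hb).map (eval y))
      (natDegree_map y ▸ (minpoly.natDegree_pos hb).ne') (Ψ b)
    obtain ⟨Φ, hΦ, rfl⟩ := exists_algHom_of_isRoot_map_minpoly (φ := aeval y) hr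
    exact ⟨Φ, hΦ, natDegree_map y ▸ hr'⟩
  choose Φ hΦ hΦb using exists_near
  refine ⟨Φ, hΦ, tendsto_sub_nhds_zero_iff.1 (tendsto_zero_of_pow (d := p.natDegree) ?_)⟩
  refine squeeze_zero_norm (fun y => (norm_pow _ _).trans_le (hΦb y)) ?_
  have hroot : (p.map (eval y₀)).eval (Ψ b) = 0 := isRoot_map_minpoly (φ := aeval y₀) hΨ b
  simpa only [hroot, norm_zero] using (continuous_eval_map_eval (p := p) (Ψ b)).norm.tendsto y₀

-- `e` separates the prescribed point from the other points over `y₀` near which the `b j` could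
-- stay: `q j` is the factor of the specialised minimal polynomial of `b j` prime to `X - Ψ (b j)`.
theorem exists_algHom_tendsto {σ : Type*} [Finite σ] {Ψ : B →ₐ[F] F} {y₀ : s → F}
    (hΨ : ∀ a : MvPolynomial s F, Ψ (algebraMap _ B a) = aeval y₀ a) (b : σ → B) :
    ∃ Φ : (s → F) → B →ₐ[F] F, (∀ y a, Φ y (algebraMap (MvPolynomial s F) B a) = aeval y a) ∧
      Tendsto (fun y j => Φ y (b j)) (𝓝 y₀) (𝓝 fun j => Ψ (b j)) := by
  cases nonempty_fintype σ
  let p (j : σ) := minpoly (MvPolynomial s F) (b j)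
  have hp (j) : (p j).Monic := minpoly.monic (Algebra.IsIntegral.isIntegral _)
  have exists_factor (j) : ∃ q : Polynomial F, q.eval (Ψ (b j)) ≠ 0 ∧ ∃ a : ℕ,
      (p j).map (eval y₀) = (Polynomial.X - Polynomial.C (Ψ (b j))) ^ a * q := by
    obtain ⟨q, hq, hdvd⟩ := Polynomial.exists_eq_pow_rootMultiplicity_mul_and_not_dvd _
      ((hp j).map (eval y₀)).ne_zero (Ψ (b j))
    exact ⟨q, fun h => hdvd (Polynomial.dvd_iff_isRoot.2 h), _, hq⟩
  choose q hq a hpq using exists_factor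
  let e : B := ∏ j, Polynomial.aeval (b j) (q j)
  have apply_e (Φ : B →ₐ[F] F) : Φ e = ∏ j, (q j).eval (Φ (b j)) := by
    simp only [e, map_prod, ← Polynomial.aeval_algHom_apply, Polynomial.coe_aeval_eq_eval]
  obtain ⟨Φ, hΦ, hΦe⟩ := exists_algHom_tendsto_apply hΨ e
  have hroot (j y) : ((p j).map (eval y)).IsRoot (Φ y (b j)) :=
    isRoot_map_minpoly (φ := aeval y) (hΦ y) (b j)
  refine ⟨Φ, hΦ, tendsto_pi_nhds.2 fun j => ?_⟩
  simp only [apply_e] at hΦe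
  refine tendsto_of_tendsto_prod_eval (q := q)
    (fun i => isBigO_one_of_isRoot_map_eval (hp i) (hroot i)) hΦe
    (Finset.prod_ne_zero_iff.2 fun i _ => hq i) (a := a j) ?_
  simpa [hpq] using tendsto_eval_map_eval_of_isRoot (y₀ := y₀) (hp j) (hroot j)

end PointsNear

theorem frequently_eval_eq_zero_of_ker {F B σ : Type*} [NontriviallyNormedField F]
    [IsAlgClosed F] [CommRing B] [IsDomain B] [Algebra F B] [Algebra.FiniteType F B] [Finite σ]
    (π : MvPolynomial σ F →ₐ[F] B) (Ψ : B →ₐ[F] F) {h : MvPolynomial σ F} (hh : π h ≠ 0) :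
    ∃ᶠ x in 𝓝 fun j => Ψ (π (X j)), (∀ f, π f = 0 → eval x f = 0) ∧ eval x h ≠ 0 := by
  obtain ⟨s, g, ginj, gint⟩ := exists_integral_inj_algHom_of_fg F B
  let A := MvPolynomial (Fin s) F
  let : Algebra A B := g.toAlgebra
  have : IsScalarTower F A B := .of_algebraMap_eq' g.comp_algebraMap.symm
  have : Algebra.IsIntegral A B := ⟨gint⟩
  have : Module.IsTorsionFree A B := Module.isTorsionFree_iff_algebraMap_injective.2 ginj
  let y₀ (i : Fin s) : F := Ψ (g (X i))
  have hΨ (a : A) : Ψ (g a) = aeval y₀ a :=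
    DFunLike.congr_fun (MvPolynomial.algHom_ext (f := Ψ.comp g) (g := aeval y₀) fun i => by
      simp [y₀]) a
  obtain ⟨Φ, hΦ, hΦX⟩ := exists_algHom_tendsto hΨ fun j => π (X j)
  have apply_π (y) (f : MvPolynomial σ F) : Φ y (π f) = eval (fun j => Φ y (π (X j))) f :=
    DFunLike.congr_fun (MvPolynomial.algHom_ext (f := (Φ y).comp π) (g := aeval _) fun i =>
      (aeval_X (fun j => Φ y (π (X j))) i).symm) f
  obtain ⟨u, hu, c, huc⟩ := (Algebra.IsIntegral.isIntegral (R := A) (π h)).isAlgebraic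
    |>.exists_nonzero_dvd (mem_nonZeroDivisors_of_ne_zero hh)
  refine hΦX.frequently ((frequently_eval_ne_zero hu y₀).mono fun y hy =>
    ⟨fun f hf => by rw [← apply_π, hf, map_zero], fun hzero => hy ?_⟩)
  calc eval y u = Φ y (algebraMap A B u) := (hΦ y u).symm
    _ = 0 := by rw [huc, map_mul, apply_π, hzero, zero_mul]

theorem frequently_mem_of_isPrime {F : Type*} [NontriviallyNormedField F] [IsAlgClosed F]
    {σ : Type*} [Finite σ] {P : Ideal (MvPolynomial σ F)} [P.IsPrime] {ζ : σ → F}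
    (hζ : ∀ f ∈ P, eval ζ f = 0) {h : MvPolynomial σ F} (hh : h ∉ P) :
    ∃ᶠ x in 𝓝 ζ, (∀ f ∈ P, eval x f = 0) ∧ eval x h ≠ 0 := by
  have hfreq := frequently_eval_eq_zero_of_ker (Ideal.Quotient.mkₐ F P)
    (Ideal.Quotient.liftₐ P (aeval ζ) hζ) (mt Ideal.Quotient.eq_zero_iff_mem.1 hh)
  have hζX (j : σ) : Ideal.Quotient.liftₐ P (aeval ζ) hζ (Ideal.Quotient.mk P (X j)) = ζ j :=
    (Ideal.Quotient.lift_mk P _ hζ).trans (aeval_X ζ j)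
  simpa [Ideal.Quotient.eq_zero_iff_mem, hζX] using hfreq

/-! ### Isolated zeros, algebraically -/

/-- Algebraic isolatedness: `x` is a zero of the system `G`, and every `X j - x j` is nilpotent in
the local ring at `x` of the scheme defined by `G`. In contrast to `IsIsolatedRoot` this refers to
no topology, hence can be transported along embeddings of fields. -/
def IsAlgIsolatedZero {F σ κ : Type*} [Field F] (G : κ → MvPolynomial σ F) (x : σ → F) : Prop :=
  (∀ b, eval x (G b) = 0) ∧
    ∀ j, ∃ g k, eval x g ≠ 0 ∧ g * (X j - C (x j)) ^ k ∈ Ideal.span (Set.range G)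

theorem isAlgIsolatedZero_of_isIsolatedRoot {F : Type*} [NontriviallyNormedField F] [IsAlgClosed F]
    {k n : ℕ} {G : Fin k → MvPolynomial (Fin n) F} {x : Fin n → F} (h : IsIsolatedRoot G x) :
    IsAlgIsolatedZero G x := by
  refine ⟨h.1, fun j => ?_⟩
  by_contra! hj
  let M : Submonoid (MvPolynomial (Fin n) F) :=
    { carrier := {f | ∃ g k, eval x g ≠ 0 ∧ f = g * (X j - C (x j)) ^ k}
      one_mem' := ⟨1, 0, by simp, by simp⟩
      mul_mem' := by
        rintro _ _ ⟨g, k, hg, rfl⟩ ⟨g', k', hg', rfl⟩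
        exact ⟨g * g', k + k', by simp [hg, hg'], by ring⟩ }
  obtain ⟨P, hP, span_le, hPM⟩ := Ideal.exists_le_prime_disjoint (Ideal.span (Set.range G)) M <|
    Set.disjoint_left.2 <| by rintro _ hf ⟨g, k, hg, rfl⟩; exact hj g k hg hf
  rw [Set.disjoint_left] at hPM
  have hPx (f) (hf : f ∈ P) : eval x f = 0 := by
    by_contra hfx
    exact hPM hf ⟨f, 0, hfx, by simp⟩
  have X_sub_notMem : X j - C (x j) ∉ P := fun hX => hPM hX ⟨1, 1, by simp, by simp⟩
  refine frequently_mem_of_isPrime hPx X_sub_notMem ?_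
  have not_near := mem_nhdsWithin_iff_eventually.1 (Filter.empty_mem_iff_bot.2 h.2)
  filter_upwards [not_near] with y hy hyP
  refine hy ⟨fun i => hyP.1 _ (span_le (Ideal.subset_span ⟨i, rfl⟩)), ?_⟩
  rintro rfl
  exact hyP.2 (by simp)

section BaseChange

variable {K L σ κ : Type*} [Field K] [Field L]

theorem eval_map_comp (φ : K →+* L) (x : σ → K) (p : MvPolynomial σ K) :
    eval (φ ∘ x) (p.map φ) = φ (eval x p) := by
  rw [eval_map, eval₂_comp]

theorem IsAlgIsolatedZero.map (φ : K →+* L) {G : κ → MvPolynomial σ K} {x : σ → K}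
    (h : IsAlgIsolatedZero G x) : IsAlgIsolatedZero (fun b => (G b).map φ) (φ ∘ x) := by
  refine ⟨fun b => by rw [eval_map_comp, h.1, map_zero], fun j => ?_⟩
  obtain ⟨g, k, hg, hgk⟩ := h.2 j
  refine ⟨g.map φ, k, by rwa [eval_map_comp, map_ne_zero], ?_⟩
  have := Ideal.mem_map_of_mem (MvPolynomial.map φ) hgk
  rw [Ideal.map_span, ← Set.range_comp] at this
  simpa using! this

section Functional

variable [Algebra K L] (l : Module.Dual K L)

theorem addMonoidAlgebraMap_map_mul (p : MvPolynomial σ K) (q : MvPolynomial σ L) :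
    AddMonoidAlgebra.map l.toAddMonoidHom (p.map (algebraMap K L) * q) =
      p * AddMonoidAlgebra.map l.toAddMonoidHom q := by
  classical
  ext a
  simp only [coeff_addMonoidAlgebraMap, coeff_mul, coeff_map, map_sum, ← Algebra.smul_def]
  exact Finset.sum_congr rfl fun _ _ => l.map_smul _ _

theorem eval_addMonoidAlgebraMap (x : σ → K) (p : MvPolynomial σ L) :
    eval x (AddMonoidAlgebra.map l.toAddMonoidHom p) = l (eval (algebraMap K L ∘ x) p) := by
  induction p using MvPolynomial.induction_on' with
  | monomial a c =>
    have map_monomial : AddMonoidAlgebra.map l.toAddMonoidHom (monomial a c) = monomial a (l c) :=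
      AddMonoidAlgebra.map_single _ _ _
    simp only [map_monomial, eval_monomial, Finsupp.prod, Function.comp_apply, ← map_pow,
      ← map_prod, mul_comm c, ← Algebra.smul_def, map_smul, smul_eq_mul, mul_comm (l c)]
  | add p q hp hq => rw [AddMonoidAlgebra.map_add, map_add, hp, hq, map_add, map_add]

theorem addMonoidAlgebraMap_mem_span {G : κ → MvPolynomial σ K} {p : MvPolynomial σ L}
    (hp : p ∈ Ideal.span (Set.range fun b => (G b).map (algebraMap K L))) :
    AddMonoidAlgebra.map l.toAddMonoidHom p ∈ Ideal.span (Set.range G) := by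
  obtain ⟨c, rfl⟩ := Finsupp.mem_ideal_span_range_iff_exists_finsupp.1 hp
  rw [Finsupp.sum, AddMonoidAlgebra.map_sum]
  refine Ideal.sum_mem _ fun b _ => ?_
  rw [mul_comm, addMonoidAlgebraMap_map_mul]
  exact Ideal.mul_mem_right _ _ (Ideal.subset_span ⟨b, rfl⟩)

end Functional

theorem IsAlgIsolatedZero.of_map (φ : K →+* L) {G : κ → MvPolynomial σ K} {x : σ → K}
    (h : IsAlgIsolatedZero (fun b => (G b).map φ) (φ ∘ x)) : IsAlgIsolatedZero G x := by
  refine ⟨fun b => by simpa only [eval_map_comp, map_eq_zero] using h.1 b, fun j => ?_⟩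
  obtain ⟨g, k, hg, hgk⟩ := h.2 j
  algebraize [φ]
  obtain ⟨l, hl⟩ := Module.Projective.exists_dual_ne_zero K hg
  refine ⟨AddMonoidAlgebra.map l.toAddMonoidHom g, k, by rwa [eval_addMonoidAlgebraMap], ?_⟩
  have := addMonoidAlgebraMap_mem_span l hgk
  have X_sub_eq : X j - C (φ (x j)) = (X j - C (x j)).map φ := by simp
  rw [Function.comp_apply, X_sub_eq, ← map_pow, mul_comm] at this
  rwa [mul_comm, ← addMonoidAlgebraMap_map_mul]

end BaseChange

section PointIdeal

variable {F σ κ : Type*} [Field F]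

theorem IsAlgIsolatedZero.X_sub_C_mem {G : κ → MvPolynomial σ F} {x : σ → F}
    (h : IsAlgIsolatedZero G x) {P : Ideal (MvPolynomial σ F)} [P.IsPrime] (hG : ∀ b, G b ∈ P)
    (hP : P ≤ RingHom.ker (eval x)) (j : σ) : X j - C (x j) ∈ P := by
  obtain ⟨g, k, hg, hgk⟩ := h.2 j
  refine Ideal.IsPrime.mem_of_pow_mem ‹_› k <| (Ideal.IsPrime.mem_or_mem ‹_›
    (Ideal.span_le.2 (Set.range_subset_iff.2 hG) hgk)).resolve_left fun hgP => hg (hP hgP)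

theorem ker_eval_le {I : Ideal (MvPolynomial σ F)} {x : σ → F} (hI : ∀ j, X j - C (x j) ∈ I) :
    RingHom.ker (eval x) ≤ I := by
  have mk_eq : Ideal.Quotient.mk I = ((Ideal.Quotient.mk I).comp C).comp (eval x) :=
    MvPolynomial.ringHom_ext (fun c => by simp) fun j => by
      simpa only [RingHom.comp_apply, eval_X] using Ideal.Quotient.eq.2 (hI j)
  intro f hf
  rw [← Ideal.Quotient.eq_zero_iff_mem, mk_eq, RingHom.comp_apply, RingHom.mem_ker.1 hf, map_zero]

theorem card_le_height_ker_aeval [DecidableEq σ] (x : σ → F) (t : Finset σ) :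
    (t.card : ℕ∞) ≤ (RingHom.ker (aeval fun j : σ => if j ∈ t then C (x j) else X j :
      MvPolynomial σ F →ₐ[F] MvPolynomial σ F)).height := by
  induction t using Finset.induction_on with
  | empty => simp
  | insert i t hi ih =>
    let ev (t : Finset σ) : MvPolynomial σ F →ₐ[F] MvPolynomial σ F :=
      aeval fun j => if j ∈ t then C (x j) else X j
    have comp_eq : (ev (insert i t)).comp (ev t) = ev (insert i t) := by
      ext j : 1
      by_cases hj : j ∈ t <;> simp [ev, hj, algebraMap_eq]
    have ker_le : RingHom.ker (ev t) ≤ RingHom.ker (ev (insert i t)) := fun f hf => by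
      rw [RingHom.mem_ker, ← comp_eq, AlgHom.comp_apply, RingHom.mem_ker.1 hf, map_zero]
    have mem_ker : X i - C (x i) ∈ RingHom.ker (ev (insert i t)) := by
      simp [RingHom.mem_ker, ev, algebraMap_eq]
    have notMem_ker : X i - C (x i) ∉ RingHom.ker (ev t) := fun h => by
      have := congrArg (eval fun _ => x i + 1) (RingHom.mem_ker.1 h)
      simp [ev, hi, algebraMap_eq] at this
    have : (RingHom.ker (ev t)).IsPrime := RingHom.ker_isPrime _
    have : (RingHom.ker (ev (insert i t))).IsPrime := RingHom.ker_isPrime _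
    rw [Finset.card_insert_of_notMem hi, Nat.cast_succ]
    exact (add_le_add_left ih 1).trans <| Ideal.height_add_one_le_of_lt_of_isPrime <|
      lt_of_le_of_ne ker_le fun h => notMem_ker (h ▸ mem_ker)

theorem height_ker_eval [Finite σ] (x : σ → F) :
    (RingHom.ker (eval x)).height = Nat.card σ := by
  classical
  have := Fintype.ofFinite σ
  have : (RingHom.ker (eval x)).IsPrime := RingHom.ker_isPrime _
  refine le_antisymm ?_ ?_
  · have := Ideal.height_le_ringKrullDim_of_isPrime (I := RingHom.ker (eval x))
    rw [ringKrullDim_of_isNoetherianRing, ringKrullDim_eq_zero_of_field, zero_add] at this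
    exact_mod_cast this
  · rw [Nat.card_eq_fintype_card, ← Finset.card_univ]
    refine (card_le_height_ker_aeval x Finset.univ).trans (Ideal.height_mono fun f hf => ?_)
    have hf : aeval (C ∘ x : σ → MvPolynomial σ F) f = 0 := by
      simpa only [Finset.mem_univ, if_true] using! hf
    rwa [aeval_def, algebraMap_eq, ← eval₂_comp, C_eq_zero] at hf

end PointIdeal

section SquareSystem

variable {F κ : Type*} [Field F] [Infinite F]

theorem exists_mem_span_forall_notMem {A : Type*} [CommRing A] [Algebra F A] {G : κ → A}
    {S : Set (Ideal A)} (hS : S.Finite) (hG : ∀ P ∈ S, ∃ b, G b ∉ P) :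
    ∃ v ∈ Submodule.span F (Set.range G), ∀ P ∈ S, v ∉ P := by
  classical
  let V := Submodule.span F (Set.range G)
  let W (P : Ideal A) : Subspace F V := (P.restrictScalars F).comap V.subtype
  have top_notMem : ⊤ ∉ hS.toFinset.image W := fun htop => by
    obtain ⟨P, hP, hPtop⟩ := Finset.mem_image.1 htop
    obtain ⟨b, hb⟩ := hG P (hS.mem_toFinset.1 hP)
    have : (⟨G b, Submodule.subset_span ⟨b, rfl⟩⟩ : V) ∈ W P := hPtop ▸ Submodule.mem_top
    exact hb this
  obtain ⟨v, hv⟩ :=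
    (Set.ne_univ_iff_exists_notMem _).1 (Subspace.biUnion_ne_univ_of_top_notMem top_notMem)
  exact ⟨v, v.2, fun P hP hvP => hv <| Set.mem_iUnion₂.2
    ⟨W P, Finset.mem_image_of_mem W (hS.mem_toFinset.2 hP), hvP⟩⟩

theorem exists_mem_span_forall_le_height {A : Type*} [CommRing A] [IsNoetherianRing A]
    [Algebra F A] (G : κ → A) (i : ℕ) :
    ∃ f : Fin i → A, (∀ a, f a ∈ Submodule.span F (Set.range G)) ∧
      ∀ P : Ideal A, P.IsPrime → (∀ a, f a ∈ P) → (∃ b, G b ∉ P) → (i : ℕ∞) ≤ P.height := by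
  induction i with
  | zero => exact ⟨Fin.elim0, fun a => a.elim0, fun P _ _ _ => by simp⟩
  | succ i ih =>
    obtain ⟨f, hf, hheight⟩ := ih
    let I := Ideal.span (Set.range f)
    obtain ⟨v, hv, hvP⟩ := exists_mem_span_forall_notMem (F := F) (G := G)
      (S := {P ∈ I.minimalPrimes | ∃ b, G b ∉ P})
      ((Ideal.finite_minimalPrimes_of_isNoetherianRing _ I).subset (Set.sep_subset _ _))
      fun P hP => hP.2
    refine ⟨Fin.cons v f, Fin.cases hv hf, fun Q hQ hfQ ⟨b, hb⟩ => ?_⟩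
    obtain ⟨P, hPmin, hPQ⟩ := Ideal.exists_minimalPrimes_le (I := I) (J := Q)
      (Ideal.span_le.2 (Set.range_subset_iff.2 fun a => hfQ a.succ))
    have hbP : ∃ b, G b ∉ P := ⟨b, fun hbP => hb (hPQ hbP)⟩
    have : P.IsPrime := hPmin.1.1
    have P_lt_Q : P < Q := lt_of_le_of_ne hPQ fun h => hvP P ⟨hPmin, hbP⟩ (h ▸ hfQ 0)
    rw [Nat.cast_succ]
    exact (add_le_add_left (hheight P hPmin.1.1
      (fun a => hPmin.1.2 (Ideal.subset_span ⟨a, rfl⟩)) hbP) 1).trans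
      (Ideal.height_add_one_le_of_lt_of_isPrime P_lt_Q)

theorem exists_square_system {σ : Type*} [Finite σ] (G : κ → MvPolynomial σ F) :
    ∃ f : σ → MvPolynomial σ F, (∀ i, f i ∈ Submodule.span F (Set.range G)) ∧
      ∀ x, IsAlgIsolatedZero G x →
        RingHom.ker (eval x) ∈ (Ideal.span (Set.range f)).minimalPrimes := by
  obtain ⟨f, hf, hheight⟩ := exists_mem_span_forall_le_height (F := F) G (Nat.card σ)
  let e := Finite.equivFin σ
  refine ⟨f ∘ e, fun i => hf (e i), fun x hx => ?_⟩
  rw [e.surjective.range_comp]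
  refine ⟨⟨RingHom.ker_isPrime _, ?_⟩, fun P ⟨hP, span_le⟩ hPx => ?_⟩
  · have span_le_ker : Submodule.span F (Set.range G) ≤ LinearMap.ker (aeval x).toLinearMap :=
      Submodule.span_le.2 (Set.range_subset_iff.2 hx.1)
    exact Ideal.span_le.2 (Set.range_subset_iff.2 fun a => span_le_ker (hf a))
  · have hfP (a) : f a ∈ P := span_le (Ideal.subset_span ⟨a, rfl⟩)
    by_cases hG : ∀ b, G b ∈ P
    · exact ker_eval_le (hx.X_sub_C_mem hG hPx)
    · have height_le : (RingHom.ker (eval x)).height ≤ P.height :=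
        (height_ker_eval x).trans_le (hheight P hP hfP (not_forall.1 hG))
      exact (Ideal.eq_of_le_of_height_le P hPx height_le).ge

end SquareSystem

/-! ### Perturbation of square systems -/

section FiniteZeros

variable {R σ : Type*} [CommRing R]

/-- Reduction by `x i ^ N = f i (x)` lowers the degree of every monomial with an exponent `≥ N`. -/
theorem aeval_monomial_mem_span [Fintype σ] {A : Type*} [CommRing A] [Algebra R A] {x : σ → A}
    {f : σ → MvPolynomial σ R} {N : ℕ} (hN : ∀ i, (f i).totalDegree < N)
    (hx : ∀ i, x i ^ N = aeval x (f i)) (a : σ →₀ ℕ) :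
    aeval x (monomial a (1 : R)) ∈ Submodule.span R
      ((fun b => aeval x (monomial b (1 : R))) '' {b | b.degree ≤ Fintype.card σ * N}) := by
  induction hD : a.degree using Nat.strong_induction_on generalizing a with
  | _ D ih =>
    by_cases ha : a.degree ≤ Fintype.card σ * N
    · exact Submodule.subset_span ⟨a, ha, rfl⟩
    obtain ⟨i, hi⟩ : ∃ i, N ≤ a i := by
      by_contra! hlt
      refine ha ?_
      rw [Finsupp.degree_eq_sum]
      exact (Finset.sum_le_card_nsmul _ _ N fun i _ => (hlt i).le).trans_eq (by simp)
    obtain ⟨b, rfl⟩ := exists_add_of_le (Finsupp.single_le_iff.2 hi)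
    have reduction : aeval x (monomial (Finsupp.single i N + b) (1 : R)) =
        ∑ e ∈ (f i).support, coeff e (f i) • aeval x (monomial (e + b) (1 : R)) := by
      have monomial_add_eq (e : σ →₀ ℕ) (c : R) :
          aeval x (monomial (e + b) c) = aeval x (monomial e c) * aeval x (monomial b (1 : R)) := by
        rw [← map_mul, monomial_mul, mul_one]
      rw [monomial_add_eq, ← X_pow_eq_monomial, map_pow, aeval_X, hx]
      conv_lhs => rw [(f i).as_sum, map_sum, Finset.sum_mul]
      refine Finset.sum_congr rfl fun e _ => ?_
      rw [← monomial_add_eq, ← map_smul, smul_monomial, smul_eq_mul, mul_one]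
    rw [reduction]
    refine Submodule.sum_mem _ fun e he => Submodule.smul_mem _ _ (ih _ ?_ _ rfl)
    have degree_lt : e.degree < N := (le_totalDegree he).trans_lt (hN i)
    rw [← hD, map_add, map_add, Finsupp.degree_single]
    lia

theorem finite_of_pow_eq_aeval [Finite σ] {A : Type*} [CommRing A] [Algebra R A] {x : σ → A}
    (hsurj : Function.Surjective (aeval (R := R) x)) {f : σ → MvPolynomial σ R} {N : ℕ}
    (hN : ∀ i, (f i).totalDegree < N) (hx : ∀ i, x i ^ N = aeval x (f i)) : Module.Finite R A := by
  have := Fintype.ofFinite σ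
  refine ⟨⟨(((Finsupp.finite_of_degree_le (Fintype.card σ * N)).image
    fun b => aeval x (monomial b (1 : R))).toFinset), eq_top_iff.2 fun y _ => ?_⟩⟩
  obtain ⟨p, rfl⟩ := hsurj y
  rw [Set.Finite.coe_toFinset, p.as_sum, map_sum]
  refine Submodule.sum_mem _ fun a _ => ?_
  have monomial_eq : monomial a (coeff a p) = coeff a p • monomial a (1 : R) := by
    rw [smul_monomial, smul_eq_mul, mul_one]
  rw [monomial_eq, map_smul]
  exact Submodule.smul_mem _ _ (aeval_monomial_mem_span hN hx a)

theorem finite_setOf_eval_eq_zero_of_finite {F κ : Type*} [Field F] (G : κ → MvPolynomial σ F)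
    [Module.Finite F (MvPolynomial σ F ⧸ Ideal.span (Set.range G))] :
    {x : σ → F | ∀ b, eval x (G b) = 0}.Finite := by
  let I := Ideal.span (Set.range G)
  let Z := {x : σ → F | ∀ b, eval x (G b) = 0}
  have le_ker (x : Z) : I ≤ RingHom.ker (aeval x.1 : MvPolynomial σ F →ₐ[F] F) :=
    Ideal.span_le.2 (Set.range_subset_iff.2 x.2)
  let evalHom (x : Z) : (MvPolynomial σ F ⧸ I) →ₐ[F] F :=
    Ideal.Quotient.liftₐ I (aeval x.1) (le_ker x)
  have evalHom_mk_X (x : Z) (j : σ) : evalHom x (Ideal.Quotient.mk I (X j)) = x.1 j := by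
    exact aeval_X x.1 j
  refine Set.finite_coe_iff.1 (Finite.of_injective evalHom fun x y hxy => ?_)
  ext j
  rw [← evalHom_mk_X, hxy, evalHom_mk_X]

theorem finite_setOf_eval_add_smul_X_pow_eq_zero {F : Type*} [Field F] [Finite σ]
    (f : σ → MvPolynomial σ F) {s : F} (hs : s ≠ 0) {N : ℕ} (hN : ∀ i, (f i).totalDegree < N) :
    {x : σ → F | ∀ i, eval x (f i + C s * X i ^ N) = 0}.Finite := by
  let I := Ideal.span (Set.range fun i => f i + C s * X i ^ N)
  have : Module.Finite F (MvPolynomial σ F ⧸ I) := by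
    have aeval_mk : aeval (fun i => Ideal.Quotient.mkₐ F I (X i)) = Ideal.Quotient.mkₐ F I :=
      (aeval_unique _).symm
    refine finite_of_pow_eq_aeval (aeval_mk ▸ Ideal.Quotient.mkₐ_surjective F I)
      (f := fun i => -s⁻¹ • f i) (fun i => (totalDegree_smul_le _ _).trans_lt (hN i)) fun i => ?_
    rw [aeval_mk, ← map_pow, Ideal.Quotient.mkₐ_eq_mk, Ideal.Quotient.eq]
    have sub_eq : X i ^ N - -s⁻¹ • f i = C s⁻¹ * (f i + C s * X i ^ N) := by
      rw [mul_add, ← mul_assoc, ← C_mul, inv_mul_cancel₀ hs, C_1, one_mul, neg_smul,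
        sub_neg_eq_add, smul_eq_C_mul, add_comm]
    exact sub_eq ▸ Ideal.mul_mem_left _ _ (Ideal.subset_span ⟨i, rfl⟩)
  exact finite_setOf_eval_eq_zero_of_finite _

end FiniteZeros

section Deformation

variable {F σ T : Type*} [Field F]

/-- The system `f i (x t) + s * x t i ^ N = 0` in the unknowns `s = X none` and
`x t i = X (some (t, i))`: its zeros are the deformations, with a common parameter `s`, of a family
of zeros of the system `f`. -/
noncomputable def deformationSystem (f : σ → MvPolynomial σ F) (N : ℕ) (a : T × σ) :
    MvPolynomial (Option (T × σ)) F :=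
  rename (fun i => some (a.1, i)) (f a.2) + X none * X (some a) ^ N

theorem eval_deformationSystem (f : σ → MvPolynomial σ F) (N : ℕ) (y : Option (T × σ) → F)
    (t : T) (i : σ) :
    eval y (deformationSystem f N (t, i)) =
      eval (fun j => y (some (t, j))) (f i + C (y none) * X i ^ N) := by
  simp [deformationSystem, eval_rename, Function.comp_def]

variable {f : σ → MvPolynomial σ F} {N : ℕ} {y : Option (T × σ) → F}
  (hy : ∀ t, RingHom.ker (eval fun i => y (some (t, i))) ∈ (Ideal.span (Set.range f)).minimalPrimes)
include hy

theorem X_sub_C_mem_of_X_none_mem (y_none : y none = 0)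
    {P : Ideal (MvPolynomial (Option (T × σ)) F)} [P.IsPrime]
    (mem_P : ∀ a, deformationSystem f N a ∈ P) (P_le : P ≤ RingHom.ker (eval y))
    (X_none_mem : X none ∈ P) (o : Option (T × σ)) : X o - C (y o) ∈ P := by
  rcases o with _ | ⟨t, j⟩
  · simpa [y_none] using X_none_mem
  let ρ : MvPolynomial σ F →ₐ[F] MvPolynomial (Option (T × σ)) F := rename fun i => some (t, i)
  have f_mem (i) : f i ∈ P.comap ρ := by
    have := P.sub_mem (mem_P (t, i)) (P.mul_mem_right (X (some (t, i)) ^ N) X_none_mem)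
    rwa [deformationSystem, add_sub_cancel_right] at this
  have comap_le : P.comap ρ ≤ RingHom.ker (eval fun i => y (some (t, i))) := fun g hg => by
    have := P_le (Ideal.mem_comap.1 hg)
    rwa [RingHom.mem_ker, eval_rename] at this
  have ker_le : RingHom.ker (eval fun i => y (some (t, i))) ≤ P.comap ρ :=
    (hy t).2 ⟨P.comap_isPrime ρ, Ideal.span_le.2 (Set.range_subset_iff.2 f_mem)⟩ comap_le
  have X_sub_C_mem : X j - C (y (some (t, j))) ∈ P.comap ρ := ker_le (by simp [RingHom.mem_ker])
  simpa [ρ] using X_sub_C_mem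

/-- There is one unknown more than equations, so the component through `y` is not a point. -/
theorem exists_isPrime_deformationSystem_mem [Finite σ] [Finite T] (y_none : y none = 0) :
    ∃ P : Ideal (MvPolynomial (Option (T × σ)) F), P.IsPrime ∧
      (∀ a, deformationSystem f N a ∈ P) ∧ P ≤ RingHom.ker (eval y) ∧ X none ∉ P := by
  let J := Ideal.span (Set.range (deformationSystem (T := T) f N))
  have ker_isPrime : (RingHom.ker (eval y)).IsPrime := RingHom.ker_isPrime _
  have J_le : J ≤ RingHom.ker (eval y) := Ideal.span_le.2 <| Set.range_subset_iff.2 fun (t, i) => by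
    have eval_f : eval (fun i => y (some (t, i))) (f i) = 0 :=
      (hy t).1.2 (Ideal.subset_span ⟨i, rfl⟩)
    simp [RingHom.mem_ker, eval_deformationSystem, eval_f, y_none]
  obtain ⟨P, hPmin, P_le⟩ := Ideal.exists_minimalPrimes_le J_le
  have hP : P.IsPrime := hPmin.1.1
  have mem_P (a) : deformationSystem f N a ∈ P := hPmin.1.2 (Ideal.subset_span ⟨a, rfl⟩)
  refine ⟨P, hP, mem_P, P_le, fun X_none_mem => ?_⟩
  have card_le : (Nat.card (Option (T × σ)) : ℕ∞) ≤ Nat.card (T × σ) := calc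
    (Nat.card (Option (T × σ)) : ℕ∞) = (RingHom.ker (eval y)).height := (height_ker_eval y).symm
    _ ≤ P.height :=
      Ideal.height_mono (ker_eval_le (X_sub_C_mem_of_X_none_mem hy y_none mem_P P_le X_none_mem))
    _ ≤ (Set.range (deformationSystem (T := T) f N)).ncard :=
      Ideal.height_le_card_of_mem_minimalPrimes_span (Set.finite_range _) hPmin
    _ ≤ Nat.card (T × σ) := Nat.cast_le.2 (by
      rw [← Set.image_univ, ← Set.ncard_univ]
      exact Set.ncard_image_le)
  rw [Nat.cast_le, Finite.card_option] at card_le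
  lia

end Deformation

/-- All the zeros are deformed simultaneously, so that the parameter `s` is the same for all. -/
theorem exists_deformation {F σ T : Type*} [NontriviallyNormedField F] [IsAlgClosed F] [Finite σ]
    [Finite T] {f : σ → MvPolynomial σ F} {x : T → σ → F}
    (hx : ∀ t, RingHom.ker (eval (x t)) ∈ (Ideal.span (Set.range f)).minimalPrimes) (N : ℕ)
    {p : (T → σ → F) → Prop} (hp : ∀ᶠ y in 𝓝 x, p y) :
    ∃ s ≠ 0, ∃ y, p y ∧ ∀ t i, eval (y t) (f i + C s * X i ^ N) = 0 := by
  let x₀ : Option (T × σ) → F := fun o => o.elim 0 fun a => x a.1 a.2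
  obtain ⟨P, hP, mem_P, P_le, X_none_notMem⟩ :=
    exists_isPrime_deformationSystem_mem (N := N) (y := x₀) hx rfl
  have continuous_restrict :
      Continuous fun (z : Option (T × σ) → F) t i => z (some (t, i)) := by fun_prop
  obtain ⟨z, ⟨hz, z_none⟩, hpz⟩ := ((frequently_mem_of_isPrime P_le X_none_notMem).and_eventually
    ((continuous_restrict.tendsto x₀).eventually hp)).exists
  refine ⟨z none, by simpa using z_none, _, hpz, fun t i => ?_⟩
  rw [← eval_deformationSystem]
  exact hz _ (mem_P _)

/-! ### Isolated zeros in a coset -/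

section IsolatedZeros

variable {σ L : Type*}

theorem exists_sum_monomial_eq_of_mem_restrictSupport {R : Type*} [CommSemiring R] [Fintype L]
    {α : L → σ →₀ ℕ} {p : MvPolynomial σ R} (hp : p ∈ restrictSupport R (Set.range α)) :
    ∃ c : L → R, ∑ l, monomial (α l) (c l) = p := by
  rw [restrictSupport_eq_span, ← Set.range_comp, Submodule.mem_span_range_iff_exists_fun] at hp
  obtain ⟨c, rfl⟩ := hp
  exact ⟨c, by simp [smul_monomial]⟩

theorem eval_sum_monomial {R : Type*} [CommSemiring R] [Fintype σ] [Fintype L] (α : L → σ →₀ ℕ)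
    (c : L → R) (x : σ → R) :
    eval x (∑ l, monomial (α l) (c l)) = ∑ l, c l * ∏ j, x j ^ α l j := by
  rw [map_sum]
  exact Finset.sum_congr rfl fun l _ => by rw [eval_monomial, Finsupp.prod_fintype _ _ (by simp)]

theorem eventually_nhds_injective {X T : Type*} [TopologicalSpace X] [T2Space X] [Finite T]
    {x : T → X} (hx : Function.Injective x) : ∀ᶠ y in 𝓝 x, Function.Injective y := by
  have eventually_ne (t t' : T) : ∀ᶠ y in 𝓝 x, t ≠ t' → y t ≠ y t' := by
    by_cases h : t = t'
    · exact .of_forall fun _ hne => (hne h).elim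
    · have isOpen_ne := isOpen_ne_fun (continuous_apply t) (continuous_apply (A := fun _ => X) t')
      filter_upwards [isOpen_ne.mem_nhds fun heq => h (hx heq)] with y hy _ using hy
  filter_upwards [eventually_all.2 fun t => eventually_all.2 (eventually_ne t)] with y hy t t' heq
  exact not_imp_not.1 (hy t t') heq

theorem encard_le_of_forall_finset_card_le {X : Type*} {s : Set X} {N : ℕ}
    (h : ∀ S : Finset X, ↑S ⊆ s → S.card ≤ N) : s.encard ≤ N := by
  by_contra! hlt
  obtain ⟨t, ht, ht_encard⟩ := Set.exists_subset_encard_eq (Order.add_one_le_of_lt hlt)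
  have ht_fin : t.Finite := Set.finite_of_encard_eq_coe (k := N + 1) (by simpa using ht_encard)
  have card_le := h ht_fin.toFinset (by simpa using ht)
  rw [ht_fin.encard_eq_coe_toFinset_card] at ht_encard
  norm_cast at ht_encard
  lia

end IsolatedZeros

section IsolatedInCoset

variable {Ω : Type*} {n : ℕ}

theorem scaleSubgroup_eq_iUnion [NormedField Ω] {τ : ℚ → Ω} (hτ : IsScale τ) (h20 : (2 : Ω) ≠ 0) :
    scaleSubgroup n τ =
      ⋃ w : Fin n → ℚ, Set.univ.pi fun j => Metric.closedBall (τ (w j)) ‖2 * τ (w j)‖ := by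
  have two_mul_ne_zero (w : ℚ) : 2 * τ w ≠ 0 := mul_ne_zero h20 (hτ.ne_zero w)
  ext x
  simp only [Set.mem_iUnion, Set.mem_univ_pi, mem_closedBall_iff_norm]
  constructor
  · rintro ⟨w, z, hz, rfl⟩
    refine ⟨w, fun j => ?_⟩
    have sub_eq : cosetPoint τ w z j - τ (w j) = 2 * τ (w j) * z j := by
      simp only [cosetPoint]
      ring
    rw [sub_eq, norm_mul]
    exact mul_le_of_le_one_right (norm_nonneg _) (hz j)
  · rintro ⟨w, hw⟩
    refine ⟨w, fun j => (x j - τ (w j)) / (2 * τ (w j)), fun j => ?_, funext fun j => ?_⟩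
    · rw [norm_div]
      exact div_le_one_of_le₀ (hw j) (norm_nonneg _)
    · have := mul_div_cancel₀ (x j - τ (w j)) (two_mul_ne_zero (w j))
      simp only [cosetPoint]
      linear_combination this

theorem isOpen_scaleSubgroup [NormedField Ω] [IsUltrametricDist Ω] {τ : ℚ → Ω} (hτ : IsScale τ)
    (h20 : (2 : Ω) ≠ 0) : IsOpen (scaleSubgroup n τ) := by
  rw [scaleSubgroup_eq_iUnion hτ h20]
  exact isOpen_iUnion fun w => isOpen_set_pi Set.finite_univ fun j _ =>
    IsUltrametricDist.isOpen_closedBall _ (norm_ne_zero_iff.2 (mul_ne_zero h20 (hτ.ne_zero _)))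

variable [NontriviallyNormedField Ω] [IsUltrametricDist Ω] [CompleteSpace Ω] [IsAlgClosed Ω]
  {φ₀ : ℤ_[2] →+* Ω} (hφ₀ : ∀ x, ‖φ₀ x‖ ≤ 1) (h2 : ‖(2 : Ω)‖ < 1) (h20 : (2 : Ω) ≠ 0)
include hφ₀ h2 h20

theorem exists_ncard_zeros_inter_scaleSubgroup_le (n k : ℕ) (L : Type) [Finite L] [Nonempty L] :
    ∃ N, ∀ τ : ℚ → Ω, IsScale τ → ∀ (α : L → Fin n →₀ ℕ) (f : Fin k → MvPolynomial (Fin n) Ω),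
      (∀ i, f i ∈ restrictSupport Ω (Set.range α)) → (zeroSet f ∩ scaleSubgroup n τ).Finite →
        (zeroSet f ∩ scaleSubgroup n τ).ncard ≤ N := by
  have := Fintype.ofFinite L
  obtain ⟨N, hN⟩ := exists_ncard_sparseZeros_inter_le hφ₀ h2 h20 n k L
  refine ⟨N, fun τ hτ α f hf => ?_⟩
  choose c hc using fun i => exists_sum_monomial_eq_of_mem_restrictSupport (hf i)
  have zeroSet_eq : zeroSet f = sparseZeros (fun l => α l) c := by
    simp only [zeroSet, sparseZeros, ← hc, eval_sum_monomial]
  rw [zeroSet_eq]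
  exact hN τ hτ _ c

/-- However many equations the system has, its isolated zeros are among those of a generic square
subsystem; they persist under a perturbation by pure powers, which leaves finitely many zeros. -/
theorem exists_encard_isAlgIsolatedZero_inter_scaleSubgroup_le (n : ℕ) (L : Type) [Finite L]
    [Nonempty L] :
    ∃ N : ℕ, ∀ τ : ℚ → Ω, IsScale τ → ∀ (α : L → Fin n →₀ ℕ) {κ : Type*}
      (G : κ → MvPolynomial (Fin n) Ω), (∀ b, G b ∈ restrictSupport Ω (Set.range α)) →
        ({x | IsAlgIsolatedZero G x} ∩ scaleSubgroup n τ).encard ≤ N := by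
  obtain ⟨N, hN⟩ := exists_ncard_zeros_inter_scaleSubgroup_le hφ₀ h2 h20 n n (L ⊕ Fin n)
  refine ⟨N, fun τ hτ α κ G hG => encard_le_of_forall_finset_card_le fun S hS => ?_⟩
  obtain ⟨f, hfG, hf⟩ := exists_square_system G
  let M := (Finset.univ.sup fun i => (f i).totalDegree) + 1
  have totalDegree_lt (i) : (f i).totalDegree < M := Nat.lt_add_one_of_le <|
    Finset.le_sup (f := fun i => (f i).totalDegree) (Finset.mem_univ i)
  have eventually_mem : ∀ᶠ y in 𝓝 fun t : S => t.1, ∀ t, y t ∈ scaleSubgroup n τ :=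
    eventually_all.2 fun t => (continuous_apply t).continuousAt.eventually_mem
      ((isOpen_scaleSubgroup hτ h20).mem_nhds (hS t.2).2)
  obtain ⟨s, hs, y, ⟨y_injective, y_mem⟩, y_zero⟩ := exists_deformation
    (fun t : S => hf t (hS t.2).1) M
    ((eventually_nhds_injective Subtype.val_injective).and eventually_mem)
  let g (i : Fin n) := f i + C s * X i ^ M
  have g_mem (i) : g i ∈ restrictSupport Ω
      (Set.range (Sum.elim α fun i => Finsupp.single i M)) := by
    rw [Set.Sum.elim_range]
    refine add_mem (restrictSupport_mono _ Set.subset_union_left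
      (Submodule.span_le.2 (Set.range_subset_iff.2 hG) (hfG i))) ?_
    rw [C_mul_X_pow_eq_monomial, monomial_mem_restrictSupport]
    exact .inl (.inr ⟨i, rfl⟩)
  have finite_zeros : (zeroSet g ∩ scaleSubgroup n τ).Finite :=
    (finite_setOf_eval_add_smul_X_pow_eq_zero f hs totalDegree_lt).inter_of_left _
  calc S.card = (Set.range y).ncard := by
        rw [← Set.image_univ, Set.ncard_image_of_injective _ y_injective, Set.ncard_univ,
          Nat.card_eq_fintype_card, Fintype.card_coe]
    _ ≤ (zeroSet g ∩ scaleSubgroup n τ).ncard := Set.ncard_le_ncard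
        (Set.range_subset_iff.2 fun t => ⟨y_zero t, y_mem t⟩) finite_zeros
    _ ≤ N := hN τ hτ _ g g_mem finite_zeros

end IsolatedInCoset

section Rescale

variable {R σ : Type*} [CommRing R]

/-- The substitution `x j ↦ η j * x j`. If `η j = 0`, then it eliminates the variable `x j`. -/
noncomputable def rescale (η : σ → R) : MvPolynomial σ R →ₐ[R] MvPolynomial σ R :=
  aeval fun j => C (η j) * X j

theorem eval_rescale (η x : σ → R) (p : MvPolynomial σ R) :
    eval x (rescale η p) = eval (η * x) p := by
  have algHom_eq : (aeval x).comp (rescale η) = aeval (η * x) := by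
    ext j
    simp [rescale]
  exact DFunLike.congr_fun algHom_eq p

theorem rescale_mem_restrictSupport (η : σ → R) {s : Set (σ →₀ ℕ)} {p : MvPolynomial σ R}
    (hp : p ∈ restrictSupport R s) : rescale η p ∈ restrictSupport R s := by
  have le_comap : restrictSupport R s ≤ (restrictSupport R s).comap (rescale η).toLinearMap := by
    rw [restrictSupport_eq_span, Submodule.span_le, ← restrictSupport_eq_span]
    rintro _ ⟨a, ha, rfl⟩
    have rescale_monomial : rescale η (monomial a 1) = monomial a (a.prod fun j k => η j ^ k) := by
      simp only [rescale, aeval_monomial, map_one, one_mul, mul_pow, Finsupp.prod_mul]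
      simp [monomial_eq, map_finsuppProd]
    change rescale η (monomial a 1) ∈ restrictSupport R s
    rw [rescale_monomial, monomial_mem_restrictSupport]
    exact .inl ha
  exact le_comap hp

/-- The rescaled system, with the coordinates that the rescaling eliminates set to `1`. -/
noncomputable def rescaledSystem {κ : Type*} (η : σ → R) (G : κ → MvPolynomial σ R) :
    κ ⊕ {j // η j = 0} → MvPolynomial σ R :=
  Sum.elim (fun b => rescale η (G b)) fun j => X j.1 - 1

theorem rescaledSystem_mem_restrictSupport {κ L : Type*} {α : L → σ →₀ ℕ} {η : σ → R}
    {G : κ → MvPolynomial σ R} (hG : ∀ b, G b ∈ restrictSupport R (Set.range α))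
    (b : κ ⊕ {j // η j = 0}) : rescaledSystem η G b ∈ restrictSupport R
      (Set.range (Sum.elim α fun o : Option σ => o.elim 0 fun j => Finsupp.single j 1)) := by
  rw [Set.Sum.elim_range]
  rcases b with b | ⟨j, -⟩
  · exact restrictSupport_mono _ Set.subset_union_left (rescale_mem_restrictSupport η (hG b))
  · exact sub_mem ((monomial_mem_restrictSupport R).2 (.inl (.inr ⟨some j, rfl⟩)))
      ((monomial_mem_restrictSupport R).2 (.inl (.inr ⟨none, rfl⟩)))

theorem isAlgIsolatedZero_rescaledSystem {F κ : Type*} [Field F] {G : κ → MvPolynomial σ F}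
    {η x : σ → F} (h : IsAlgIsolatedZero G (η * x)) (hx : ∀ j, η j = 0 → x j = 1) :
    IsAlgIsolatedZero (rescaledSystem η G) x := by
  refine ⟨?_, fun j => ?_⟩
  · rintro (b | ⟨j, hj⟩)
    · exact (eval_rescale η x (G b)).trans (h.1 b)
    · simp [rescaledSystem, hx j hj]
  by_cases hj : η j = 0
  · refine ⟨1, 1, by simp, Ideal.subset_span ⟨.inr ⟨j, hj⟩, ?_⟩⟩
    simp [rescaledSystem, hx j hj]
  · obtain ⟨g, k, hg, hgk⟩ := h.2 j
    refine ⟨rescale η g * C (η j) ^ k, k, by simp [eval_rescale, hg, hj], ?_⟩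
    have rescale_eq : rescale η (g * (X j - C ((η * x) j)) ^ k) =
        rescale η g * C (η j) ^ k * (X j - C (x j)) ^ k := by
      rw [map_mul, map_pow, map_sub, ← algebraMap_eq, AlgHom.commutes, algebraMap_eq, mul_assoc,
        ← mul_pow, mul_sub, Pi.mul_apply, C_mul, rescale, aeval_X]
    have map_le : (Ideal.span (Set.range G)).map (rescale η) ≤
        Ideal.span (Set.range (rescaledSystem η G)) := by
      rw [Ideal.map_span, Ideal.span_le]
      rintro _ ⟨_, ⟨b, rfl⟩, rfl⟩
      exact Ideal.subset_span ⟨.inl b, rfl⟩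
    exact rescale_eq ▸ map_le (Ideal.mem_map_of_mem _ hgk)

end Rescale

section IsolatedInRescaledCoset

variable {Ω : Type*} [NontriviallyNormedField Ω]

theorem exists_mem_scaleSubgroup_mul_eq {n : ℕ} {τ : ℚ → Ω} (hτ : IsScale τ) {η x : Fin n → Ω}
    (hx : x ∈ scaleSubgroup n τ) :
    ∃ y ∈ scaleSubgroup n τ, η * y = η * x ∧ ∀ j, η j = 0 → y j = 1 := by
  classical
  obtain ⟨w, z, hz, rfl⟩ := hx
  refine ⟨cosetPoint τ (fun j => if η j = 0 then 0 else w j)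
    (fun j => if η j = 0 then 0 else z j), ⟨_, _, fun j => ?_, rfl⟩, funext fun j => ?_,
    fun j hj => by simp [cosetPoint, hj, hτ.zero]⟩
  · split_ifs
    exacts [by simp, hz j]
  · by_cases hj : η j = 0 <;> simp [cosetPoint, hj]

variable [IsUltrametricDist Ω] [CompleteSpace Ω] [IsAlgClosed Ω]
  {φ₀ : ℤ_[2] →+* Ω} (hφ₀ : ∀ x, ‖φ₀ x‖ ≤ 1) (h2 : ‖(2 : Ω)‖ < 1) (h20 : (2 : Ω) ≠ 0)
include hφ₀ h2 h20

theorem exists_encard_isAlgIsolatedZero_le (n : ℕ) (L : Type) [Finite L] :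
    ∃ N : ℕ, ∀ τ : ℚ → Ω, IsScale τ → ∀ (α : L → Fin n →₀ ℕ) {κ : Type*}
      (G : κ → MvPolynomial (Fin n) Ω), (∀ b, G b ∈ restrictSupport Ω (Set.range α)) →
        ∀ E : Finset Ω,
          {x | IsAlgIsolatedZero G x ∧ ∃ η y, (∀ j, η j ∈ E) ∧ y ∈ scaleSubgroup n τ ∧
            η * y = x}.encard ≤ (E.card ^ n * N : ℕ) := by
  obtain ⟨N, hN⟩ := exists_encard_isAlgIsolatedZero_inter_scaleSubgroup_le hφ₀ h2 h20 n
    (L ⊕ Option (Fin n))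
  refine ⟨N, fun τ hτ α κ G hG E => ?_⟩
  let Z (η : Fin n → Ω) :=
    (η * ·) '' ({y | IsAlgIsolatedZero (rescaledSystem η G) y} ∩ scaleSubgroup n τ)
  calc {x | IsAlgIsolatedZero G x ∧ ∃ η y, (∀ j, η j ∈ E) ∧ y ∈ scaleSubgroup n τ ∧
          η * y = x}.encard
      ≤ (⋃ η ∈ Fintype.piFinset fun _ => E, Z η).encard := Set.encard_le_encard ?_
    _ ≤ ∑ η ∈ Fintype.piFinset fun _ => E, (Z η).encard := Finset.set_encard_biUnion_le _ _
    _ ≤ ∑ _η ∈ Fintype.piFinset fun _ => E, (N : ℕ∞) := Finset.sum_le_sum fun η _ =>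
        (Set.encard_image_le _ _).trans
          (hN τ hτ _ _ (rescaledSystem_mem_restrictSupport hG))
    _ = (E.card ^ n * N : ℕ) := by simp
  rintro _ ⟨hx, η, y, hη, hy, rfl⟩
  obtain ⟨y', hy', mul_eq, hy'_one⟩ := exists_mem_scaleSubgroup_mul_eq hτ hy
  exact Set.mem_biUnion (Fintype.mem_piFinset.2 hη)
    ⟨y', ⟨isAlgIsolatedZero_rescaledSystem (by rwa [mul_eq]) hy'_one, hy'⟩, mul_eq⟩

end IsolatedInRescaledCoset

/-! ### Cosets covering a number field -/

section Residues

variable {G : Type*} [AddCommGroup G] {n : ℕ}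

theorem mkQ_modN_eq_iff {x y : G} : ModN.mkQ n x = ModN.mkQ n y ↔ ∃ z, x = y + n • z := by
  refine (Submodule.Quotient.eq _).trans (exists_congr fun z => ?_)
  rw [LinearMap.lsmul_apply, natCast_zsmul, eq_sub_iff_add_eq', eq_comm]

/-- Finitely many classes modulo `n` are represented in a finitely generated subgroup, which is free
of rank at most `r`. -/
theorem encard_modN_le [Module.IsTorsionFree ℤ G] {r : ℕ} (hr : Module.rank ℤ G ≤ r) (n : ℕ)
    [NeZero n] : (Set.univ : Set (ModN G n)).encard ≤ (n ^ r : ℕ) := by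
  refine encard_le_of_forall_finset_card_le fun T _ => ?_
  choose lift mkQ_lift using Submodule.mkQ_surjective (LinearMap.range (LinearMap.lsmul ℤ G n))
  let H := Submodule.span ℤ (lift '' T)
  have : Module.Finite ℤ H := .span_of_finite ℤ (T.finite_toSet.image _)
  let f (t : T) : ModN H n := ModN.mkQ n ⟨lift t, Submodule.subset_span ⟨t, t.2, rfl⟩⟩
  have f_injective : Function.Injective f := fun t t' h => by
    obtain ⟨z, hz⟩ := mkQ_modN_eq_iff.1 h
    have mkQ_eq : ModN.mkQ n (lift t) = ModN.mkQ n (lift t') :=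
      mkQ_modN_eq_iff.2 ⟨z, congrArg Subtype.val hz⟩
    exact Subtype.ext ((mkQ_lift t).symm.trans (mkQ_eq.trans (mkQ_lift t')))
  calc T.card = Nat.card T := by simp
    _ ≤ Nat.card (ModN H n) := Nat.card_le_card_of_injective f f_injective
    _ = n ^ Module.finrank ℤ H := ModN.natCard_eq H n
    _ ≤ n ^ r := Nat.pow_le_pow_right (NeZero.pos n)
        (Module.finrank_le_of_rank_le ((Submodule.rank_le H).trans hr))

theorem exists_finset_forall_eq_add_nsmul [Module.IsTorsionFree ℤ G] {r : ℕ}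
    (hr : Module.rank ℤ G ≤ r) (n : ℕ) [NeZero n] :
    ∃ E : Finset G, 0 ∈ E ∧ E.card ≤ n ^ r ∧ ∀ x, ∃ e ∈ E, ∃ z, x = e + n • z := by
  classical
  have encard_le := encard_modN_le hr n
  have : Fintype (ModN G n) := @Fintype.ofFinite _ <|
    Set.finite_univ_iff.1 (Set.finite_of_encard_le_coe encard_le)
  rw [Set.encard_univ, ENat.card_eq_coe_fintype_card, Nat.cast_le] at encard_le
  choose lift mkQ_lift using Submodule.mkQ_surjective (LinearMap.range (LinearMap.lsmul ℤ G n))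
  refine ⟨Finset.univ.image fun q => lift q - lift 0, ?_, Finset.card_image_le.trans encard_le,
    fun x => ⟨_, Finset.mem_image_of_mem _ (Finset.mem_univ (ModN.mkQ n (x + lift 0))), ?_⟩⟩
  · exact Finset.mem_image.2 ⟨0, Finset.mem_univ _, sub_self _⟩
  · obtain ⟨z, hz⟩ := mkQ_modN_eq_iff.1 (mkQ_lift (ModN.mkQ n (x + lift 0))).symm
    exact ⟨z, by rw [sub_add_eq_add_sub, ← hz, add_sub_cancel_right]⟩

end Residues

section RationalPowers

theorem exists_addMonoidHom_rat_apply_one {A : Type*} [AddCommGroup A] [DivisibleBy A ℤ] (a : A) :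
    ∃ h : ℚ →+ A, h 1 = a := by
  obtain ⟨h, hh⟩ := (Module.Baer.of_divisible A).extension_property_addMonoidHom
    (Int.castAddHom ℚ) Int.cast_injective (zmultiplesHom A a)
  exact ⟨h, by simpa using DFunLike.congr_fun hh 1⟩

theorem nonempty_divisibleBy_additive_units {F : Type*} [Field F] [IsAlgClosed F] :
    Nonempty (DivisibleBy (Additive Fˣ) ℤ) := by
  have exists_pow_eq {m : ℕ} (hm : m ≠ 0) (u : Fˣ) : ∃ v : Fˣ, v ^ m = u := by
    obtain ⟨y, hy⟩ := IsAlgClosed.exists_pow_nat_eq (u : F) (Nat.pos_of_ne_zero hm)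
    have y_ne_zero : y ≠ 0 := by
      rintro rfl
      exact u.ne_zero (hy.symm.trans (zero_pow hm))
    exact ⟨Units.mk0 y y_ne_zero, Units.ext hy⟩
  have : DivisibleBy (Additive Fˣ) ℕ := divisibleByOfSMulRightSurj _ _ exists_pow_eq
  exact ⟨AddGroup.divisibleByIntOfDivisibleByNat _⟩

theorem exists_isScale {Ω : Type*} [NormedField Ω] [IsAlgClosed Ω] {ϖ : Ω} (h0 : ϖ ≠ 0)
    (h1 : ‖ϖ‖ < 1) : ∃ τ : ℚ → Ω, IsScale τ ∧ ∀ m : ℤ, τ m = ϖ ^ m := by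
  have := (nonempty_divisibleBy_additive_units (F := Ω)).some
  obtain ⟨h, h_one⟩ := exists_addMonoidHom_rat_apply_one (Additive.ofMul (Units.mk0 ϖ h0))
  let τ (w : ℚ) : Ω := ((h w).toMul : Ωˣ)
  have τ_zsmul (m : ℤ) (w : ℚ) : τ (m • w) = τ w ^ m := by
    simp only [τ, map_zsmul, toMul_zsmul, Units.val_zpow_eq_zpow_val]
  have τ_intCast (m : ℤ) : τ m = ϖ ^ m := by
    rw [← zsmul_one, τ_zsmul]
    simp [τ, h_one]
  refine ⟨τ, ⟨by simp [τ], fun x y => by simp [τ], fun x hx => ?_⟩, τ_intCast⟩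
  have pow_den : τ x ^ x.den = ϖ ^ x.num := by
    rw [← τ_intCast, ← zpow_natCast, ← τ_zsmul, ← Rat.den_mul_eq_num]
    simp
  have norm_pow_den : ‖τ x‖ ^ x.den < 1 := by
    rw [← norm_pow, pow_den, norm_zpow]
    exact zpow_lt_one₀ (norm_pos_iff.2 h0) h1 (Rat.num_pos.2 hx)
  exact (pow_lt_one_iff_of_nonneg (norm_nonneg _) x.den_nz).1 norm_pow_den

end RationalPowers

section NormedNumberField

variable {K : Type*} [NormedField K]

theorem exists_zpow_norm_mul_eq_one {ϖ : K} (h0 : ϖ ≠ 0) (h1 : ‖ϖ‖ < 1)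
    (hϖ : ∀ x : K, ‖x‖ < 1 → ‖x‖ ≤ ‖ϖ‖) {x : K} (hx : x ≠ 0) : ∃ m : ℤ, ‖x * ϖ ^ m‖ = 1 := by
  have norm_pos := norm_pos_iff.2 h0
  obtain ⟨m, hlt, hle⟩ := exists_mem_Ioc_zpow (norm_pos_iff.2 hx) ((one_lt_inv₀ norm_pos).2 h1)
  rw [inv_zpow, inv_lt_iff_one_lt_mul₀ (zpow_pos norm_pos _), ← norm_zpow, ← norm_mul] at hlt
  rw [inv_zpow, ← one_div, le_div_iff₀ (zpow_pos norm_pos _), ← norm_zpow, ← norm_mul] at hle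
  refine ⟨m + 1, hle.antisymm (not_lt.1 fun h => (hϖ _ h).not_gt ?_)⟩
  rw [zpow_add_one₀ h0, ← mul_assoc, norm_mul _ ϖ]
  exact lt_mul_of_one_lt_left norm_pos hlt

variable [IsUltrametricDist K]

theorem exists_forall_norm_lt_one_imp_norm_le {a : K} (ha0 : a ≠ 0) (ha1 : ‖a‖ < 1) {E : Finset K}
    (hE : ∀ x : K, ‖x‖ ≤ 1 → ∃ e ∈ E, ∃ z, ‖z‖ ≤ 1 ∧ x = e + a * z) :
    ∃ ϖ : K, ϖ ≠ 0 ∧ ‖ϖ‖ < 1 ∧ ∀ x : K, ‖x‖ < 1 → ‖x‖ ≤ ‖ϖ‖ := by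
  classical
  have a_mem : a ∈ (insert a E).filter (‖·‖ < 1) := by simp [ha1]
  obtain ⟨ϖ, ϖ_mem, hmax⟩ := Finset.exists_max_image _ norm ⟨a, a_mem⟩
  have norm_a_le := hmax a a_mem
  refine ⟨ϖ, norm_pos_iff.1 ((norm_pos_iff.2 ha0).trans_le norm_a_le),
    (Finset.mem_filter.1 ϖ_mem).2, fun x hx => ?_⟩
  obtain ⟨e, he, z, hz, rfl⟩ := hE x hx.le
  have norm_mul_le : ‖a * z‖ ≤ ‖a‖ := by
    rw [norm_mul]
    exact mul_le_of_le_one_right (norm_nonneg _) hz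
  have norm_e_lt : ‖e‖ < 1 := by
    rw [← add_neg_cancel_right e (a * z)]
    exact (IsUltrametricDist.norm_add_le_max _ _).trans_lt
      (max_lt hx ((norm_neg _).trans_lt (norm_mul_le.trans_lt ha1)))
  exact (IsUltrametricDist.norm_add_le_max _ _).trans <| max_le
    (hmax e (Finset.mem_filter.2 ⟨Finset.mem_insert_of_mem he, norm_e_lt⟩))
    (norm_mul_le.trans norm_a_le)

variable [Algebra ℚ K] [FiniteDimensional ℚ K]

theorem exists_finset_forall_norm_le_one_eq_add (n : ℕ) [NeZero n] :
    ∃ E : Finset K, 0 ∈ E ∧ E.card ≤ n ^ Module.finrank ℚ K ∧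
      ∀ x : K, ‖x‖ ≤ 1 → ∃ e ∈ E, ∃ z, ‖z‖ ≤ 1 ∧ x = e + n * z := by
  have := algebraRat.charZero K
  let O := (IsUltrametricDist.closedBall_openAddSubgroup K one_pos).toAddSubgroup.toIntSubmodule
  have rank_le : Module.rank ℤ O ≤ Module.finrank ℚ K := by
    rw [Module.finrank_eq_rank, IsLocalization.rank_eq ℚ (nonZeroDivisors ℤ) le_rfl]
    exact Submodule.rank_le O
  have mem_iff {x : K} : x ∈ O ↔ ‖x‖ ≤ 1 := mem_closedBall_zero_iff
  obtain ⟨E, zero_mem, card_le, hE⟩ := exists_finset_forall_eq_add_nsmul rank_le n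
  refine ⟨E.map (.subtype _), Finset.mem_map_of_mem _ zero_mem, by rwa [Finset.card_map],
    fun x hx => ?_⟩
  obtain ⟨e, he, z, hz⟩ := hE ⟨x, mem_iff.2 hx⟩
  refine ⟨e, Finset.mem_map_of_mem (.subtype _) he, z, mem_iff.1 z.2, ?_⟩
  simpa using congrArg Subtype.val hz

theorem exists_finset_forall_eq_mul_zpow_mul (h2 : ‖(2 : K)‖ < 1) :
    ∃ E : Finset K, E.card ≤ 2 ^ Module.finrank ℚ K ∧ ∃ ϖ : K, ϖ ≠ 0 ∧ ‖ϖ‖ < 1 ∧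
      ∀ x : K, ∃ e ∈ E, ∃ (m : ℤ) (z : K), ‖z‖ ≤ 1 ∧ x = e * (ϖ ^ m * (1 + 2 * z)) := by
  have := algebraRat.charZero K
  obtain ⟨E, zero_mem, card_le, hE⟩ := exists_finset_forall_norm_le_one_eq_add (K := K) 2
  obtain ⟨ϖ, h0, h1, hϖ⟩ := exists_forall_norm_lt_one_imp_norm_le (two_ne_zero (α := K)) h2 hE
  refine ⟨E, card_le, ϖ, h0, h1, fun x => ?_⟩
  rcases eq_or_ne x 0 with rfl | hx
  · exact ⟨0, zero_mem, 0, 0, by simp, by simp⟩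
  obtain ⟨m, hm⟩ := exists_zpow_norm_mul_eq_one h0 h1 hϖ hx
  obtain ⟨e, he, z, hz, eq_add⟩ := hE _ hm.le
  have norm_e : ‖e‖ = 1 := by
    have norm_mul_lt : ‖(2 : K) * z‖ < 1 := by
      rw [norm_mul]
      exact mul_lt_one_of_nonneg_of_lt_one_left (norm_nonneg _) h2 hz
    rw [← hm, ← norm_neg e]
    refine (IsUltrametricDist.norm_eq_of_add_norm_lt_max ?_).symm
    rw [← sub_eq_add_neg, eq_add, Nat.cast_ofNat, add_sub_cancel_left]
    exact norm_mul_lt.trans_le (le_max_of_le_left (by rw [← Nat.cast_ofNat, ← eq_add, hm]))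
  have e_ne_zero : e ≠ 0 := norm_ne_zero_iff.1 (norm_e ▸ one_ne_zero)
  refine ⟨e, he, -m, z / e, by rwa [norm_div, norm_e, div_one], ?_⟩
  calc x = x * ϖ ^ m * ϖ ^ (-m) := by rw [mul_assoc, ← zpow_add₀ h0]; simp
    _ = (e + 2 * z) * ϖ ^ (-m) := by rw [eq_add, Nat.cast_ofNat]
    _ = e * (ϖ ^ (-m) * (1 + 2 * (z / e))) := by field_simp

end NormedNumberField

theorem exists_isScale_and_finset_forall_eq_mul {Ω : Type*} [NormedField Ω] [IsUltrametricDist Ω]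
    [IsAlgClosed Ω] (h2 : ‖(2 : Ω)‖ < 1) {K : Type*} [Field K] [Algebra ℚ K]
    [FiniteDimensional ℚ K] (σ : K →+* Ω) :
    ∃ τ : ℚ → Ω, IsScale τ ∧ ∃ E : Finset Ω, E.card ≤ 2 ^ Module.finrank ℚ K ∧
      ∀ x : K, ∃ e ∈ E, ∃ (w : ℚ) (z : Ω), ‖z‖ ≤ 1 ∧ e * (τ w * (1 + 2 * z)) = σ x := by
  classical
  let := NormedField.induced K Ω σ σ.injective
  have : IsUltrametricDist K := .isUltrametricDist_of_forall_norm_add_le_max_norm fun x y =>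
    (congrArg norm (map_add σ x y)).trans_le (IsUltrametricDist.norm_add_le_max _ _)
  obtain ⟨E, card_le, ϖ, h0, h1, hE⟩ := exists_finset_forall_eq_mul_zpow_mul (K := K)
    ((congrArg norm (map_ofNat σ 2)).trans_lt h2)
  obtain ⟨τ, hτ, τ_intCast⟩ := exists_isScale ((map_ne_zero σ).2 h0) h1
  refine ⟨τ, hτ, E.image σ, Finset.card_image_le.trans card_le, fun x => ?_⟩
  obtain ⟨e, he, m, z, hz, rfl⟩ := hE x
  exact ⟨σ e, Finset.mem_image_of_mem σ he, m, σ z, hz, by simp [τ_intCast, map_ofNat σ]⟩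

/-! ### The bound over a number field -/

section NumberField

theorem exists_encard_isAlgIsolatedZero_le_of_numberField (n : ℕ) (L : Type) [Finite L] :
    ∃ N : ℕ, ∀ {K : Type*} [Field K] [Algebra ℚ K] [FiniteDimensional ℚ K] {κ : Type*}
      (α : L → Fin n →₀ ℕ) (G : κ → MvPolynomial (Fin n) K),
      (∀ b, G b ∈ restrictSupport K (Set.range α)) →
        {x | IsAlgIsolatedZero G x}.encard ≤ ((2 ^ Module.finrank ℚ K) ^ n * N : ℕ) := by
  let φ₀ : ℤ_[2] →+* ℂ_[2] := (algebraMap ℚ_[2] ℂ_[2]).comp PadicInt.Coe.ringHom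
  have norm_φ₀_le (x : ℤ_[2]) : ‖φ₀ x‖ ≤ 1 := (norm_algebraMap' ℂ_[2] (x : ℚ_[2])).trans_le x.2
  have norm_two_lt : ‖(2 : ℂ_[2])‖ < 1 := by
    rw [← map_ofNat (algebraMap ℚ_[2] ℂ_[2]) 2, norm_algebraMap']
    exact mod_cast Padic.norm_p_lt_one (p := 2)
  obtain ⟨N, hN⟩ := exists_encard_isAlgIsolatedZero_le norm_φ₀_le norm_two_lt two_ne_zero n L
  refine ⟨N, fun {K} _ _ _ κ α G hG => ?_⟩
  let σ : K →+* ℂ_[2] := (IsAlgClosed.lift : K →ₐ[ℚ] ℂ_[2]).toRingHom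
  obtain ⟨τ, hτ, E, card_le, hE⟩ := exists_isScale_and_finset_forall_eq_mul norm_two_lt σ
  have map_mem (b : κ) : (G b).map σ ∈ restrictSupport ℂ_[2] (Set.range α) := fun a ha =>
    hG b (support_map_subset σ (G b) ha)
  calc {x | IsAlgIsolatedZero G x}.encard
      = ((σ ∘ ·) '' {x | IsAlgIsolatedZero G x}).encard :=
        (σ.injective.comp_left.encard_image _).symm
    _ ≤ (E.card ^ n * N : ℕ) := (Set.encard_le_encard ?_).trans (hN τ hτ α _ map_mem E)
    _ ≤ ((2 ^ Module.finrank ℚ K) ^ n * N : ℕ) := by gcongr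
  rintro _ ⟨x, hx, rfl⟩
  choose e he w z hz mul_eq using fun j => hE (x j)
  exact ⟨hx.map σ, e, cosetPoint τ w z, he, ⟨w, z, hz, rfl⟩, funext mul_eq⟩

theorem IsSparseSystem.exists_mem_restrictSupport {K : Type*} [CommSemiring K] {k n m : ℕ}
    {G : Fin k → MvPolynomial (Fin n) K} (hG : IsSparseSystem G m) :
    ∃ α : Fin m → Fin n →₀ ℕ, ∀ i, G i ∈ restrictSupport K (Set.range α) := by
  let e := (finCongr hG.2.symm).trans (Finset.equivFin _).symm
  refine ⟨fun l => e l, fun i a ha => ?_⟩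
  exact ⟨e.symm ⟨a, Finset.mem_biUnion.2 ⟨i, Finset.mem_univ i, ha⟩⟩, by simp⟩

theorem two_pow_pow_le {d : ℕ} (hd : 0 < d) (n : ℕ) :
    ((2 : ℝ) ^ d) ^ n ≤ 2 ^ (d * n) * (1 - 1 / 2 ^ d) ^ n * 2 ^ n := by
  have two_le : (2 : ℝ) ≤ 2 ^ d := le_self_pow₀ one_le_two hd.ne'
  have one_le : 1 ≤ (1 - 1 / (2 : ℝ) ^ d) * 2 := by
    linarith [one_div_le_one_div_of_le two_pos two_le]
  rw [pow_mul, mul_assoc, ← mul_pow]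
  exact le_mul_of_one_le_right (by positivity) (one_le_pow₀ one_le)

theorem finiteness_arithmetic_fewnomials_global_general :
    ∃ γ : ℕ × ℕ → ℕ,
      ∀ {F : Type*} [NontriviallyNormedField F] [IsAlgClosed F]
        {K : Type*} [Field K] [Algebra ℚ K] [FiniteDimensional ℚ K] (ι : K →+* F)
        {k n m : ℕ} (G : Fin k → MvPolynomial (Fin n) K), IsSparseSystem G m →
          {ζ : Fin n → K | IsIsolatedRoot (fun i => (G i).map ι) (fun j => ι (ζ j))}.Finite ∧
          ({ζ : Fin n → K | IsIsolatedRoot (fun i => (G i).map ι)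
              (fun j => ι (ζ j))}.ncard : ℝ) ≤
            (2 : ℝ) ^ (Module.finrank ℚ K * n) * (1 - 1 / (2 : ℝ) ^ Module.finrank ℚ K) ^ n *
              γ (n, m) := by
  choose N hN using fun n m => exists_encard_isAlgIsolatedZero_le_of_numberField n (Fin m)
  -- Zero coordinates put `2 ^ d`, not `2 ^ d - 1`, factors into the count: hence `2 ^ n`.
  refine ⟨fun p => 2 ^ p.1 * N p.1 p.2, fun {F} _ _ {K} _ _ _ ι {k n m} G hG => ?_⟩
  obtain ⟨α, hα⟩ := hG.exists_mem_restrictSupport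
  have encard_le := (Set.encard_le_encard fun ζ (hζ : IsIsolatedRoot _ (ι ∘ ζ)) =>
    (isAlgIsolatedZero_of_isIsolatedRoot hζ).of_map ι).trans (hN n m α G hα)
  obtain ⟨finite, ncard_le⟩ := Set.encard_le_coe_iff_finite_ncard_le.1 encard_le
  refine ⟨finite, (Nat.cast_le (α := ℝ).2 ncard_le).trans ?_⟩
  push_cast
  rw [← mul_assoc]
  gcongr
  exact two_pow_pow_le Module.finrank_pos n

end NumberField

/-- **Corollary 2 (global fewnomial bound).** There is an absolute constant `γ(n,m)` such that
any `k × n` `m`-sparse polynomial system over a degree-`d` algebraic extension `K` of `ℚ` has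
at most `2^{dn}·(1 - 1/2^d)^n·γ(n,m)` isolated roots in `Kⁿ`.  Isolatedness of a root in `Kⁿ`
is expressed via (any) embedding `ι : K → ℂ` of `K` into the algebraically closed field `ℂ`:
the image of the root is an isolated point of the zero set of the system over `ℂ`. -/
theorem finiteness_arithmetic_fewnomials_global :
    ∃ γ : ℕ × ℕ → ℕ,
      ∀ (d : ℕ) (_ : 0 < d)
        (K : Type) (_ : Field K) (_ : Algebra ℚ K) (_ : FiniteDimensional ℚ K)
        (_ : Module.finrank ℚ K = d)
        (ι : K →+* ℂ)
        (k n m : ℕ) (G : Fin k → MvPolynomial (Fin n) K), IsSparseSystem G m →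
          {ζ : Fin n → K | IsIsolatedRoot (fun i => (G i).map ι)
              (fun j => ι (ζ j))}.Finite ∧
          ({ζ : Fin n → K | IsIsolatedRoot (fun i => (G i).map ι)
              (fun j => ι (ζ j))}.ncard : ℝ) ≤
            (2 : ℝ) ^ (d * n) * (1 - 1 / (2 : ℝ) ^ d) ^ n * γ (n, m) := by
  obtain ⟨γ, hγ⟩ := finiteness_arithmetic_fewnomials_global_general
  exact ⟨γ, fun d _ K _ _ _ hd ι k n m G hG => hd ▸ hγ ι G hG⟩
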